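/- arXiv:2602.10488 — 3 statements merged into one kernel-verified Lean document; each statement's English description precedes it below -/
import Mathlib

section
/- Fix an integer n ≥ 2 and let m be a squarefree integer with |m| > 1 such that X^n − m is irreducible over ℚ. Let K_m = ℚ(α) where α is a root of X^n − m, let 𝓞_m be its ring of integers, and let g(m) = [𝓞_m : ℤ[α]]. Then gcd(g(m), m) = 1 and g(m)² divides n^n. In particular, every prime dividing g(m) divides n, and for each prime p dividing n one has 2·v_p(g(m)) ≤ n·v_p(n), where v_p denotes the p-adic valuation. -/
open NumberField Polynomial

/-!
A prime dividing `[𝓞 K : ℤ[α]]` yields, by Cauchy's theorem in `𝓞 K ⧸ ℤ[α]`, an integer of `K`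
outside `ℤ[α]` whose `p`-th multiple lies in `ℤ[α]`. This cannot happen for `p ∣ m`, where the
minimal polynomial `X ^ n - m` of `α` is Eisenstein at `p`. So `g` is coprime to `m`, and both
divisibility claims can be read off from `g ^ 2 * |disc K| = |disc (X ^ n - m)|
= n ^ n * |m| ^ (n - 1)`.
-/

/-- The index `[A : ℤ[a]]` of the order generated by `a`, with value `0` if the index is infinite.
The subgroup is written as in the statement of `index_coprime_and_sq_dvd`. -/
noncomputable def adjoinIndex {A : Type*} [Ring A] (a : A) : ℕ :=
  (Subalgebra.toSubmodule (Algebra.adjoin ℤ {a})).toAddSubgroup.index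

section Lattice

variable {ι : Type*} [Fintype ι] [DecidableEq ι]

theorem index_span_range_eq_natAbs_det {M : Type*} [AddCommGroup M] (b : Module.Basis ι ℤ M)
    (v : ι → M) :
    (Submodule.span ℤ (Set.range v)).toAddSubgroup.index = (b.det v).natAbs := by
  by_cases hv : LinearIndependent ℤ v
  · rw [AddSubgroup.index_eq_natAbs_det b _ (Module.Basis.span hv)]
    exact congrArg (fun w ↦ (b.det w).natAbs) (funext (Module.Basis.coe_span_apply hv))
  · have := Module.Free.of_basis b
    have := Module.Finite.of_basis b
    rw [b.det.map_linearDependent v hv, Int.natAbs_zero]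
    by_contra hindex
    have hfin : Finite (M ⧸ Submodule.span ℤ (Set.range v)) :=
      Nat.finite_of_card_ne_zero hindex
    rw [Submodule.finiteQuotient_iff, Module.finrank_eq_card_basis b] at hfin
    exact hv (linearIndependent_iff_card_eq_finrank_span.2 hfin.symm)

theorem discr_eq_index_span_sq_mul_discr {A : Type*} [CommRing A] (b : Module.Basis ι ℤ A)
    (v : ι → A) :
    Algebra.discr ℤ v =
      (Submodule.span ℤ (Set.range v)).toAddSubgroup.index ^ 2 * Algebra.discr ℤ b := by
  conv_lhs => rw [← b.toMatrix_map_vecMul v]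
  rw [Algebra.discr_of_matrix_vecMul, ← b.det_apply, index_span_range_eq_natAbs_det b,
    Int.natAbs_sq]

end Lattice

theorem span_range_pow_eq_adjoin {R A : Type*} [CommRing R] [Nontrivial R] [Ring A]
    [Algebra R A] {n : ℕ} (b : Module.Basis (Fin n) R A) (a : A) :
    Submodule.span R (Set.range fun i : Fin n ↦ a ^ (i : ℕ)) =
      Subalgebra.toSubmodule (Algebra.adjoin R {a}) := by
  classical
  have := Module.Free.of_basis b
  have := Module.Finite.of_basis b
  -- By Cayley-Hamilton, multiplication by `a` gives a monic relation of degree `n` for `a`.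
  have hdeg : (Algebra.lmul R A a).charpoly.natDegree = n := by
    rw [LinearMap.charpoly_natDegree, Module.finrank_eq_card_basis b, Fintype.card_fin]
  rw [← Submodule.span_range_natDegree_eq_adjoin (LinearMap.charpoly_monic _)
    (Algebra.aeval_self_charpoly_lmul a), hdeg]
  congr 1
  ext x
  simp [Fin.exists_iff]

theorem discr_pow_eq_adjoinIndex_sq_mul_discr {A : Type*} [CommRing A] {n : ℕ}
    (b : Module.Basis (Fin n) ℤ A) (a : A) :
    Algebra.discr ℤ (fun i : Fin n ↦ a ^ (i : ℕ)) = adjoinIndex a ^ 2 * Algebra.discr ℤ b := by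
  rw [discr_eq_index_span_sq_mul_discr b, span_range_pow_eq_adjoin b, adjoinIndex]

theorem discr_algebraMap_comp_of_isLocalization {R S : Type*} (Rₘ Sₘ : Type*) [CommRing R]
    [CommRing S] [Algebra R S] [Module.Free R S] [Module.Finite R S] [CommRing Rₘ] [Algebra R Rₘ]
    [CommRing Sₘ] [Algebra S Sₘ] [Algebra Rₘ Sₘ] [Algebra R Sₘ] [IsScalarTower R Rₘ Sₘ]
    [IsScalarTower R S Sₘ] (M : Submonoid R) [IsLocalization M Rₘ]
    [IsLocalization (Algebra.algebraMapSubmonoid S M) Sₘ] {ι : Type*} [Fintype ι]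
    [DecidableEq ι] (v : ι → S) :
    Algebra.discr Rₘ (algebraMap S Sₘ ∘ v) = algebraMap R Rₘ (Algebra.discr R v) := by
  rw [Algebra.discr_def, Algebra.discr_def, RingHom.map_det]
  congr 1
  ext i j
  simp only [Algebra.traceMatrix_apply, Algebra.traceForm_apply, Function.comp_apply, ← map_mul,
    RingHom.mapMatrix_apply, Matrix.map_apply, Algebra.trace_localization R M]

theorem exists_notMem_nsmul_mem_of_prime_dvd_index {G : Type*} [AddGroup G] (H : AddSubgroup G)
    [H.Normal] [H.FiniteIndex] {p : ℕ} (hp : p.Prime) (hdvd : p ∣ H.index) :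
    ∃ z ∉ H, p • z ∈ H := by
  have : Fact p.Prime := ⟨hp⟩
  obtain ⟨x, hx⟩ := exists_prime_addOrderOf_dvd_card' (G := G ⧸ H) p hdvd
  obtain ⟨z, rfl⟩ := QuotientAddGroup.mk_surjective x
  refine ⟨z, fun hz ↦ hp.ne_one ?_, ?_⟩
  · rw [← hx, (QuotientAddGroup.eq_zero_iff z).2 hz, addOrderOf_zero]
  · rw [← QuotientAddGroup.eq_zero_iff, QuotientAddGroup.mk_nsmul, ← hx, addOrderOf_nsmul_eq_zero]


theorem algebraMap_mem_adjoin_singleton_iff {R A B : Type*} [CommSemiring R]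
    [CommSemiring A] [Semiring B] [Algebra R A] [Algebra A B] [Algebra R B] [IsScalarTower R A B]
    [FaithfulSMul A B] {a x : A} :
    algebraMap A B x ∈ Algebra.adjoin R {algebraMap A B a} ↔ x ∈ Algebra.adjoin R {a} := by
  rw [← IsScalarTower.coe_toAlgHom' R A B, ← AlgHom.map_adjoin_singleton, Subalgebra.mem_map]
  simp

section PowerBasis

variable {K : Type*} [Field K] [NumberField K] {B : PowerBasis ℚ K} {α : 𝓞 K}

theorem discr_powerBasis_eq_adjoinIndex_sq_mul_discr (hB : B.gen = α) :
    Algebra.discr ℚ B.basis = (adjoinIndex α : ℚ) ^ 2 * discr K := by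
  have hrank : Module.finrank ℤ (𝓞 K) = B.dim := by rw [RingOfIntegers.rank, B.finrank]
  let b : Module.Basis (Fin B.dim) ℤ (𝓞 K) := Module.finBasisOfFinrankEq ℤ (𝓞 K) hrank
  have hpow : ⇑B.basis = algebraMap (𝓞 K) K ∘ fun i : Fin B.dim ↦ α ^ (i : ℕ) := by
    ext i
    simp [hB]
  rw [hpow, discr_algebraMap_comp_of_isLocalization ℚ K (nonZeroDivisors ℤ),
    discr_pow_eq_adjoinIndex_sq_mul_discr b, discr_eq_discr K b]
  simp

theorem adjoinIndex_ne_zero (hB : B.gen = α) : adjoinIndex α ≠ 0 := by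
  intro hzero
  refine Algebra.discr_not_zero_of_basis ℚ B.basis ?_
  rw [discr_powerBasis_eq_adjoinIndex_sq_mul_discr hB, hzero]
  simp

theorem not_dvd_adjoinIndex_of_minpoly_isEisensteinAt (hB : B.gen = α) {p : ℕ} (hp : p.Prime)
    (hei : (minpoly ℤ B.gen).IsEisensteinAt (Ideal.span {(p : ℤ)})) : ¬ p ∣ adjoinIndex α := by
  intro hdvd
  have hfin : (Subalgebra.toSubmodule (Algebra.adjoin ℤ {α})).toAddSubgroup.FiniteIndex :=
    ⟨adjoinIndex_ne_zero hB⟩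
  obtain ⟨z, hz, hpz⟩ := exists_notMem_nsmul_mem_of_prime_dvd_index _ hp hdvd
  have hgen : algebraMap (𝓞 K) K α = B.gen := hB.symm
  refine hz ((algebraMap_mem_adjoin_singleton_iff (B := K)).1 ?_)
  rw [hgen]
  refine mem_adjoin_of_smul_prime_smul_of_minpoly_isEisensteinAt (Nat.prime_iff_prime_int.1 hp)
    (hB ▸ α.isIntegral_coe) z.isIntegral_coe ?_ hei
  rw [← hgen, natCast_zsmul, ← map_nsmul]
  exact algebraMap_mem_adjoin_singleton_iff.2 hpz

end PowerBasis

theorem isEisensteinAt_X_pow_sub_C {R : Type*} [CommRing R] {𝓟 : Ideal R} {a : R} (ha : a ∈ 𝓟)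
    (ha2 : a ∉ 𝓟 ^ 2) {n : ℕ} (hn : n ≠ 0) : ((X : R[X]) ^ n - C a).IsEisensteinAt 𝓟 := by
  have htop : 𝓟 ≠ ⊤ := fun h ↦ ha2 (by simp [h, Ideal.top_pow])
  have := nontrivial_of_ne a 0 fun h ↦ ha2 (h ▸ zero_mem _)
  refine (monic_X_pow_sub_C a hn).isEisensteinAt_of_mem_of_notMem htop (fun {i} hi ↦ ?_) ?_
  · rw [natDegree_X_pow_sub_C] at hi
    rw [coeff_sub, coeff_X_pow, if_neg hi.ne, zero_sub, neg_mem_iff, coeff_C]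
    split_ifs
    exacts [ha, 𝓟.zero_mem]
  · simpa [hn.symm] using ha2

theorem discr_powerBasis_of_minpoly_eq_X_pow_sub_C {F L : Type*} [Field F] [Field L] [Algebra F L]
    [Algebra.IsSeparable F L] (B : PowerBasis F L) {n : ℕ} {a : F}
    (hmin : minpoly F B.gen = X ^ n - C a) :
    Algebra.discr F B.basis = (-1) ^ (n * (n - 1) / 2) * (n ^ n * (-a) ^ (n - 1)) := by
  have := B.finite
  have hdim : B.dim = n := by rw [← B.natDegree_minpoly, hmin, natDegree_X_pow_sub_C]
  have hn : n ≠ 0 := hdim ▸ B.dim_ne_zero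
  have hnorm : Algebra.norm F B.gen = (-1) ^ n * -a := by
    rw [Algebra.PowerBasis.norm_gen_eq_coeff_zero_minpoly, hmin, hdim]
    simp [hn.symm]
  have hder : aeval B.gen (derivative (minpoly F B.gen)) = algebraMap F L n * B.gen ^ (n - 1) := by
    simp [hmin, derivative_X_pow]
  rw [Algebra.discr_powerBasis_eq_norm, hder, map_mul, map_pow, Algebra.norm_algebraMap, B.finrank,
    hdim, hnorm, mul_pow, ← pow_mul, n.even_mul_pred_self.neg_one_pow, one_mul]

section PureField

variable {K : Type*} [Field K] [NumberField K] {B : PowerBasis ℚ K} {α : 𝓞 K} {n : ℕ} {m : ℤ}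

theorem adjoinIndex_sq_mul_natAbs_discr (hB : B.gen = α)
    (hmin : minpoly ℚ B.gen = X ^ n - C (m : ℚ)) :
    adjoinIndex α ^ 2 * (discr K).natAbs = n ^ n * m.natAbs ^ (n - 1) := by
  have hdiscr : (adjoinIndex α : ℤ) ^ 2 * discr K =
      (-1) ^ (n * (n - 1) / 2) * (n ^ n * (-m) ^ (n - 1)) := by
    have hpow := discr_powerBasis_of_minpoly_eq_X_pow_sub_C B hmin
    rw [discr_powerBasis_eq_adjoinIndex_sq_mul_discr hB] at hpow
    exact_mod_cast hpow
  simpa [Int.natAbs_mul, Int.natAbs_pow] using congrArg Int.natAbs hdiscr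

theorem adjoinIndex_coprime_natAbs (hB : B.gen = α) (hm : Squarefree m)
    (hmin : minpoly ℚ B.gen = X ^ n - C (m : ℚ)) : (adjoinIndex α).Coprime m.natAbs := by
  have hn : n ≠ 0 := by
    rintro rfl
    exact B.dim_ne_zero (by rw [← B.natDegree_minpoly, hmin, natDegree_X_pow_sub_C])
  have hminZ : minpoly ℤ B.gen = X ^ n - C m := by
    apply map_injective (algebraMap ℤ ℚ) (algebraMap ℤ ℚ).injective_int
    rw [← minpoly.isIntegrallyClosed_eq_field_fractions' ℚ (hB ▸ α.isIntegral_coe), hmin]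
    simp
  refine (Nat.coprime_of_dvd fun p hp hpm ↦ ?_).symm
  refine not_dvd_adjoinIndex_of_minpoly_isEisensteinAt hB hp (hminZ ▸ ?_)
  refine isEisensteinAt_X_pow_sub_C ?_ ?_ hn
  · exact Ideal.mem_span_singleton.2 (Int.natCast_dvd.2 hpm)
  · rw [Ideal.span_singleton_pow, Ideal.mem_span_singleton, sq]
    exact fun h ↦ (Nat.prime_iff_prime_int.1 hp).not_isUnit (hm _ h)

end PureField

/-- **Coprimality and divisibility bounds for the pure power-basis index.**
Fix `n ≥ 2` and a squarefree integer `m` with `|m| > 1` such that `X^n − m` is irreducible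
over `ℚ`.  Let `K = ℚ(α)` with `α^n = m` and let `g(m) = [𝓞_K : ℤ[α]]`.  Then
`gcd(g(m), m) = 1` and `g(m)² ∣ n^n`; in particular every prime dividing `g(m)` divides
`n`, and `2·v_p(g(m)) ≤ n·v_p(n)` for every prime `p ∣ n`. -/
theorem index_coprime_and_sq_dvd (n : ℕ) (hn : 2 ≤ n)
    (m : ℤ) (hm : Squarefree m) (hm1 : 1 < |m|)
    (hirr : Irreducible ((X : ℚ[X]) ^ n - C (m : ℚ)))
    (K : Type*) [Field K] [NumberField K] (α : 𝓞 K)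
    (hα : (α : K) ^ n = (m : K))
    (hgen : Algebra.adjoin ℚ {(α : K)} = ⊤)
    (g : ℕ) (hg : g = (Subalgebra.toSubmodule (Algebra.adjoin ℤ {α})).toAddSubgroup.index) :
    Nat.gcd g m.natAbs = 1 ∧ g ^ 2 ∣ n ^ n ∧
      (∀ p : ℕ, p.Prime → p ∣ g → p ∣ n) ∧
      (∀ p : ℕ, p.Prime → p ∣ n → 2 * padicValNat p g ≤ n * padicValNat p n) := by
  have hn0 : n ≠ 0 := by lia
  have hint : IsIntegral ℤ (α : K) := α.isIntegral_coe
  let B : PowerBasis ℚ K := PowerBasis.ofAdjoinEqTop hint.tower_top hgen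
  have hB : B.gen = α := PowerBasis.ofAdjoinEqTop_gen _ _
  have hmin : minpoly ℚ B.gen = X ^ n - C (m : ℚ) :=
    (minpoly.eq_of_irreducible_of_monic hirr (by simp [hB, hα]) (monic_X_pow_sub_C _ hn0)).symm
  change g = adjoinIndex α at hg
  have hcop : g.Coprime m.natAbs := hg ▸ adjoinIndex_coprime_natAbs hB hm hmin
  have hprod : g ^ 2 * (discr K).natAbs = n ^ n * m.natAbs ^ (n - 1) :=
    hg ▸ adjoinIndex_sq_mul_natAbs_discr hB hmin
  have hsq : g ^ 2 ∣ n ^ n :=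
    (hcop.pow 2 (n - 1)).dvd_of_dvd_mul_right (Dvd.intro _ hprod)
  refine ⟨hcop, hsq, fun p hp hpg ↦ ?_, fun p hp _ ↦ ?_⟩
  · exact hp.dvd_of_dvd_pow ((dvd_pow hpg two_ne_zero).trans hsq)
  · have : Fact p.Prime := ⟨hp⟩
    rw [← padicValNat.pow, ← padicValNat.pow]
    exact (padicValNat_dvd_iff_le (pow_ne_zero n hn0)).1 (pow_padicValNat_dvd.trans hsq)
end

section
/- Let n ≥ 4, N = n(n−1)/2, and let g ≥ 2 be an integer such that g² divides n^n. Then the polynomial X^N − g has no root in the cyclotomic field ℚ(ζ_{2N}); equivalently, g is not an N-th power of any element of ℚ(ζ_{2N}), so that ℚ(ζ_{2N}, g^{1/N}) ≠ ℚ(ζ_{2N}). -/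
/-!
In an abelian extension `K / F`, let `x ^ N = a ∈ F` and let `τ` act on the `N`-th roots of unity
of `K` as `ζ ↦ ζ ^ t`. Every `σ` multiplies `x` by an `N`-th root of unity, so, because `σ` and `τ`
commute, `τ x / x ^ t` is fixed by every `σ` and lies in `F`. For `F = ℚ` and `τ` complex
conjugation (`t = -1`), the `N`-th power of this element is `a ^ 2`.

With `a = g` and `2 * N = n * (n - 1)`, this makes `g ^ 2` an `N`-th power `h ^ N` of a natural
number, and `g ^ 2 ∣ n ^ n` becomes `h ^ (n - 1) ∣ n ^ 2`. The only solution with `n ≥ 4` and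
`h ≥ 2` is `n = 4`, `h = 2`, where `N = 6` and `g = 8`. Then `x ^ 3 / 2` is a square root of `2`,
but `ℚ(ζ₁₂)` does not contain one.
-/

section AbelianExtension

variable {F K : Type*} [Field F] [Field K] [Algebra F K] [IsAbelianGalois F K]

open scoped IsMulCommutative in
theorem apply_div_zpow_mem_range_algebraMap {N : ℕ} {t : ℤ} {τ : Gal(K/F)}
    (hτ : ∀ ζ : K, ζ ^ N = 1 → τ ζ = ζ ^ t) {a : F} {x : K} (hx : x ^ N = algebraMap F K a) :
    τ x / x ^ t ∈ Set.range (algebraMap F K) := by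
  rcases eq_or_ne x 0 with rfl | hx0
  · exact ⟨0, by simp⟩
  refine (InfiniteGalois.mem_range_algebraMap_iff_fixed _).2 fun σ ↦ ?_
  obtain ⟨ζ, hσx⟩ : ∃ ζ, σ x = ζ * x := ⟨σ x / x, (div_mul_cancel₀ _ hx0).symm⟩
  have hζ : ζ ^ N = 1 := by
    have hσxN : σ x ^ N = x ^ N := by rw [← map_pow, hx, AlgEquiv.commutes]
    rw [hσx, mul_pow] at hσxN
    exact (mul_eq_right₀ (pow_ne_zero N hx0)).1 hσxN
  have hζ0 : ζ ≠ 0 := fun h ↦ hx0 (σ.injective (by rw [hσx, h, zero_mul, map_zero]))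
  calc σ (τ x / x ^ t) = τ (σ x) / σ x ^ t := by
        rw [map_div₀, map_zpow₀, ← AlgEquiv.mul_apply, mul_comm, AlgEquiv.mul_apply]
    _ = ζ ^ t * τ x / (ζ ^ t * x ^ t) := by rw [hσx, map_mul, hτ ζ hζ, mul_zpow]
    _ = τ x / x ^ t := mul_div_mul_left _ _ (zpow_ne_zero t hζ0)

theorem exists_pow_eq_div_zpow {N : ℕ} {t : ℤ} {τ : Gal(K/F)}
    (hτ : ∀ ζ : K, ζ ^ N = 1 → τ ζ = ζ ^ t) {a : F} {x : K} (hx : x ^ N = algebraMap F K a) :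
    ∃ b : F, b ^ N = a / a ^ t := by
  obtain ⟨b, hb⟩ := apply_div_zpow_mem_range_algebraMap hτ hx
  refine ⟨b, (algebraMap F K).injective ?_⟩
  calc algebraMap F K (b ^ N) = τ (x ^ N) / (x ^ N) ^ t := by
        rw [map_pow, hb, div_pow, map_pow, ← zpow_natCast (x ^ t), zpow_comm, zpow_natCast]
    _ = algebraMap F K (a / a ^ t) := by rw [hx, AlgEquiv.commutes, map_div₀, map_zpow₀]

end AbelianExtension

section RationalBase

variable {K : Type*} [Field K] [Algebra ℚ K]

theorem exists_algEquiv_apply_eq_inv_of_isOfFinOrder [IsGalois ℚ K] :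
    ∃ τ : Gal(K/ℚ), ∀ ζ : K, IsOfFinOrder ζ → τ ζ = ζ⁻¹ := by
  let φ : K →+* ℂ := (IsAlgClosed.lift : K →ₐ[ℚ] ℂ)
  obtain ⟨σ, hσ⟩ := NumberField.ComplexEmbedding.exists_comp_symm_eq_of_comp_eq (k := ℚ) φ
    (NumberField.ComplexEmbedding.conjugate φ) (Subsingleton.elim _ _)
  refine ⟨σ.symm, fun ζ hζ ↦ φ.injective ?_⟩
  calc φ (σ.symm ζ) = starRingEnd ℂ (φ ζ) := RingHom.congr_fun hσ ζ
    _ = (φ ζ)⁻¹ := (RCLike.inv_eq_conj (φ.toMonoidHom.isOfFinOrder hζ).norm_eq_one).symm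
    _ = φ ζ⁻¹ := (map_inv₀ φ ζ).symm

variable [IsAbelianGalois ℚ K]

theorem exists_rat_pow_eq_sq_of_pow_eq {N : ℕ} (hN : N ≠ 0) {a : ℚ} {x : K}
    (hx : x ^ N = algebraMap ℚ K a) : ∃ b : ℚ, b ^ N = a ^ 2 := by
  obtain ⟨τ, hτ⟩ := exists_algEquiv_apply_eq_inv_of_isOfFinOrder (K := K)
  have hτN (ζ : K) (hζ : ζ ^ N = 1) : τ ζ = ζ ^ (-1 : ℤ) := by
    rw [zpow_neg_one]
    exact hτ ζ (isOfFinOrder_iff_pow_eq_one.2 ⟨N, Nat.pos_of_ne_zero hN, hζ⟩)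
  simpa only [zpow_neg_one, div_inv_eq_mul, ← sq] using exists_pow_eq_div_zpow hτN hx

theorem exists_nat_pow_eq_sq_of_pow_eq {N : ℕ} (hN : N ≠ 0) {g : ℕ} {x : K}
    (hx : x ^ N = g) : ∃ h : ℕ, h ^ N = g ^ 2 := by
  obtain ⟨b, hb⟩ := exists_rat_pow_eq_sq_of_pow_eq hN
    (hx.trans (map_natCast (algebraMap ℚ K) g).symm)
  refine ⟨b.num.natAbs, ?_⟩
  have hnum : b.num ^ N = (g : ℤ) ^ 2 := by simpa using congrArg Rat.num hb
  simpa [Int.natAbs_pow] using congrArg Int.natAbs hnum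

end RationalBase

theorem isPrimitiveRoot_eight_one_add_div {K : Type*} [Field K] [NeZero (2 : K)] {i y : K}
    (hi : i ^ 2 = -1) (hy : y ^ 2 = 2) : IsPrimitiveRoot ((1 + i) / y) 8 := by
  have hsq : ((1 + i) / y) ^ 2 = i := by
    rw [div_pow, hy, div_eq_iff two_ne_zero]
    linear_combination hi
  have hpow_four : ((1 + i) / y) ^ 2 ^ 2 = -1 := by rw [sq 2, pow_mul, hsq, hi]
  have hne : (-1 : K) ≠ 1 := fun h ↦ two_ne_zero (α := K) (by linear_combination -h)
  refine IsPrimitiveRoot.iff_orderOf.2 (orderOf_eq_prime_pow (p := 2) (n := 2) ?_ ?_)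
  · rwa [hpow_four]
  · rw [pow_succ 2 2, pow_mul, hpow_four, neg_one_sq]

theorem eight_dvd_of_isSquare_two {K : Type*} [Field K] [CharZero K] {m : ℕ}
    [IsCyclotomicExtension {m} ℚ K] (hm : 4 ∣ m) (h2 : IsSquare (2 : K)) : 8 ∣ m := by
  rcases eq_or_ne m 0 with rfl | hm0
  · exact dvd_zero 8
  have : NeZero m := ⟨hm0⟩
  have : NumberField K := IsCyclotomicExtension.numberField {m} ℚ K
  obtain ⟨k, rfl⟩ := hm
  obtain ⟨y, hy⟩ := h2
  have hi : IsPrimitiveRoot ((IsCyclotomicExtension.zeta (4 * k) ℚ K ^ k) ^ 2) 2 := by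
    rw [← pow_mul]
    exact (IsCyclotomicExtension.zeta_spec (4 * k) ℚ K).pow (NeZero.pos _) (by ring)
  have hdvd := NumberField.Units.dvd_torsionOrder_of_isPrimitiveRoot
    (isPrimitiveRoot_eight_one_add_div hi.eq_neg_one_of_two_right ((sq y).trans hy.symm))
  rwa [IsCyclotomicExtension.Rat.torsionOrder_eq (n := 4 * k),
    if_pos ((by decide : Even 4).mul_right k)] at hdvd

theorem succ_sq_lt_two_pow {m : ℕ} (hm : 6 ≤ m) : (m + 1) ^ 2 < 2 ^ m := by
  induction m, hm using Nat.le_induction with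
  | base => norm_num
  | succ m hm ih => rw [pow_succ 2 m]; nlinarith

theorem eq_three_and_eq_two_of_pow_dvd_succ_sq {m h : ℕ} (hm : 3 ≤ m) (hh : 2 ≤ h)
    (hdvd : h ^ m ∣ (m + 1) ^ 2) : m = 3 ∧ h = 2 := by
  have hle : h ^ m ≤ (m + 1) ^ 2 := Nat.le_of_dvd (by positivity) hdvd
  have hm6 : m < 6 := by
    by_contra! hm6
    exact (succ_sq_lt_two_pow hm6).not_ge ((Nat.pow_le_pow_left hh m).trans hle)
  have hh3 : h < 3 := by
    by_contra! hh3
    have hle_three := (Nat.pow_le_pow_left hh3 m).trans hle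
    interval_cases m <;> norm_num at hle_three
  obtain rfl : h = 2 := by omega
  interval_cases m <;> revert hdvd <;> decide

theorem pow_dvd_succ_sq_of_pow_eq_sq {m N g h : ℕ} (hN : 2 * N = (m + 1) * m)
    (hg : g ^ 2 ∣ (m + 1) ^ (m + 1)) (hh : h ^ N = g ^ 2) : h ^ m ∣ (m + 1) ^ 2 := by
  refine (Nat.pow_dvd_pow_iff m.succ_ne_zero).1 ?_
  calc (h ^ m) ^ (m + 1) = (g ^ 2) ^ 2 := by
        rw [← hh, ← pow_mul, ← pow_mul, mul_comm N, hN, mul_comm]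
    _ ∣ ((m + 1) ^ (m + 1)) ^ 2 := pow_dvd_pow_of_dvd hg 2
    _ = ((m + 1) ^ 2) ^ (m + 1) := pow_right_comm _ _ _

theorem no_nthRoot_in_cyclotomic_general {K : Type*} [Field K] [Algebra ℚ K]
    [IsAbelianGalois ℚ K] {n N g : ℕ} (hn : 4 ≤ n) (hN : N = n * (n - 1) / 2) (hg : 2 ≤ g)
    (hgsq : g ^ 2 ∣ n ^ n) (hK : n = 4 → ¬IsSquare (2 : K)) (x : K) : x ^ N ≠ g := by
  intro hx
  obtain ⟨m, rfl⟩ : ∃ m, n = m + 1 := ⟨n - 1, by omega⟩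
  have h2N : 2 * N = (m + 1) * m := by
    rw [hN, Nat.mul_div_cancel' (Nat.even_mul_pred_self _).two_dvd, Nat.add_sub_cancel]
  have hN0 : N ≠ 0 := by rintro rfl; nlinarith
  obtain ⟨h, hh⟩ := exists_nat_pow_eq_sq_of_pow_eq hN0 hx
  have hh2 : 2 ≤ h := by
    by_contra! hlt
    have hle_one : h ^ N ≤ 1 := pow_le_one₀ h.zero_le (by omega)
    nlinarith
  obtain ⟨rfl, rfl⟩ := eq_three_and_eq_two_of_pow_dvd_succ_sq (by omega) hh2
    (pow_dvd_succ_sq_of_pow_eq_sq h2N hgsq hh)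
  obtain rfl : N = 6 := by omega
  obtain rfl : g = 8 := by nlinarith
  have : CharZero K := algebraRat.charZero K
  refine hK rfl ⟨x ^ 3 / 2, ?_⟩
  push_cast at hx
  linear_combination -hx / 4

/-- **Kummer nontriviality for pure-field index values.**  Let `n ≥ 4`, `N = n(n−1)/2`, and
let `g ≥ 2` satisfy `g² ∣ n^n` (the constraint satisfied by any pure power-basis index).
Then `X^N − g` has no root in the cyclotomic field `ℚ(ζ_{2N})`; equivalently
`ℚ(ζ_{2N}, g^{1/N}) ≠ ℚ(ζ_{2N})`. -/
theorem no_nthRoot_in_cyclotomic (n : ℕ) (hn : 4 ≤ n)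
    (N : ℕ+) (hN : (N : ℕ) = n * (n - 1) / 2)
    (g : ℕ) (hg : 2 ≤ g) (hgsq : g ^ 2 ∣ n ^ n) :
    ∀ x : CyclotomicField (2 * N) ℚ, x ^ (N : ℕ) ≠ (g : CyclotomicField (2 * N) ℚ) := by
  have : IsCyclotomicExtension {2 * (N : ℕ)} ℚ (CyclotomicField (2 * N) ℚ) :=
    CyclotomicField.isCyclotomicExtension _ _
  have : IsAbelianGalois ℚ (CyclotomicField (2 * N) ℚ) :=
    IsCyclotomicExtension.isAbelianGalois {2 * (N : ℕ)} ℚ _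
  refine no_nthRoot_in_cyclotomic_general hn hN hg hgsq fun hn4 h2 ↦ ?_
  subst hn4
  have h8 : 8 ∣ 2 * (N : ℕ) := eight_dvd_of_isSquare_two (by omega) h2
  omega
end

section
/- Let N ≥ 2 and let g be a nonzero integer such that the polynomial X^N − g has no root in ℚ(ζ_{2N}). Let P_g be the set of rational primes q such that q ∤ 2Ng, q ≡ 1 (mod 2N), and g is not an N-th power in ℤ/qℤ. Let L_g denote the splitting field over ℚ of (X^N − g)(X^{2N} − 1) and set δ_g = 1/φ(2N) − 1/[L_g : ℚ]. Then δ_g > 0, the set P_g has natural density δ_g among the primes (i.e., #{q ≤ x : q ∈ P_g}/#{q ≤ x : q prime} → δ_g as x → ∞), and the sum ∑_{q ∈ P_g} 1/q diverges. -/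
open Polynomial Filter
open scoped Classical

/-!
Up to finitely many exceptions, a prime `q ≡ 1 (mod 2N)` has `g` as an `N`-th power residue
exactly when `q` splits completely in `L_g`, and the primes `q ≡ 1 (mod 2N)` are those splitting
completely in `ℚ(ζ_{2N})`. So it suffices that the primes splitting completely in a Galois field
`K` have density `1/[K : ℚ]`, which is the prime ideal theorem for `K`, since almost all degree-one
primes lie over such a `q`, with `[K : ℚ]` of them over each.

For the prime ideal theorem, counting lattice points in cones with a power-saving error term
continues `ζ_K` past `Re s = 1`, the inequality `3 + 4 cos θ + cos 2θ ≥ 0` excludes zeros on that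
line, and the Wiener–Ikehara argument with the Fejér kernel turns this into an asymptotic.
Since `X^N − g` has no root in `ℚ(ζ_{2N})`, that field embeds properly into `L_g` and `δ_g > 0`.
-/

section LatticeCount

open MeasureTheory Metric Bornology Asymptotics Module
open scoped Pointwise Topology NNReal

theorem segment_inter_frontier_nonempty {E : Type*} [NormedAddCommGroup E] [NormedSpace ℝ E]
    {A : Set E} {x y : E} (hx : x ∈ A) (hy : y ∉ A) : (segment ℝ x y ∩ frontier A).Nonempty := by
  by_contra! hempty
  have hcover : segment ℝ x y ⊆ interior A ∪ (closure A)ᶜ := fun z hz ↦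
    or_iff_not_imp_left.mpr fun hzi hzc ↦ (hempty ▸ ⟨hz, hzc, hzi⟩ : z ∈ (∅ : Set E))
  have hxi : x ∈ interior A :=
    (hcover (left_mem_segment ℝ x y)).resolve_right fun h ↦ h (subset_closure hx)
  have hyc : y ∈ (closure A)ᶜ :=
    (hcover (right_mem_segment ℝ x y)).resolve_left fun h ↦ hy (interior_subset h)
  obtain ⟨z, -, hzi, hzc⟩ := (convex_segment (𝕜 := ℝ) x y).isPreconnected _ _ isOpen_interior
    isClosed_closure.isOpen_compl hcover ⟨x, left_mem_segment ℝ x y, hxi⟩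
    ⟨y, right_mem_segment ℝ x y, hyc⟩
  exact hzc (interior_subset_closure hzi)

theorem mem_cthickening_frontier_of_dist_le {E : Type*} [NormedAddCommGroup E] [NormedSpace ℝ E]
    {A : Set E} {x y : E} {R : ℝ} (hx : x ∈ A) (hy : y ∉ A) (hxy : dist x y ≤ R) :
    x ∈ cthickening R (frontier A) ∧ y ∈ cthickening R (frontier A) := by
  obtain ⟨z, hz, hzA⟩ := segment_inter_frontier_nonempty hx hy
  have hdist := dist_add_dist_of_mem_segment hz
  constructor
  · exact mem_cthickening_of_dist_le x z R _ hzA (by linarith [dist_nonneg (x := z) (y := y)])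
  · exact mem_cthickening_of_dist_le y z R _ hzA
      (by linarith [dist_nonneg (x := x) (y := z), dist_comm y z])

variable {E : Type*} [NormedAddCommGroup E] [NormedSpace ℝ E] [FiniteDimensional ℝ E]

theorem finite_inter_lattice {A : Set E} (hA : IsBounded A) (L : Submodule ℤ E)
    [DiscreteTopology L] : (A ∩ L : Set E).Finite := by
  have : DiscreteTopology L.toAddSubgroup := ‹DiscreteTopology L›
  exact finite_isBounded_inter_isClosed (s := (L : Set E))
    (isDiscrete_iff_discreteTopology.mpr ‹DiscreteTopology L›) hA
    (AddSubgroup.isClosed_of_discrete (H := L.toAddSubgroup))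

variable [MeasurableSpace E] [BorelSpace E] (μ : Measure E) [μ.IsAddHaarMeasure]

theorem measureReal_iUnion_vadd {L : Submodule ℤ E} [DiscreteTopology L] {F : Set E}
    (hF : IsAddFundamentalDomain L F μ) {A : Set E} (hA : IsBounded A) :
    μ.real (⋃ a : (A ∩ L : Set E), (a : E) +ᵥ F) = Nat.card (A ∩ L : Set E) * μ.real F := by
  have : VAddInvariantMeasure L E μ := inferInstanceAs (VAddInvariantMeasure L.toAddSubgroup E μ)
  have := (finite_inter_lattice hA L).to_subtype
  have := Fintype.ofFinite (A ∩ L : Set E)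
  have hinj : Function.Injective fun a : (A ∩ L : Set E) ↦ (⟨a, a.2.2⟩ : L) :=
    fun _ _ h ↦ Subtype.ext (Subtype.mk.inj h)
  have hdisj := hF.aedisjoint.comp_of_injective hinj
  have hsum : μ (⋃ a : (A ∩ L : Set E), (a : E) +ᵥ F) =
      ∑' a : (A ∩ L : Set E), μ ((a : E) +ᵥ F) :=
    measure_iUnion₀ hdisj fun a ↦ hF.nullMeasurableSet_vadd ⟨a, a.2.2⟩
  rw [measureReal_def, hsum]
  simp [measure_vadd, tsum_fintype, measureReal_def]

theorem abs_card_mul_measureReal_sub_le {L : Submodule ℤ E} [DiscreteTopology L] {F : Set E}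
    (hF : IsAddFundamentalDomain L F μ) {R : ℝ} (hFR : ∀ y ∈ F, ‖y‖ ≤ R) {A : Set E}
    (hA : IsBounded A) :
    |Nat.card (A ∩ L : Set E) * μ.real F - μ.real A| ≤ μ.real (cthickening R (frontier A)) := by
  set U := ⋃ a : (A ∩ L : Set E), (a : E) +ᵥ F
  set V := cthickening R (frontier A)
  have hV : IsBounded V := (hA.closure.subset frontier_subset_closure).cthickening
  have hUV : U ⊆ A ∪ V := by
    rintro _ ⟨_, ⟨a, rfl⟩, y, hy, rfl⟩
    refine or_iff_not_imp_left.mpr fun hyA ↦ ?_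
    exact (mem_cthickening_frontier_of_dist_le a.2.1 hyA (by simpa using hFR y hy)).2
  have hAU : A ≤ᵐ[μ] (U ∪ V : Set E) := by
    filter_upwards [hF.ae_covers] with x ⟨a, ha⟩ hx
    have hx' : x = -(a : E) + ((a : E) + x) := by abel
    by_cases haA : -(a : E) ∈ A
    · exact Or.inl (Set.mem_iUnion.mpr ⟨⟨-a, haA, neg_mem a.2⟩, a +ᵥ x, ha, hx'.symm⟩)
    · refine Or.inr (mem_cthickening_frontier_of_dist_le hx haA ?_).1
      rw [dist_eq_norm, sub_neg_eq_add, add_comm]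
      exact hFR _ ha
  have hU : μ.real U = Nat.card (A ∩ L : Set E) * μ.real F := measureReal_iUnion_vadd μ hF hA
  have hUbdd : IsBounded (U ∪ V) := (hA.union hV |>.subset hUV).union hV
  have hUle : μ.real U ≤ μ.real A + μ.real V :=
    (measureReal_mono hUV (hA.union hV).measure_lt_top.ne).trans (measureReal_union_le A V)
  have hAle : μ.real A ≤ μ.real U + μ.real V :=
    (ENNReal.toReal_mono hUbdd.measure_lt_top.ne (measure_mono_ae hAU)).trans
      (measureReal_union_le U V)
  rw [← hU, abs_sub_le_iff]
  exact ⟨by linarith, by linarith⟩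

omit [FiniteDimensional ℝ E] [MeasurableSpace E] [BorelSpace E] in
theorem cthickening_mul_smul {t : ℝ} (ht : 0 < t) (ε : ℝ) (S : Set E) :
    cthickening (t * ε) (t • S) = t • cthickening ε S := by
  ext x
  rw [Set.mem_smul_set_iff_inv_smul_mem₀ ht.ne', mem_cthickening_iff, mem_cthickening_iff]
  nth_rw 1 [← smul_inv_smul₀ ht.ne' x]
  rw [infEDist_smul₀ ht.ne', ENNReal.smul_def, smul_eq_mul, ENNReal.ofReal_mul ht.le,
    ← Real.enorm_of_nonneg ht.le, enorm_eq_nnnorm,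
    ENNReal.mul_le_mul_iff_right (by simpa using ht.ne') ENNReal.coe_ne_top]

omit [FiniteDimensional ℝ E] [MeasurableSpace E] [BorelSpace E] in
theorem frontier_smul₀ {t : ℝ} (ht : t ≠ 0) (S : Set E) : frontier (t • S) = t • frontier S :=
  ((Homeomorph.smulOfNeZero t ht).image_frontier S).symm

/-- The codimension-one upper Minkowski content of `S` is finite: closed `ε`-neighbourhoods of `S`
have measure `O(ε)` as `ε → 0`. -/
def HasFiniteMinkowskiContent {X : Type*} [PseudoMetricSpace X] [MeasurableSpace X]
    (μ : Measure X) (S : Set X) : Prop :=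
  ∃ C : ℝ≥0, ∀ᶠ ε : ℝ in 𝓝[>] 0, μ (cthickening ε S) ≤ C * ENNReal.ofReal ε

theorem card_smul_inter_lattice_sub_isBigO (L : Submodule ℤ E) [DiscreteTopology L]
    [IsZLattice ℝ L] {D : Set E} (hD : IsBounded D)
    (hfr : HasFiniteMinkowskiContent μ (frontier D)) :
    (fun t : ℝ ↦ (Nat.card (t • D ∩ L : Set E) : ℝ) -
      μ.real D / ZLattice.covolume L μ * t ^ finrank ℝ E) =O[atTop]
        fun t : ℝ ↦ t ^ ((finrank ℝ E : ℝ) - 1) := by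
  let b := Free.chooseBasis ℤ L
  have hF := ZLattice.isAddFundamentalDomain b μ
  obtain ⟨R, hR, hFR⟩ :=
    (ZSpan.fundamentalDomain_isBounded (b.ofZLatticeBasis ℝ L)).exists_pos_norm_le
  have hcov := ZLattice.covolume_eq_measure_fundamentalDomain L μ hF
  have hcov_pos := ZLattice.covolume_pos L μ
  obtain ⟨C, hC⟩ := hfr
  have htendsto : Tendsto (fun t : ℝ ↦ R / t) atTop (𝓝[>] 0) :=
    tendsto_nhdsWithin_iff.mpr ⟨tendsto_const_nhds.div_atTop tendsto_id,
      (eventually_gt_atTop 0).mono fun t ht ↦ div_pos hR ht⟩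
  refine IsBigO.of_bound (C * R / ZLattice.covolume L μ) ?_
  filter_upwards [htendsto.eventually hC, eventually_gt_atTop 0] with t hCt ht
  have hsmul (S : Set E) : μ.real (t • S) = t ^ finrank ℝ E * μ.real S := by
    rw [measureReal_def, Measure.addHaar_smul, abs_of_pos (by positivity), ENNReal.toReal_mul,
      ENNReal.toReal_ofReal (by positivity), measureReal_def]
  have herror : |Nat.card (t • D ∩ L : Set E) * ZLattice.covolume L μ -
      t ^ finrank ℝ E * μ.real D| ≤ t ^ finrank ℝ E * (C * (R / t)) := by
    have h := abs_card_mul_measureReal_sub_le μ hF hFR (hD.smul₀ t)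
    rw [← hcov, frontier_smul₀ ht.ne', hsmul, ← mul_div_cancel₀ R ht.ne',
      cthickening_mul_smul ht, hsmul] at h
    refine h.trans (mul_le_mul_of_nonneg_left ?_ (by positivity))
    refine ENNReal.toReal_le_of_le_ofReal (by positivity) (hCt.trans_eq ?_)
    rw [ENNReal.ofReal_mul C.coe_nonneg, ENNReal.ofReal_coe_nnreal]
  calc ‖(Nat.card (t • D ∩ L : Set E) : ℝ) -
        μ.real D / ZLattice.covolume L μ * t ^ finrank ℝ E‖
      = |Nat.card (t • D ∩ L : Set E) * ZLattice.covolume L μ - t ^ finrank ℝ E * μ.real D| /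
          ZLattice.covolume L μ := by
        rw [Real.norm_eq_abs, ← abs_of_pos hcov_pos, ← abs_div, abs_of_pos hcov_pos]
        congr 1
        field_simp
    _ ≤ t ^ finrank ℝ E * (C * (R / t)) / ZLattice.covolume L μ := by gcongr
    _ = C * R / ZLattice.covolume L μ * ‖t ^ ((finrank ℝ E : ℝ) - 1)‖ := by
        rw [Real.norm_of_nonneg (by positivity), Real.rpow_sub_one ht.ne', Real.rpow_natCast]
        field_simp

end LatticeCount

section CubeBoundary

open MeasureTheory Metric Set
open scoped NNReal Topology

variable {ι : Type*}

theorem interior_Icc_pi [Finite ι] (a b : ι → ℝ) :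
    interior (Icc a b) = univ.pi fun i ↦ Ioo (a i) (b i) := by
  simp only [← pi_univ_Icc, interior_pi_set finite_univ, interior_Icc]

theorem exists_apply_eq_of_mem_frontier_Icc_pi [Finite ι] {a b y : ι → ℝ}
    (hy : y ∈ frontier (Icc a b)) : ∃ i, y i = a i ∨ y i = b i := by
  by_contra! hne
  have hyI : y ∈ Icc a b := isClosed_Icc.frontier_subset hy
  refine hy.2 ?_
  rw [interior_Icc_pi, mem_univ_pi]
  exact fun i ↦ ⟨(hyI.1 i).lt_of_ne' (hne i).1, (hyI.2 i).lt_of_ne (hne i).2⟩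

theorem exists_dist_natCast_div_le {M : ℕ} (hM : 0 < M) {x : ℝ} (hx : x ∈ Icc (0 : ℝ) 1) :
    ∃ k ≤ M, dist x (k / M) ≤ 1 / M := by
  have hM' : (0 : ℝ) < M := Nat.cast_pos.mpr hM
  have hMx : 0 ≤ M * x := mul_nonneg hM'.le hx.1
  refine ⟨⌊M * x⌋₊, Nat.floor_le_of_le (mul_le_of_le_one_right hM'.le hx.2), ?_⟩
  have hdist : x - ⌊M * x⌋₊ / M = (M * x - ⌊M * x⌋₊) / M := by field_simp
  rw [Real.dist_eq, hdist, abs_div, abs_of_pos hM']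
  gcongr
  rw [abs_le]
  constructor <;> linarith [Nat.floor_le hMx, Nat.lt_floor_add_one (M * x)]

/-- The points of `[0, 1]` with denominator `M`. -/
noncomputable def unitGrid (M : ℕ) : Finset ℝ :=
  (Finset.range (M + 1)).image fun k : ℕ ↦ (k : ℝ) / M

theorem natCast_div_mem_unitGrid {k M : ℕ} (hk : k ≤ M) : (k / M : ℝ) ∈ unitGrid M :=
  Finset.mem_image_of_mem _ (Finset.mem_range_succ_iff.mpr hk)

theorem mem_Icc_of_mem_unitGrid {c : ℝ} {M : ℕ} (hc : c ∈ unitGrid M) : c ∈ Icc (0 : ℝ) 1 := by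
  obtain ⟨k, hk, rfl⟩ := Finset.mem_image.mp hc
  have hk : k ≤ M := Finset.mem_range_succ_iff.mp hk
  exact ⟨by positivity, div_le_one_of_le₀ (mod_cast hk) (by positivity)⟩

variable [Fintype ι]

variable (ι) in
/-- The points of the boundary of the unit cube all of whose coordinates have denominator `M`,
one face `y i = c` with `c ∈ {0, 1}` at a time. -/
noncomputable def cubeFaceGrid (M : ℕ) : Finset (ι → ℝ) :=
  Finset.univ.biUnion fun i ↦ ({0, 1} : Finset ℝ).biUnion fun c ↦
    Fintype.piFinset fun j ↦ if j = i then {c} else unitGrid M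

theorem mem_cubeFaceGrid {M : ℕ} {k : ι → ℝ} :
    k ∈ cubeFaceGrid ι M ↔ ∃ i, (k i = 0 ∨ k i = 1) ∧ ∀ j ≠ i, k j ∈ unitGrid M := by
  simp only [cubeFaceGrid, Finset.mem_biUnion, Finset.mem_univ, true_and, Finset.mem_insert,
    Finset.mem_singleton, Fintype.mem_piFinset]
  refine exists_congr fun i ↦ ⟨?_, fun ⟨hi, hk⟩ ↦ ⟨k i, hi, fun j ↦ ?_⟩⟩
  · rintro ⟨c, hc, hk⟩
    have hki : k i = c := by simpa using hk i
    exact ⟨hki ▸ hc, fun j hj ↦ by simpa [hj] using hk j⟩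
  · split_ifs with hj
    · rw [hj, Finset.mem_singleton]
    · exact hk j hj

theorem card_cubeFaceGrid_le (M : ℕ) :
    (cubeFaceGrid ι M).card ≤ Fintype.card ι * (2 * (M + 1) ^ (Fintype.card ι - 1)) := by
  refine Finset.card_biUnion_le_card_mul _ _ _ fun i _ ↦ ?_
  refine (Finset.card_biUnion_le_card_mul _ _ ((M + 1) ^ (Fintype.card ι - 1))
    fun c _ ↦ ?_).trans (Nat.mul_le_mul_right _ Finset.card_le_two)
  rw [Fintype.card_piFinset, ← Finset.mul_prod_erase _ _ (Finset.mem_univ i), if_pos rfl,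
    Finset.card_singleton, one_mul, ← Finset.card_univ,
    ← Finset.card_erase_of_mem (Finset.mem_univ i)]
  refine Finset.prod_le_pow_card _ _ _ fun j hj ↦ ?_
  rw [if_neg (Finset.ne_of_mem_erase hj)]
  exact Finset.card_image_le.trans_eq (Finset.card_range _)

theorem cubeFaceGrid_subset_Icc (M : ℕ) : (cubeFaceGrid ι M : Set (ι → ℝ)) ⊆ Icc 0 1 := by
  intro k hk
  obtain ⟨i, hi, hk⟩ := mem_cubeFaceGrid.mp hk
  have hkI (j : ι) : k j ∈ Icc (0 : ℝ) 1 := by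
    by_cases hj : j = i
    · rcases hi with hi | hi <;> simp [hj, hi]
    · exact mem_Icc_of_mem_unitGrid (hk j hj)
  exact ⟨fun j ↦ (hkI j).1, fun j ↦ (hkI j).2⟩

theorem exists_mem_cubeFaceGrid_dist_le {M : ℕ} (hM : 0 < M) {y : ι → ℝ}
    (hy : y ∈ frontier (Icc (0 : ι → ℝ) 1)) : ∃ k ∈ cubeFaceGrid ι M, dist y k ≤ 1 / M := by
  have hyI : y ∈ Icc (0 : ι → ℝ) 1 := isClosed_Icc.frontier_subset hy
  obtain ⟨i, hi⟩ := exists_apply_eq_of_mem_frontier_Icc_pi hy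
  choose m hmM hm using fun j ↦ exists_dist_natCast_div_le hM ⟨hyI.1 j, hyI.2 j⟩
  refine ⟨fun j ↦ if j = i then y i else m j / M, mem_cubeFaceGrid.mpr
    ⟨i, by simpa using hi, fun j hj ↦ ?_⟩, (dist_pi_le_iff (by positivity)).mpr fun j ↦ ?_⟩
  · rw [if_neg hj]
    exact natCast_div_mem_unitGrid (hmM j)
  · split_ifs with hj
    · rw [hj, dist_self]
      positivity
    · exact hm j

theorem cthickening_image_subset_biUnion_closedBall {s N : Set (ι → ℝ)} {Φ : (ι → ℝ) → ι → ℝ}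
    {K : ℝ≥0} {ε : ℝ} (hε : 0 ≤ ε) (hs : IsCompact s) (hΦ : LipschitzOnWith K Φ (s ∪ N))
    (hN : ∀ y ∈ s, ∃ k ∈ N, dist y k ≤ ε) :
    cthickening ε (Φ '' s) ⊆ ⋃ k ∈ N, closedBall (Φ k) ((K + 1) * ε) := by
  have himage : IsCompact (Φ '' s) :=
    hs.image_of_continuousOn (hΦ.continuousOn.mono subset_union_left)
  rw [himage.cthickening_eq_biUnion_closedBall hε]
  refine iUnion₂_subset ?_
  rintro _ ⟨y, hy, rfl⟩ x hx
  obtain ⟨k, hk, hyk⟩ := hN y hy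
  refine mem_iUnion₂.mpr ⟨k, hk, mem_closedBall.mpr ?_⟩
  calc dist x (Φ k) ≤ dist x (Φ y) + dist (Φ y) (Φ k) := dist_triangle _ _ _
    _ ≤ ε + K * ε := by
      gcongr
      · exact hx
      · exact (hΦ.dist_le_mul _ (.inl hy) _ (.inr hk)).trans (by gcongr)
    _ = (K + 1) * ε := by ring

theorem hasFiniteMinkowskiContent_image_frontier_cube [Nonempty ι] {Φ : (ι → ℝ) → ι → ℝ}
    {K : ℝ≥0} (hΦ : LipschitzOnWith K Φ (Icc 0 1)) :
    HasFiniteMinkowskiContent volume (Φ '' frontier (Icc (0 : ι → ℝ) 1)) := by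
  set d := Fintype.card ι
  have hd : d ≠ 0 := Fintype.card_ne_zero
  refine ⟨d * 2 * 3 ^ (d - 1) * (2 * (K + 1)) ^ d, ?_⟩
  filter_upwards [Ioo_mem_nhdsGT one_pos] with ε ⟨hε, hε₁⟩
  set M := ⌈1 / ε⌉₊
  have hM : 0 < M := Nat.ceil_pos.mpr (by positivity)
  have hMε : 1 / (M : ℝ) ≤ ε := (one_div_le hε (Nat.cast_pos.mpr hM)).mp (Nat.le_ceil _)
  have hMle : (M : ℝ) + 1 ≤ 3 / ε := by
    have hceil : (M : ℝ) < 1 / ε + 1 := Nat.ceil_lt_add_one (by positivity)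
    have hone : 1 ≤ 1 / ε := (one_le_div hε).mpr hε₁.le
    linarith [div_eq_mul_one_div 3 ε]
  have hcover := cthickening_image_subset_biUnion_closedBall hε.le
    (isCompact_Icc.of_isClosed_subset isClosed_frontier isClosed_Icc.frontier_subset)
    (hΦ.mono (union_subset isClosed_Icc.frontier_subset (cubeFaceGrid_subset_Icc M)))
    fun y hy ↦ (exists_mem_cubeFaceGrid_dist_le hM hy).imp fun k hk ↦ ⟨hk.1, hk.2.trans hMε⟩
  have hball (k : ι → ℝ) : volume (closedBall (Φ k) ((K + 1) * ε)) =
      ENNReal.ofReal ((2 * ((K + 1) * ε)) ^ d) := Real.volume_pi_closedBall _ (by positivity)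
  calc volume (cthickening ε (Φ '' frontier (Icc (0 : ι → ℝ) 1)))
      ≤ volume (⋃ k ∈ cubeFaceGrid ι M, closedBall (Φ k) ((K + 1) * ε)) := measure_mono hcover
    _ ≤ ∑ k ∈ cubeFaceGrid ι M, volume (closedBall (Φ k) ((K + 1) * ε)) :=
        measure_biUnion_finset_le _ _
    _ = ENNReal.ofReal ((cubeFaceGrid ι M).card * (2 * ((K + 1) * ε)) ^ d) := by
        simp only [hball, Finset.sum_const, nsmul_eq_mul]
        rw [ENNReal.ofReal_mul (by positivity), ENNReal.ofReal_natCast]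
    _ ≤ ENNReal.ofReal (d * (2 * (3 / ε) ^ (d - 1)) * (2 * ((K + 1) * ε)) ^ d) := by
        gcongr
        refine (Nat.cast_le.mpr (card_cubeFaceGrid_le M)).trans ?_
        push_cast
        gcongr
    _ = ENNReal.ofReal (d * 2 * 3 ^ (d - 1) * (2 * (K + 1)) ^ d * ε) := by
        congr 1
        rw [div_pow, ← mul_assoc 2 ((K : ℝ) + 1) ε, mul_pow _ ε, ← pow_sub_one_mul hd ε]
        field_simp
    _ = _ := by
        rw [ENNReal.ofReal_mul (by positivity), ← ENNReal.ofReal_coe_nnreal]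
        push_cast
        rfl

end CubeBoundary

section NormLeOne

open MeasureTheory Metric Module Bornology
open NumberField NumberField.InfinitePlace NumberField.Units.dirichletUnitTheorem
open NumberField.mixedEmbedding NumberField.mixedEmbedding.fundamentalCone
open scoped NNReal Topology

theorem HasFiniteMinkowskiContent.mono {X : Type*} [PseudoMetricSpace X] [MeasurableSpace X]
    {μ : Measure X} {S T : Set X} (hT : HasFiniteMinkowskiContent μ T) (hST : S ⊆ T) :
    HasFiniteMinkowskiContent μ S :=
  hT.imp fun _ hC ↦ hC.mono fun ε hε ↦
    (measure_mono (cthickening_subset_of_subset ε hST)).trans hε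

theorem cthickening_preimage_subset {X Y : Type*} [PseudoMetricSpace X] [PseudoMetricSpace Y]
    {f : X → Y} (hf : LipschitzWith 1 f) (ε : ℝ) (S : Set Y) :
    cthickening ε (f ⁻¹' S) ⊆ f ⁻¹' cthickening ε S := by
  intro x hx
  have hle : infEDist (f x) S ≤ infEDist x (f ⁻¹' S) := le_infEDist.mpr fun y hy ↦
    (infEDist_le_edist_of_mem (Set.mem_preimage.mp hy)).trans (by simpa using hf x y)
  exact hle.trans (mem_cthickening_iff.mp hx)

variable (K : Type*) [Field K] [NumberField K]

/-- The map `y ↦ y w₀ • expMapBasis y'`, where `y'` is `y` with its `w₀`-coordinate replaced by `0`.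
It is the parametrization of `normAtAllPlaces '' normLeOne K` by `expMapBasis` in which the
coordinate at `w₀` ranges over `(0, 1]` instead of `(-∞, 0]`, so that it extends smoothly to the
closed unit cube. -/
noncomputable def cubeMap (y : realSpace K) : realSpace K :=
  y w₀ • expMapBasis (fun w ↦ if w = w₀ then 0 else y w)

theorem contDiff_expMapBasis : ContDiff ℝ 1 (expMapBasis (K := K)) := by
  rw [contDiff_pi]
  intro w
  simp only [expMapBasis_apply, expMap_apply]
  have hcoord : ContDiff ℝ 1 fun x : realSpace K ↦ (completeBasis K).equivFunL.symm x :=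
    ContinuousLinearEquiv.contDiff _
  exact Real.contDiff_exp.comp (contDiff_const.mul (contDiff_pi.mp hcoord w))

theorem contDiff_cubeMap : ContDiff ℝ 1 (cubeMap K) := by
  refine (contDiff_apply ℝ ℝ _).smul ((contDiff_expMapBasis K).comp (contDiff_pi.mpr fun w ↦ ?_))
  split_ifs
  · exact contDiff_const
  · exact contDiff_apply ℝ ℝ _

variable {K} in
theorem cubeMap_mem_image_interior_paramSet {y : realSpace K}
    (hy : y ∈ interior (Set.Icc (0 : realSpace K) 1)) :
    cubeMap K y ∈ expMapBasis '' interior (paramSet K) := by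
  rw [interior_Icc_pi, Set.mem_univ_pi] at hy
  refine ⟨fun w ↦ if w = w₀ then Real.log (y w₀) else y w, ?_, ?_⟩
  · rw [interior_paramSet, Set.mem_univ_pi]
    intro w
    split_ifs
    · exact Real.log_neg (hy w₀).1 (hy w₀).2
    · exact hy w
  · rw [expMapBasis_apply'', cubeMap, if_pos rfl, Real.exp_log (hy w₀).1]
    congr 2
    ext w
    by_cases hw : w = w₀ <;> simp [hw]

theorem frontier_normLeOne_subset :
    frontier (normLeOne K) ⊆
      normAtAllPlaces ⁻¹' (cubeMap K '' frontier (Set.Icc (0 : realSpace K) 1)) := by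
  intro x hx
  obtain ⟨c, hc, _, ⟨z, hz, rfl⟩, hxz⟩ := closure_normLeOne_subset K hx.1
  have hz₁ (w : InfinitePlace K) (hw : w ≠ w₀) : z w ∈ Set.Icc (0 : ℝ) 1 := by
    simpa [hw] using hz w (Set.mem_univ _)
  have hz₀ : z w₀ = 0 := by simpa using hz w₀ (Set.mem_univ _)
  let y : realSpace K := fun w ↦ if w = w₀ then c else z w
  have hyz : (fun w ↦ if w = w₀ then 0 else y w) = z := by
    ext w
    by_cases hw : w = w₀ <;> simp [y, hw, hz₀]
  have hy : cubeMap K y = normAtAllPlaces x := by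
    rw [cubeMap, hyz, ← hxz]
    simp [y]
  have hyI (w : InfinitePlace K) : y w ∈ Set.Icc (0 : ℝ) 1 := by
    by_cases hw : w = w₀
    · simpa [y, hw] using hc
    · simpa [y, hw] using hz₁ w hw
  refine ⟨y, ⟨subset_closure ⟨fun w ↦ (hyI w).1, fun w ↦ (hyI w).2⟩, fun hint ↦ hx.2 ?_⟩, hy⟩
  exact subset_interior_normLeOne K
    (Set.mem_preimage.mpr (hy ▸ cubeMap_mem_image_interior_paramSet hint))

theorem lipschitzWith_normAtAllPlaces :
    LipschitzWith 1 (normAtAllPlaces : mixedSpace K → realSpace K) := by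
  refine LipschitzWith.of_dist_le_mul fun x y ↦ ?_
  rw [NNReal.coe_one, one_mul, dist_pi_le_iff dist_nonneg]
  intro w
  have hsub (a b : mixedSpace K) : normAtPlace w a - normAtPlace w b ≤ dist a b := by
    have hadd := normAtPlace_add_le w (a - b) b
    have hle : normAtPlace w (a - b) ≤ ‖a - b‖ := by
      rw [norm_eq_sup'_normAtPlace]
      exact Finset.le_sup' (fun w ↦ normAtPlace w (a - b)) (Finset.mem_univ w)
    rw [sub_add_cancel] at hadd
    rw [dist_eq_norm]
    linarith
  rw [Real.dist_eq, abs_sub_le_iff, normAtAllPlaces_apply, normAtAllPlaces_apply]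
  exact ⟨hsub x y, dist_comm x y ▸ hsub y x⟩

theorem volume_preimage_normAtAllPlaces_le {S : Set (realSpace K)} (hS : MeasurableSet S) {R : ℝ}
    (hSR : S ⊆ closedBall 0 R) :
    volume ((normAtAllPlaces : mixedSpace K → realSpace K) ⁻¹' S) ≤
      2 ^ nrRealPlaces K * .ofReal (2 * Real.pi) ^ nrComplexPlaces K *
        (.ofReal R ^ nrComplexPlaces K * volume S) := by
  rw [volume_eq_two_pow_mul_two_pi_pow_mul_integral Set.preimage_image_preimage
    (hS.preimage (continuous_normAtAllPlaces K).measurable)]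
  gcongr
  calc ∫⁻ x in normAtAllPlaces '' ((normAtAllPlaces : mixedSpace K → realSpace K) ⁻¹' S),
          ∏ w : {w : InfinitePlace K // IsComplex w}, ENNReal.ofReal (x w.1)
      ≤ ∫⁻ x in S, ∏ w : {w : InfinitePlace K // IsComplex w}, ENNReal.ofReal (x w.1) :=
        lintegral_mono_set (Set.image_preimage_subset _ _)
    _ ≤ ∫⁻ _ in S, .ofReal R ^ nrComplexPlaces K := by
        refine setLIntegral_mono' hS fun x hx ↦ ?_
        rw [nrComplexPlaces, ← Finset.card_univ]
        refine Finset.prod_le_pow_card _ _ _ fun w _ ↦ ENNReal.ofReal_le_ofReal ?_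
        exact (le_abs_self _).trans
          ((norm_le_pi_norm x w.1).trans (mem_closedBall_zero_iff.mp (hSR hx)))
    _ = _ := by rw [setLIntegral_const]

variable {K} in
theorem HasFiniteMinkowskiContent.preimage_normAtAllPlaces {S : Set (realSpace K)}
    (hS : IsBounded S) (hcontent : HasFiniteMinkowskiContent volume S) :
    HasFiniteMinkowskiContent volume
      ((normAtAllPlaces : mixedSpace K → realSpace K) ⁻¹' S) := by
  obtain ⟨R, hR⟩ := (hS.cthickening (δ := 1)).subset_closedBall 0
  obtain ⟨C, hC⟩ := hcontent
  refine ⟨2 ^ nrRealPlaces K * (2 * Real.pi).toNNReal ^ nrComplexPlaces K *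
    (R.toNNReal ^ nrComplexPlaces K * C), ?_⟩
  filter_upwards [hC, Ioo_mem_nhdsGT one_pos] with ε hε ⟨_, hε₁⟩
  have hball : cthickening ε S ⊆ closedBall 0 R := (cthickening_mono hε₁.le S).trans hR
  calc _ ≤ _ := measure_mono (cthickening_preimage_subset (lipschitzWith_normAtAllPlaces K) ε S)
    _ ≤ _ := volume_preimage_normAtAllPlaces_le K isClosed_cthickening.measurableSet hball
    _ ≤ 2 ^ nrRealPlaces K * .ofReal (2 * Real.pi) ^ nrComplexPlaces K *
        (.ofReal R ^ nrComplexPlaces K * (C * ENNReal.ofReal ε)) := by gcongr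
    _ = _ := by
      push_cast
      simp only [ENNReal.ofReal]
      ring

theorem hasFiniteMinkowskiContent_frontier_normLeOne :
    HasFiniteMinkowskiContent volume (frontier (normLeOne K)) := by
  obtain ⟨L, hL⟩ := (contDiff_cubeMap K).contDiffOn.exists_lipschitzOnWith one_ne_zero
    (convex_Icc (0 : realSpace K) 1) isCompact_Icc
  have hbounded : IsBounded (cubeMap K '' frontier (Set.Icc (0 : realSpace K) 1)) :=
    (isCompact_Icc.image (contDiff_cubeMap K).continuous).isBounded.subset
      (Set.image_mono isClosed_Icc.frontier_subset)
  exact ((hasFiniteMinkowskiContent_image_frontier_cube hL).preimage_normAtAllPlaces hbounded).mono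
    (frontier_normLeOne_subset K)

end NormLeOne

section IdealCount

open Asymptotics MeasureTheory Module Ideal NumberField
open NumberField.mixedEmbedding NumberField.mixedEmbedding.fundamentalCone NumberField.Units
open scoped nonZeroDivisors Pointwise

theorem tendsto_div_of_sub_mul_isBigO_rpow {f : ℝ → ℝ} {κ a : ℝ} (ha : a < 1)
    (hf : (fun s ↦ f s - κ * s) =O[atTop] fun s ↦ s ^ a) :
    Tendsto (fun s ↦ f s / s) atTop (nhds κ) := by
  have hlim : Tendsto (fun s ↦ (f s - κ * s) / s) atTop (nhds 0) := by
    refine ((hf.mul (isBigO_refl (fun s : ℝ ↦ s⁻¹) atTop)).trans_tendsto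
      ((tendsto_rpow_neg_atTop (sub_pos.mpr ha)).congr' ?_))
    filter_upwards [eventually_gt_atTop 0] with s hs
    rw [neg_sub, Real.rpow_sub_one hs.ne', div_eq_mul_inv]
  refine (zero_add κ ▸ hlim.add_const κ).congr' ?_
  filter_upwards [eventually_ne_atTop 0] with s hs
  field_simp
  ring

variable (K : Type*) [Field K] [NumberField K]

theorem card_idealClass_absNorm_le_eq {C : ClassGroup (𝓞 K)} {J : (Ideal (𝓞 K))⁰} (s : ℝ)
    (hJ : ClassGroup.mk0 J = C⁻¹) :
    Nat.card {I : (Ideal (𝓞 K))⁰ // absNorm (I : Ideal (𝓞 K)) ≤ s ∧ ClassGroup.mk0 I = C} =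
      Nat.card {I : (Ideal (𝓞 K))⁰ // (J : Ideal (𝓞 K)) ∣ I ∧
        Submodule.IsPrincipal (I : Ideal (𝓞 K)) ∧
        absNorm (I : Ideal (𝓞 K)) ≤ s * absNorm (J : Ideal (𝓞 K))} := by
  simp_rw [← nonZeroDivisors_dvd_iff_dvd_coe]
  refine Nat.card_congr (((Equiv.dvd J).subtypeEquiv fun I ↦ ?_).trans
    (Equiv.subtypeSubtypeEquivSubtypeInter (fun I : (Ideal (𝓞 K))⁰ ↦ J ∣ I) _))
  rw [← ClassGroup.mk0_eq_one_iff (SetLike.coe_mem _)]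
  simp_rw [Equiv.dvd_apply, Submonoid.coe_mul, ← Submonoid.mul_def, _root_.map_mul, hJ,
    inv_mul_eq_one, Nat.cast_mul, mul_comm s, eq_comm, and_comm, and_congr_left_iff]
  exact fun _ ↦
    (mul_le_mul_iff_of_pos_left (Nat.cast_pos.mpr (absNorm_pos_of_nonZeroDivisors J))).symm

theorem card_idealSet_norm_le (J : (Ideal (𝓞 K))⁰) {t : ℝ} (ht : 0 < t) :
    Nat.card {a : idealSet K J // mixedEmbedding.norm (a : mixedSpace K) ≤ t ^ finrank ℚ K} =
      Nat.card (t • normLeOne K ∩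
        (idealLattice K (FractionalIdeal.mk0 K J) : Set (mixedSpace K)) : Set (mixedSpace K)) := by
  refine Nat.card_congr ((Equiv.subtypeSubtypeEquivSubtypeInter _
    (mixedEmbedding.norm · ≤ t ^ finrank ℚ K)).trans (Equiv.subtypeEquivProp ?_))
  ext x
  have hmem : x ∈ t • normLeOne K ↔
      x ∈ fundamentalCone K ∧ mixedEmbedding.norm x ≤ t ^ finrank ℚ K := by
    rw [Set.mem_smul_set_iff_inv_smul_mem₀ ht.ne', mem_normLeOne,
      smul_mem_iff_mem (inv_ne_zero ht.ne'), mixedEmbedding.norm_smul, abs_of_pos (inv_pos.2 ht),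
      inv_pow, inv_mul_le_one₀ (pow_pos ht _)]
  rw [Set.mem_inter_iff, hmem]
  simp only [mem_idealSet, SetLike.mem_coe, mem_idealLattice, FractionalIdeal.coe_mk0]
  constructor
  · rintro ⟨⟨hcone, y, hy, rfl⟩, hnorm⟩
    exact ⟨⟨hcone, hnorm⟩, y, by simp [hy], rfl⟩
  · rintro ⟨⟨hcone, hnorm⟩, y, hy, rfl⟩
    obtain ⟨z, hz, rfl⟩ := (FractionalIdeal.mem_coeIdeal _).mp hy
    exact ⟨⟨hcone, z, hz, rfl⟩, hnorm⟩

theorem exists_card_idealClass_absNorm_le_sub_isBigO (C : ClassGroup (𝓞 K)) :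
    ∃ κ : ℝ, (fun s : ℝ ↦ (Nat.card {I : (Ideal (𝓞 K))⁰ //
      absNorm (I : Ideal (𝓞 K)) ≤ s ∧ ClassGroup.mk0 I = C} : ℝ) - κ * s) =O[atTop]
        fun s ↦ s ^ (1 - (finrank ℚ K : ℝ)⁻¹) := by
  obtain ⟨J, hJ⟩ := ClassGroup.mk0_surjective C⁻¹
  have hJ₀ : 0 < (absNorm J.1 : ℝ) := Nat.cast_pos.mpr (absNorm_pos_of_nonZeroDivisors J)
  set n := finrank ℚ K
  have hn : n ≠ 0 := finrank_pos.ne'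
  have hn' : (0 : ℝ) < n := Nat.cast_pos.mpr finrank_pos
  set L := idealLattice K (FractionalIdeal.mk0 K J)
  have hcount := card_smul_inter_lattice_sub_isBigO volume L (isBounded_normLeOne K)
    (hasFiniteMinkowskiContent_frontier_normLeOne K)
  rw [mixedEmbedding.finrank] at hcount
  set β := volume.real (normLeOne K) / ZLattice.covolume L volume
  have hradius : Tendsto (fun s : ℝ ↦ (s * absNorm J.1) ^ ((n : ℝ)⁻¹)) atTop atTop :=
    (tendsto_rpow_atTop (inv_pos.2 hn')).comp (tendsto_id.atTop_mul_const hJ₀)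
  refine ⟨(torsionOrder K : ℝ)⁻¹ * (β * absNorm J.1), ?_⟩
  refine (((hcount.comp_tendsto hradius).const_mul_left ((torsionOrder K : ℝ)⁻¹)).congr' ?_
    EventuallyEq.rfl).trans ?_
  · filter_upwards [eventually_gt_atTop 0] with s hs
    have hpos : 0 < s * absNorm J.1 := mul_pos hs hJ₀
    have hpow : ((s * absNorm J.1) ^ ((n : ℝ)⁻¹)) ^ n = s * absNorm J.1 :=
      Real.rpow_inv_natCast_pow hpos.le hn
    have hcard := card_idealSet_norm_le K J (Real.rpow_pos_of_pos hpos ((n : ℝ)⁻¹))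
    rw [hpow] at hcard
    rw [card_idealClass_absNorm_le_eq K s hJ]
    simp only [Function.comp_apply]
    rw [hpow, ← hcard, ← card_isPrincipal_dvd_norm_le K J (s * absNorm J.1), Nat.cast_mul]
    have := torsionOrder_ne_zero K
    field_simp
  · refine IsBigO.of_bound ((absNorm J.1 : ℝ) ^ (1 - (n : ℝ)⁻¹)) ?_
    filter_upwards [eventually_gt_atTop 0] with s hs
    have hexp : (n : ℝ)⁻¹ * (n - 1) = 1 - (n : ℝ)⁻¹ := by field_simp
    simp only [Function.comp_apply]
    rw [← Real.rpow_mul (by positivity), hexp, Real.mul_rpow hs.le hJ₀.le,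
      Real.norm_of_nonneg (by positivity), Real.norm_of_nonneg (by positivity), mul_comm]

theorem card_absNorm_le_eq_sum_classGroup {s : ℝ} (hs : 0 ≤ s) :
    Nat.card {I : (Ideal (𝓞 K))⁰ // absNorm (I : Ideal (𝓞 K)) ≤ s} =
      ∑ C : ClassGroup (𝓞 K), Nat.card {I : (Ideal (𝓞 K))⁰ //
        absNorm (I : Ideal (𝓞 K)) ≤ s ∧ ClassGroup.mk0 I = C} := by
  have : Finite {I : (Ideal (𝓞 K))⁰ // absNorm (I : Ideal (𝓞 K)) ≤ s} := by
    simp_rw [← Nat.le_floor_iff hs]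
    exact finite_setOfPred_absNorm_le₀ ⌊s⌋₊
  let e (C : ClassGroup (𝓞 K)) := Equiv.subtypeSubtypeEquivSubtypeInter
    (fun I : (Ideal (𝓞 K))⁰ ↦ absNorm I.1 ≤ s) (fun I ↦ ClassGroup.mk0 I = C)
  rw [← Nat.card_congr (Equiv.sigmaFiberEquiv
    fun I : {I : (Ideal (𝓞 K))⁰ // absNorm (I : Ideal (𝓞 K)) ≤ s} ↦ ClassGroup.mk0 I.1),
    Nat.card_sigma]
  exact Finset.sum_congr rfl fun C _ ↦ Nat.card_congr (e C)

theorem card_absNorm_le_sub_isBigO :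
    (fun s : ℝ ↦ (Nat.card {I : (Ideal (𝓞 K))⁰ // absNorm (I : Ideal (𝓞 K)) ≤ s} : ℝ) -
      dedekindZeta_residue K * s) =O[atTop] fun s ↦ s ^ (1 - (finrank ℚ K : ℝ)⁻¹) := by
  choose κ hκ using exists_card_idealClass_absNorm_le_sub_isBigO K
  have hsum : (fun s : ℝ ↦ (Nat.card {I : (Ideal (𝓞 K))⁰ // absNorm (I : Ideal (𝓞 K)) ≤ s} : ℝ) -
      (∑ C, κ C) * s) =O[atTop] fun s ↦ s ^ (1 - (finrank ℚ K : ℝ)⁻¹) := by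
    refine (IsBigO.sum (s := Finset.univ) fun C _ ↦ hκ C).congr' ?_ EventuallyEq.rfl
    filter_upwards [eventually_ge_atTop 0] with s hs
    rw [card_absNorm_le_eq_sum_classGroup K hs, Finset.sum_apply, Finset.sum_sub_distrib,
      Finset.sum_mul, Nat.cast_sum]
  have hexp : 1 - (finrank ℚ K : ℝ)⁻¹ < 1 :=
    sub_lt_self _ (inv_pos.mpr (Nat.cast_pos.mpr finrank_pos))
  rwa [tendsto_nhds_unique (tendsto_div_of_sub_mul_isBigO_rpow hexp hsum)
    (Ideal.tendsto_norm_le_div_atTop₀ K)] at hsum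

end IdealCount

section LSeriesContinuation

open Asymptotics MeasureTheory Set Topology

theorem differentiableAt_mellin_sum_floor {f : ℕ → ℂ} {r : ℝ} (hr : 0 ≤ r)
    (hf : (fun n ↦ ∑ k ∈ Finset.Icc 1 n, f k) =O[atTop] fun n ↦ (n : ℝ) ^ r) {s : ℂ}
    (hs : s.re < -r) :
    DifferentiableAt ℂ (mellin fun t : ℝ ↦ ∑ k ∈ Finset.Icc 1 ⌊t⌋₊, f k) s := by
  have hloc : LocallyIntegrableOn (fun t : ℝ ↦ ∑ k ∈ Finset.Icc 1 ⌊t⌋₊, f k) (Ioi 0) := by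
    have hmul := locallyIntegrableOn_mul_sum_Icc (𝕜 := ℂ) f (m := 1) (a := 0) le_rfl
      (g := fun _ ↦ 1) (continuousOn_const.locallyIntegrableOn measurableSet_Ici)
    simp only [one_mul] at hmul
    exact hmul.mono_set Ioi_subset_Ici_self
  have htop : (fun t : ℝ ↦ ∑ k ∈ Finset.Icc 1 ⌊t⌋₊, f k) =O[atTop] fun t ↦ t ^ (-(-r)) := by
    rw [neg_neg]
    refine (hf.comp_tendsto (tendsto_nat_floor_atTop (α := ℝ))).trans (IsBigO.of_bound 1 ?_)
    filter_upwards [eventually_ge_atTop 0] with t ht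
    rw [Function.comp_apply, one_mul, Real.norm_of_nonneg (by positivity),
      Real.norm_of_nonneg (by positivity)]
    exact Real.rpow_le_rpow (by positivity) (Nat.floor_le ht) hr
  have hbot : (fun t : ℝ ↦ ∑ k ∈ Finset.Icc 1 ⌊t⌋₊, f k) =O[𝓝[>] 0]
      fun t ↦ t ^ (-(s.re - 1)) := by
    refine (isBigO_zero _ _).congr' ?_ EventuallyEq.rfl
    filter_upwards [mem_nhdsWithin_of_mem_nhds (Iio_mem_nhds one_pos)] with t ht
    simp [Nat.floor_eq_zero.2 (Set.mem_Iio.1 ht)]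
  exact mellin_differentiableAt_of_isBigO_rpow hloc htop hs hbot (sub_one_lt _)

theorem LSeries_eq_mul_mellin_sum_floor {f : ℕ → ℂ} {r : ℝ} (hr : 0 ≤ r)
    (hf : (fun n ↦ ∑ k ∈ Finset.Icc 1 n, f k) =O[atTop] fun n ↦ (n : ℝ) ^ r) {s : ℂ}
    (hs : r < s.re) (hfs : LSeriesSummable f s) :
    LSeries f s = s * mellin (fun t : ℝ ↦ ∑ k ∈ Finset.Icc 1 ⌊t⌋₊, f k) (-s) := by
  rw [LSeries_eq_mul_integral f hr hs hfs hf, mellin]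
  congr 1
  rw [setIntegral_eq_of_subset_of_ae_sdiff_eq_zero (s := Ioi 1) nullMeasurableSet_Ioi
    (Ioi_subset_Ioi zero_le_one)]
  · refine setIntegral_congr_fun measurableSet_Ioi fun t _ ↦ ?_
    rw [smul_eq_mul, mul_comm, neg_add']
  · filter_upwards [compl_mem_ae_iff.2 (measure_singleton (μ := volume) (1 : ℝ))] with t ht₁ ht
    have ht_lt : t < 1 := lt_of_le_of_ne (not_lt.1 ht.2) ht₁
    simp [Nat.floor_eq_zero.2 ht_lt]

theorem exists_differentiableOn_eq_LSeries {f : ℕ → ℂ} {r : ℝ} (hr : 0 ≤ r)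
    (hf : (fun n ↦ ∑ k ∈ Finset.Icc 1 n, f k) =O[atTop] fun n ↦ (n : ℝ) ^ r) :
    ∃ H : ℂ → ℂ, DifferentiableOn ℂ H {s | r < s.re} ∧
      ∀ s : ℂ, r < s.re → LSeriesSummable f s → LSeries f s = H s := by
  refine ⟨fun s ↦ s * mellin (fun t : ℝ ↦ ∑ k ∈ Finset.Icc 1 ⌊t⌋₊, f k) (-s), fun s hs ↦ ?_,
    fun s ↦ LSeries_eq_mul_mellin_sum_floor hr hf⟩
  have hmellin := differentiableAt_mellin_sum_floor hr hf (s := -s) (by simpa using hs)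
  exact (differentiableAt_id.mul (hmellin.comp s differentiableAt_id.neg)).differentiableWithinAt

end LSeriesContinuation

section DedekindZetaContinuation

open Asymptotics Module Topology Ideal NumberField
open scoped nonZeroDivisors

variable (K : Type*) [Field K] [NumberField K]

theorem sum_card_absNorm_eq (n : ℕ) :
    ∑ k ∈ Finset.Icc 1 n, Nat.card {I : Ideal (𝓞 K) // absNorm I = k} =
      Nat.card {I : (Ideal (𝓞 K))⁰ // absNorm (I : Ideal (𝓞 K)) ≤ n} := by
  have hIcc : Finset.Icc 1 n = Finset.Ioc 0 n := Finset.Icc_succ_left_eq_Ioc _ _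
  have hzero : 1 = Nat.card {I : Ideal (𝓞 K) // absNorm I = 0} := by
    simp [Ideal.absNorm_eq_zero_iff]
  rw [← add_left_inj 1, ← card_norm_le_eq_card_norm_le_add_one, hIcc, hzero,
    Finset.sum_Ioc_add_eq_sum_Icc n.zero_le,
    ← Finset.card_preimage_eq_sum_card_image_eq (fun k _ ↦ finite_setOfPred_absNorm_eq k)]
  simp [Set.coe_eq_subtype]

theorem sum_card_absNorm_sub_residue_isBigO :
    (fun n : ℕ ↦ ∑ k ∈ Finset.Icc 1 n, ((Nat.card {I : Ideal (𝓞 K) // absNorm I = k} : ℝ) -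
      dedekindZeta_residue K)) =O[atTop] fun n ↦ (n : ℝ) ^ (1 - (finrank ℚ K : ℝ)⁻¹) := by
  refine ((card_absNorm_le_sub_isBigO K).comp_tendsto
    (tendsto_natCast_atTop_atTop (R := ℝ))).congr_left fun n ↦ ?_
  simp only [Function.comp_apply, Nat.cast_le]
  rw [← sum_card_absNorm_eq, Finset.sum_sub_distrib]
  simp [mul_comm]

theorem LSeriesSummable_card_absNorm {s : ℂ} (hs : 1 < s.re) :
    LSeriesSummable (fun n ↦ (Nat.card {I : Ideal (𝓞 K) // absNorm I = n} : ℂ)) s := by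
  have hlim := (Ideal.tendsto_norm_le_div_atTop₀ K).comp (tendsto_natCast_atTop_atTop (R := ℝ))
  have hO : (fun n : ℕ ↦ ∑ k ∈ Finset.Icc 1 n, (Nat.card {I : Ideal (𝓞 K) // absNorm I = k} : ℝ))
      =O[atTop] fun n ↦ (n : ℝ) ^ (1 : ℝ) := by
    refine ((hlim.isBigO_one ℝ).mul (isBigO_refl (fun n : ℕ ↦ (n : ℝ)) atTop)).congr' ?_
      (.of_eq <| funext fun n ↦ by rw [one_mul, Real.rpow_one])
    filter_upwards [eventually_ne_atTop 0] with n hn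
    simp only [Function.comp_apply, Nat.cast_le]
    rw [← sum_card_absNorm_eq, Nat.cast_sum]
    field_simp
  simpa using LSeriesSummable_of_sum_norm_bigO_and_nonneg hO (fun _ ↦ Nat.cast_nonneg _)
    zero_le_one hs

theorem exists_differentiableOn_dedekindZeta_sub_riemannZeta :
    ∃ H : ℂ → ℂ, DifferentiableOn ℂ H {s | 1 - (finrank ℚ K : ℝ)⁻¹ < s.re} ∧
      ∀ s : ℂ, 1 < s.re → dedekindZeta K s - dedekindZeta_residue K * riemannZeta s = H s := by
  set κ := dedekindZeta_residue K
  have hr : 0 ≤ 1 - (finrank ℚ K : ℝ)⁻¹ :=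
    sub_nonneg.mpr (inv_le_one_of_one_le₀ (mod_cast finrank_pos (R := ℚ) (M := K)))
  have hr₁ : 1 - (finrank ℚ K : ℝ)⁻¹ ≤ 1 := sub_le_self _ (by positivity)
  obtain ⟨H, hH, hHeq⟩ := exists_differentiableOn_eq_LSeries
    (f := (fun n ↦ (Nat.card {I : Ideal (𝓞 K) // absNorm I = n} : ℂ)) - (κ : ℂ) • 1) hr (by
      refine .of_norm_left ((sum_card_absNorm_sub_residue_isBigO K).norm_left.congr_left fun n ↦ ?_)
      rw [← Complex.norm_real]
      push_cast
      simp [κ])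
  refine ⟨H, hH, fun s hs ↦ ?_⟩
  have hcount := LSeriesSummable_card_absNorm K hs
  have hone : LSeriesSummable ((κ : ℂ) • 1) s := (LSeriesSummable_one_iff.2 hs).smul (κ : ℂ)
  rw [← hHeq s (hr₁.trans_lt hs) (hcount.sub hone), LSeries_sub hcount hone, LSeries_smul,
    LSeries_one_eq_riemannZeta hs]
  rfl

theorem exists_differentiableOn_sub_one_mul_dedekindZeta :
    ∃ Z : ℂ → ℂ, DifferentiableOn ℂ Z {s | 1 - (finrank ℚ K : ℝ)⁻¹ < s.re} ∧ Z 1 ≠ 0 ∧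
      ∀ s : ℂ, 1 < s.re → (s - 1) * dedekindZeta K s = Z s := by
  obtain ⟨H, hH, hHeq⟩ := exists_differentiableOn_dedekindZeta_sub_riemannZeta K
  refine ⟨fun s ↦ dedekindZeta_residue K * riemannZeta₁ s + (s - 1) * H s, ?_, ?_, fun s hs ↦ ?_⟩
  · exact (differentiable_riemannZeta₁.const_mul _).differentiableOn.add
      ((differentiable_id.sub_const 1).differentiableOn.mul hH)
  · simpa using dedekindZeta_residue_ne_zero K
  · have hs₁ : s ≠ 1 := by
      rintro rfl
      simp at hs
    simp only [← hHeq s hs, riemannZeta_eq_inv_sub_mul hs₁]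
    field_simp [sub_ne_zero.2 hs₁]
    ring

end DedekindZetaContinuation

section FiberSums

variable {ι κ E : Type*} {φ : ι → κ} [NormedAddCommGroup E]

theorem summable_norm_comp_iff (hφ : ∀ n, Finite {i // φ i = n}) (w : κ → E) :
    Summable (fun i ↦ ‖w (φ i)‖) ↔ Summable fun n ↦ (Nat.card {i // φ i = n} : ℝ) * ‖w n‖ := by
  rw [← (Equiv.sigmaFiberEquiv φ).summable_iff,
    summable_sigma_of_nonneg (fun _ ↦ by exact norm_nonneg _)]
  have hconst (n : κ) (i : {i // φ i = n}) :
      ((fun i ↦ ‖w (φ i)‖) ∘ Equiv.sigmaFiberEquiv φ) ⟨n, i⟩ = ‖w n‖ := by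
    simp [Equiv.sigmaFiberEquiv, i.2]
  simp_rw [hconst, tsum_const, nsmul_eq_mul]
  exact and_iff_right fun n ↦ Summable.of_finite

theorem tsum_comp_eq_tsum_card_nsmul [CompleteSpace E] {w : κ → E}
    (hw : Summable fun i ↦ ‖w (φ i)‖) :
    ∑' i, w (φ i) = ∑' n, Nat.card {i // φ i = n} • w n := by
  rw [← (Equiv.sigmaFiberEquiv φ).tsum_eq, Summable.tsum_sigma
    (f := fun i ↦ w (φ (Equiv.sigmaFiberEquiv φ i)))
    ((Equiv.sigmaFiberEquiv φ).summable_iff.2 hw.of_norm)]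
  have hconst (n : κ) (i : {i // φ i = n}) : w (φ (Equiv.sigmaFiberEquiv φ ⟨n, i⟩)) = w n := by
    simp [Equiv.sigmaFiberEquiv, i.2]
  simp_rw [hconst, tsum_const]

end FiberSums

section CoprimeIdeals

open IsDedekindDomain

variable {R : Type*} [CommRing R]

/-- The set of ideals divisible by no prime of the finite set `T`; the sum of `N(I)⁻ˢ` over it is
the Dedekind zeta function with the Euler factors at `T` removed. -/
def idealsCoprimeTo (T : Finset (HeightOneSpectrum R)) : Set (Ideal R) :=
  {I | ∀ v ∈ T, ¬ v.asIdeal ∣ I}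

theorem idealsCoprimeTo_empty : idealsCoprimeTo (∅ : Finset (HeightOneSpectrum R)) = Set.univ := by
  simp [idealsCoprimeTo]

theorem disjoint_idealsCoprimeTo_insert_image (T : Finset (HeightOneSpectrum R))
    (v : HeightOneSpectrum R) (A : Set (Ideal R)) :
    Disjoint (idealsCoprimeTo (insert v T)) ((v.asIdeal * ·) '' A) := by
  rw [Set.disjoint_left]
  rintro _ hI ⟨J, -, rfl⟩
  exact hI v (Finset.mem_insert_self _ _) (dvd_mul_right _ _)

theorem top_mem_idealsCoprimeTo (T : Finset (HeightOneSpectrum R)) : ⊤ ∈ idealsCoprimeTo T :=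
  fun v _ hv ↦ v.isPrime.ne_top (top_le_iff.1 (Ideal.le_of_dvd hv))

variable [IsDedekindDomain R]

theorem idealsCoprimeTo_eq_insert_union_image {T : Finset (HeightOneSpectrum R)}
    {v : HeightOneSpectrum R} (hv : v ∉ T) :
    idealsCoprimeTo T = idealsCoprimeTo (insert v T) ∪ (v.asIdeal * ·) '' idealsCoprimeTo T := by
  ext I
  simp only [idealsCoprimeTo, Set.mem_union, Set.mem_ofPred_eq, Finset.mem_insert,
    forall_eq_or_imp, Set.mem_image]
  constructor
  · intro hI
    by_cases hvI : v.asIdeal ∣ I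
    · obtain ⟨J, rfl⟩ := hvI
      exact .inr ⟨J, fun w hw hwJ ↦ hI w hw (hwJ.mul_left _), rfl⟩
    · exact .inl ⟨hvI, hI⟩
  · rintro (⟨-, hI⟩ | ⟨J, hJ, rfl⟩)
    · exact hI
    · intro w hw hwvJ
      rcases w.prime.dvd_or_dvd hwvJ with hwv | hwJ
      · have hwv_eq : w = v :=
          HeightOneSpectrum.ext (associated_iff_eq.1 (w.prime.associated_of_dvd v.prime hwv))
        exact hv (hwv_eq ▸ hw)
      · exact hJ w hw hwJ

theorem eventually_notMem_idealsCoprimeTo {I : Ideal R} (hbot : I ≠ ⊥) (htop : I ≠ ⊤) :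
    ∀ᶠ T in atTop, I ∉ idealsCoprimeTo T := by
  obtain ⟨M, hM, hIM⟩ := I.exists_le_maximal htop
  have hM₀ : M ≠ ⊥ := ne_bot_of_le_ne_bot hbot hIM
  filter_upwards [eventually_ge_atTop {⟨M, hM.isPrime, hM₀⟩}] with T hT hI
  exact hI _ (hT (Finset.mem_singleton_self _)) (Ideal.dvd_iff_le.2 hIM)

end CoprimeIdeals

section DedekindZetaEulerProduct

open Topology Ideal IsDedekindDomain NumberField

variable {K : Type*} [Field K] [NumberField K]

/-- The absolute norm of a prime ideal of the ring of integers. -/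
noncomputable def primeNorm (v : HeightOneSpectrum (𝓞 K)) : ℕ := absNorm v.asIdeal

theorem summable_norm_absNorm_cpow {s : ℂ} (hs : 1 < s.re) :
    Summable fun I : Ideal (𝓞 K) ↦ ‖(absNorm I : ℂ) ^ (-s)‖ := by
  refine (summable_norm_comp_iff finite_setOfPred_absNorm_eq fun n : ℕ ↦ (n : ℂ) ^ (-s)).2 ?_
  refine (LSeriesSummable_card_absNorm K hs).norm.congr fun n ↦ ?_
  rcases eq_or_ne n 0 with rfl | hn
  · simp [Complex.ne_zero_of_one_lt_re hs]
  · rw [LSeries.term_of_ne_zero hn, Complex.cpow_neg, norm_div, norm_inv, div_eq_mul_inv,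
      Complex.norm_natCast]

theorem tsum_absNorm_cpow {s : ℂ} (hs : 1 < s.re) :
    ∑' I : Ideal (𝓞 K), (absNorm I : ℂ) ^ (-s) = dedekindZeta K s := by
  rw [tsum_comp_eq_tsum_card_nsmul (w := fun n : ℕ ↦ (n : ℂ) ^ (-s))
    (summable_norm_absNorm_cpow hs)]
  refine tsum_congr fun n ↦ ?_
  rcases eq_or_ne n 0 with rfl | hn
  · simp [Complex.ne_zero_of_one_lt_re hs]
  · rw [nsmul_eq_mul, LSeries.term_of_ne_zero hn, Complex.cpow_neg, div_eq_mul_inv]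

theorem tsum_absNorm_cpow_idealsCoprimeTo_insert {s : ℂ} (hs : 1 < s.re)
    {T : Finset (HeightOneSpectrum (𝓞 K))} {v : HeightOneSpectrum (𝓞 K)} (hv : v ∉ T) :
    ∑' I : idealsCoprimeTo (insert v T), (absNorm (I : Ideal (𝓞 K)) : ℂ) ^ (-s) =
      (1 - (primeNorm v : ℂ) ^ (-s)) *
        ∑' I : idealsCoprimeTo T, (absNorm (I : Ideal (𝓞 K)) : ℂ) ^ (-s) := by
  let f (I : Ideal (𝓞 K)) : ℂ := (absNorm I : ℂ) ^ (-s)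
  have hf : Summable f := (summable_norm_absNorm_cpow hs).of_norm
  have hsplit : ∑' I : idealsCoprimeTo T, f I = ∑' I : idealsCoprimeTo (insert v T), f I +
      ∑' I : ((v.asIdeal * ·) '' idealsCoprimeTo T), f I := by
    conv_lhs => rw [idealsCoprimeTo_eq_insert_union_image hv]
    exact (hf.subtype _).tsum_union_disjoint (f := f)
      (disjoint_idealsCoprimeTo_insert_image T v _) (hf.subtype _)
  have hmultiples : ∑' I : ((v.asIdeal * ·) '' idealsCoprimeTo T), f I =
      (primeNorm v : ℂ) ^ (-s) * ∑' I : idealsCoprimeTo T, f I := by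
    rw [tsum_image f (mul_right_injective₀ v.ne_bot).injOn, ← tsum_mul_left]
    refine tsum_congr fun I ↦ ?_
    simp only [f, map_mul, Nat.cast_mul, Complex.natCast_mul_natCast_cpow, primeNorm]
  linear_combination -hsplit - hmultiples

theorem tsum_absNorm_cpow_idealsCoprimeTo {s : ℂ} (hs : 1 < s.re)
    (T : Finset (HeightOneSpectrum (𝓞 K))) :
    ∑' I : idealsCoprimeTo T, (absNorm (I : Ideal (𝓞 K)) : ℂ) ^ (-s) =
      (∏ v ∈ T, (1 - (primeNorm v : ℂ) ^ (-s))) * dedekindZeta K s := by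
  induction T using Finset.induction_on with
  | empty =>
    rw [idealsCoprimeTo_empty, tsum_univ fun I : Ideal (𝓞 K) ↦ (absNorm I : ℂ) ^ (-s),
      tsum_absNorm_cpow hs, Finset.prod_empty, one_mul]
  | insert v T hv ih =>
    rw [tsum_absNorm_cpow_idealsCoprimeTo_insert hs hv, ih, Finset.prod_insert hv, mul_assoc]

theorem tendsto_tsum_absNorm_cpow_idealsCoprimeTo {s : ℂ} (hs : 1 < s.re) :
    Tendsto (fun T : Finset (HeightOneSpectrum (𝓞 K)) ↦
      ∑' I : idealsCoprimeTo T, (absNorm (I : Ideal (𝓞 K)) : ℂ) ^ (-s)) atTop (𝓝 1) := by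
  have hlim : ∑' I : Ideal (𝓞 K), (if I = ⊤ then (1 : ℂ) else 0) = 1 := tsum_ite_eq _ _
  rw [← hlim]
  simp_rw [tsum_subtype _ fun I : Ideal (𝓞 K) ↦ (absNorm I : ℂ) ^ (-s)]
  refine tendsto_tsum_of_dominated_convergence (summable_norm_absNorm_cpow (K := K) hs)
    (fun I ↦ tendsto_const_nhds.congr' ?_) (.of_forall fun T I ↦ norm_indicator_le_norm_self _ _)
  rcases eq_or_ne I ⊤ with rfl | htop
  · filter_upwards with T
    simp [top_mem_idealsCoprimeTo T]
  rcases eq_or_ne I ⊥ with rfl | hbot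
  · filter_upwards with T
    simp [htop, Set.indicator_apply, Complex.ne_zero_of_one_lt_re hs]
  · filter_upwards [eventually_notMem_idealsCoprimeTo hbot htop] with T hT
    rw [if_neg htop, Set.indicator_of_notMem hT]

theorem two_le_primeNorm (v : HeightOneSpectrum (𝓞 K)) : 2 ≤ primeNorm v :=
  (Nat.two_le_iff _).2
    ⟨absNorm_eq_zero_iff.not.2 v.ne_bot, absNorm_eq_one_iff.not.2 v.isPrime.ne_top⟩

theorem norm_primeNorm_cpow (s : ℂ) (v : HeightOneSpectrum (𝓞 K)) :
    ‖(primeNorm v : ℂ) ^ (-s)‖ = (primeNorm v : ℝ) ^ (-s.re) := by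
  rw [Complex.norm_natCast_cpow_of_pos (zero_lt_two.trans_le (two_le_primeNorm v)), Complex.neg_re]

theorem norm_primeNorm_cpow_lt_one {s : ℂ} (hs : 0 < s.re) (v : HeightOneSpectrum (𝓞 K)) :
    ‖(primeNorm v : ℂ) ^ (-s)‖ < 1 := by
  rw [norm_primeNorm_cpow]
  exact Real.rpow_lt_one_of_one_lt_of_neg (mod_cast two_le_primeNorm v) (neg_neg_of_pos hs)

theorem one_sub_primeNorm_cpow_mem_slitPlane {s : ℂ} (hs : 0 < s.re)
    (v : HeightOneSpectrum (𝓞 K)) : 1 - (primeNorm v : ℂ) ^ (-s) ∈ Complex.slitPlane := by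
  rw [sub_eq_add_neg]
  exact Complex.mem_slitPlane_of_norm_lt_one (by
    simpa only [norm_neg] using norm_primeNorm_cpow_lt_one hs v)

theorem summable_norm_primeNorm_cpow {s : ℂ} (hs : 1 < s.re) :
    Summable fun v : HeightOneSpectrum (𝓞 K) ↦ ‖(primeNorm v : ℂ) ^ (-s)‖ :=
  (summable_norm_absNorm_cpow hs).comp_injective
    (i := fun v : HeightOneSpectrum (𝓞 K) ↦ v.asIdeal) fun _ _ h ↦ HeightOneSpectrum.ext h

theorem summable_log_one_sub_primeNorm_cpow {s : ℂ} (hs : 1 < s.re) :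
    Summable fun v : HeightOneSpectrum (𝓞 K) ↦ Complex.log (1 - (primeNorm v : ℂ) ^ (-s)) := by
  simpa only [← sub_eq_add_neg] using
    Complex.summable_log_one_add_of_summable (summable_norm_primeNorm_cpow (K := K) hs).of_norm.neg

theorem dedekindZeta_eq_exp_tsum {s : ℂ} (hs : 1 < s.re) :
    dedekindZeta K s = Complex.exp
      (∑' v : HeightOneSpectrum (𝓞 K), -Complex.log (1 - (primeNorm v : ℂ) ^ (-s))) := by
  have hprod : Tendsto (fun T : Finset (HeightOneSpectrum (𝓞 K)) ↦
      ∏ v ∈ T, (1 - (primeNorm v : ℂ) ^ (-s))) atTop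
      (𝓝 (Complex.exp (∑' v : HeightOneSpectrum (𝓞 K),
        Complex.log (1 - (primeNorm v : ℂ) ^ (-s))))) := by
    refine ((Complex.continuous_exp.tendsto _).comp
      (summable_log_one_sub_primeNorm_cpow hs).hasSum).congr fun T ↦ ?_
    rw [Function.comp_apply, Complex.exp_sum]
    exact Finset.prod_congr rfl fun v _ ↦ Complex.exp_log <| Complex.slitPlane_ne_zero <|
      one_sub_primeNorm_cpow_mem_slitPlane (zero_lt_one.trans hs) v
  have hone := tendsto_tsum_absNorm_cpow_idealsCoprimeTo (K := K) hs
  simp_rw [tsum_absNorm_cpow_idealsCoprimeTo hs] at hone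
  rw [tsum_neg, Complex.exp_neg]
  exact eq_inv_of_mul_eq_one_right (tendsto_nhds_unique (hprod.mul_const _) hone)

end DedekindZetaEulerProduct

section DegreeOnePrimes

open Module Ideal IsDedekindDomain NumberField

variable {K : Type*} [Field K] [NumberField K]

/-- The rational prime below a prime ideal of the ring of integers. -/
noncomputable def primeBelow (v : HeightOneSpectrum (𝓞 K)) : ℕ := absNorm (under ℤ v.asIdeal)

omit [NumberField K] in
theorem prime_primeBelow (v : HeightOneSpectrum (𝓞 K)) : (primeBelow v).Prime :=
  have := v.isPrime
  have : NeZero v.asIdeal := ⟨v.ne_bot⟩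
  Nat.absNorm_under_prime v.asIdeal

theorem exists_primeNorm_eq_pow (v : HeightOneSpectrum (𝓞 K)) :
    ∃ f, f ≠ 0 ∧ primeNorm v = primeBelow v ^ f := by
  have : v.asIdeal.LiesOver (span {(primeBelow v : ℤ)}) := Int.liesOver_span_absNorm v.asIdeal
  have hpow := absNorm_eq_pow_inertiaDeg' v.asIdeal (prime_primeBelow v)
  refine ⟨_, fun hf ↦ ?_, hpow⟩
  have htwo := two_le_primeNorm v
  rw [primeNorm, hpow, hf, pow_zero] at htwo
  exact absurd htwo (by norm_num)

theorem primeBelow_le_primeNorm (v : HeightOneSpectrum (𝓞 K)) : primeBelow v ≤ primeNorm v := by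
  obtain ⟨f, hf, hpow⟩ := exists_primeNorm_eq_pow v
  rw [hpow]
  exact Nat.le_self_pow hf _

theorem sq_primeBelow_le_primeNorm {v : HeightOneSpectrum (𝓞 K)} (hv : ¬ (primeNorm v).Prime) :
    primeBelow v ^ 2 ≤ primeNorm v := by
  obtain ⟨f, hf, hpow⟩ := exists_primeNorm_eq_pow v
  rw [hpow] at hv ⊢
  have hf₁ : f ≠ 1 := by
    rintro rfl
    exact hv ((pow_one (primeBelow v)).symm ▸ prime_primeBelow v)
  exact Nat.pow_le_pow_right (prime_primeBelow v).pos ((Nat.two_le_iff f).2 ⟨hf, hf₁⟩)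

theorem primeBelow_eq_of_primeNorm_eq {v : HeightOneSpectrum (𝓞 K)} {p : ℕ} (hp : p.Prime)
    (hv : primeNorm v = p) : primeBelow v = p := by
  obtain ⟨f, hf, hpow⟩ := exists_primeNorm_eq_pow v
  rw [hv] at hpow
  exact (Nat.prime_dvd_prime_iff_eq (prime_primeBelow v) hp).1 (hpow ▸ dvd_pow_self _ hf)

omit [NumberField K] in
theorem asIdeal_mem_primesOver_primeBelow (v : HeightOneSpectrum (𝓞 K)) :
    v.asIdeal ∈ primesOver (span {(primeBelow v : ℤ)}) (𝓞 K) :=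
  ⟨v.isPrime, Int.liesOver_span_absNorm v.asIdeal⟩

omit [NumberField K] in
theorem exists_injective_primesOver (p : ℕ) :
    ∃ i : {v : HeightOneSpectrum (𝓞 K) // primeBelow v = p} → primesOver (span {(p : ℤ)}) (𝓞 K),
      Function.Injective i :=
  ⟨fun v ↦ ⟨v.1.asIdeal, by simpa only [v.2] using asIdeal_mem_primesOver_primeBelow v.1⟩,
    fun _ _ h ↦ Subtype.ext (HeightOneSpectrum.ext (Subtype.mk.inj h))⟩

theorem finite_primeBelow_eq (p : ℕ) :
    Finite {v : HeightOneSpectrum (𝓞 K) // primeBelow v = p} := by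
  obtain ⟨i, hi⟩ := exists_injective_primesOver (K := K) p
  have := (Algebra.QuasiFinite.finite_primesOver (S := 𝓞 K) (span {(p : ℤ)})).to_subtype
  exact .of_injective i hi

theorem card_primesOver_le_finrank {R : Type*} [CommRing R] [IsDomain R] (p : Ideal R) [p.IsPrime]
    (S : Type*) [CommRing S] [Algebra R S] [Module.Finite R S] [Module.Flat R S] :
    Nat.card (p.primesOver S) ≤ finrank R S := by
  have := (Algebra.QuasiFinite.finite_primesOver (S := S) p).fintype
  rw [← sum_ramification_inertia_eq_finrank p S, Nat.card_eq_fintype_card, Fintype.card_eq_sum_ones]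
  refine Finset.sum_le_sum fun q _ ↦ Nat.one_le_iff_ne_zero.2 ?_
  have := q.2.1
  exact mul_ne_zero (q.1.ramificationIdx_pos R).ne' (q.1.inertiaDeg_pos R).ne'

theorem card_primeBelow_eq_le_finrank (p : ℕ) :
    Nat.card {v : HeightOneSpectrum (𝓞 K) // primeBelow v = p} ≤ finrank ℚ K := by
  by_cases hp : p.Prime
  · obtain ⟨i, hi⟩ := exists_injective_primesOver (K := K) p
    have : Fact p.Prime := ⟨hp⟩
    have := (Algebra.QuasiFinite.finite_primesOver (S := 𝓞 K) (span {(p : ℤ)})).to_subtype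
    rw [← RingOfIntegers.rank K]
    exact (Nat.card_le_card_of_injective i hi).trans (card_primesOver_le_finrank _ _)
  · have : IsEmpty {v : HeightOneSpectrum (𝓞 K) // primeBelow v = p} :=
      ⟨fun v ↦ hp (v.2 ▸ prime_primeBelow v.1)⟩
    simp

theorem summable_primeBelow_rpow {r : ℝ} (hr : 1 < r) :
    Summable fun v : HeightOneSpectrum (𝓞 K) ↦ (primeBelow v : ℝ) ^ (-r) := by
  have hbound : Summable fun n : ℕ ↦ (Nat.card {v : HeightOneSpectrum (𝓞 K) // primeBelow v = n} :
      ℝ) * ‖(n : ℝ) ^ (-r)‖ := by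
    refine .of_nonneg_of_le (fun n ↦ by positivity) (fun n ↦ ?_)
      ((Real.summable_nat_rpow.2 (neg_lt_neg hr)).norm.mul_left (finrank ℚ K : ℝ))
    gcongr
    exact card_primeBelow_eq_le_finrank n
  exact ((summable_norm_comp_iff finite_primeBelow_eq fun n : ℕ ↦ (n : ℝ) ^ (-r)).2 hbound).of_norm

variable (K) in
/-- The number of prime ideals of norm `n` if `n` is prime, and zero otherwise. For a prime `n`
unramified in a Galois extension `K` this is `[K : ℚ]` if `n` splits completely and `0` if not. -/
noncomputable def degreeOneCount (n : ℕ) : ℕ :=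
  if n.Prime then Nat.card {v : HeightOneSpectrum (𝓞 K) // primeNorm v = n} else 0

theorem degreeOneCount_le_finrank (n : ℕ) : degreeOneCount K n ≤ finrank ℚ K := by
  unfold degreeOneCount
  split_ifs with hn
  · have := finite_primeBelow_eq (K := K) n
    exact (Nat.card_le_card_of_injective
      (fun v ↦ ⟨v.1, primeBelow_eq_of_primeNorm_eq hn v.2⟩)
      fun v w hvw ↦ Subtype.ext (congrArg (fun u ↦ u.1) hvw)).trans
        (card_primeBelow_eq_le_finrank n)
  · exact Nat.zero_le _

theorem LSeriesSummable_degreeOneCount {s : ℂ} (hs : 1 < s.re) :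
    LSeriesSummable (fun n ↦ (degreeOneCount K n : ℂ)) s := by
  refine LSeriesSummable_of_bounded_of_one_lt_re (m := finrank ℚ K) (fun n _ ↦ ?_) hs
  rw [Complex.norm_natCast]
  exact_mod_cast degreeOneCount_le_finrank n

end DegreeOnePrimes

section EulerRemainder

open Ideal IsDedekindDomain NumberField

variable {K : Type*} [Field K] [NumberField K]

/-- The Euler factor of `ζ_K` at `v` has logarithm `N(v)⁻ˢ + eulerRemainder s v` when `v` has degree
one and `eulerRemainder s v` otherwise; these remainders are summable beyond `Re s = 1`. -/
noncomputable def eulerRemainder (s : ℂ) (v : HeightOneSpectrum (𝓞 K)) : ℂ :=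
  -Complex.log (1 - (primeNorm v : ℂ) ^ (-s)) -
    if (primeNorm v).Prime then (primeNorm v : ℂ) ^ (-s) else 0

theorem norm_neg_log_one_sub_sub_self_le {z : ℂ} (hz : ‖z‖ ≤ 2 / 3) :
    ‖-Complex.log (1 - z) - z‖ ≤ 2 * ‖z‖ ^ 2 := by
  have hlog := Complex.norm_log_one_add_sub_self_le (z := -z) (by rw [norm_neg]; linarith)
  rw [norm_neg] at hlog
  have hinv : (1 - ‖z‖)⁻¹ ≤ 3 := by
    rw [inv_le_comm₀ (by linarith) (by norm_num)]
    linarith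
  calc ‖-Complex.log (1 - z) - z‖ = ‖Complex.log (1 + -z) - -z‖ := by
        rw [← norm_neg, ← sub_eq_add_neg]
        ring_nf
    _ ≤ ‖z‖ ^ 2 * (1 - ‖z‖)⁻¹ / 2 := hlog
    _ ≤ 2 * ‖z‖ ^ 2 := by nlinarith [sq_nonneg ‖z‖]

theorem norm_primeNorm_cpow_le_rpow {s : ℂ} {r : ℝ} (hs : r ≤ s.re)
    (v : HeightOneSpectrum (𝓞 K)) : ‖(primeNorm v : ℂ) ^ (-s)‖ ≤ (primeNorm v : ℝ) ^ (-r) := by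
  rw [norm_primeNorm_cpow]
  exact Real.rpow_le_rpow_of_exponent_le (mod_cast one_le_two.trans (two_le_primeNorm v))
    (neg_le_neg hs)

theorem norm_primeNorm_cpow_le_two_thirds {s : ℂ} (hs : 3 / 4 ≤ s.re)
    (v : HeightOneSpectrum (𝓞 K)) : ‖(primeNorm v : ℂ) ^ (-s)‖ ≤ 2 / 3 := by
  calc ‖(primeNorm v : ℂ) ^ (-s)‖ ≤ (primeNorm v : ℝ) ^ (-(3 / 4) : ℝ) :=
        norm_primeNorm_cpow_le_rpow hs v
    _ ≤ (2 : ℝ) ^ (-(3 / 4) : ℝ) :=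
        Real.rpow_le_rpow_of_nonpos two_pos (mod_cast two_le_primeNorm v) (by norm_num)
    _ ≤ 2 / 3 := by
        rw [← Real.rpow_le_rpow_iff (z := 4) (by positivity) (by norm_num) (by norm_num),
          ← Real.rpow_mul zero_le_two]
        norm_num

theorem sq_norm_primeNorm_cpow_le {s : ℂ} {r : ℝ} (hr : 0 ≤ r) (hs : r ≤ s.re)
    (v : HeightOneSpectrum (𝓞 K)) :
    ‖(primeNorm v : ℂ) ^ (-s)‖ ^ 2 ≤ (primeBelow v : ℝ) ^ (-(2 * r)) := by
  have hpos : (0 : ℝ) < primeBelow v := mod_cast (prime_primeBelow v).pos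
  calc ‖(primeNorm v : ℂ) ^ (-s)‖ ^ 2 ≤ ((primeNorm v : ℝ) ^ (-r)) ^ 2 := by
        gcongr
        exact norm_primeNorm_cpow_le_rpow hs v
    _ ≤ ((primeBelow v : ℝ) ^ (-r)) ^ 2 := by
        gcongr 1
        exact Real.rpow_le_rpow_of_nonpos hpos (mod_cast primeBelow_le_primeNorm v)
          (neg_nonpos.2 hr)
    _ = (primeBelow v : ℝ) ^ (-(2 * r)) := by
        rw [← Real.rpow_natCast, ← Real.rpow_mul hpos.le]
        ring_nf

theorem norm_primeNorm_cpow_le_of_not_prime {s : ℂ} {r : ℝ} (hr : 0 ≤ r) (hs : r ≤ s.re)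
    {v : HeightOneSpectrum (𝓞 K)} (hv : ¬ (primeNorm v).Prime) :
    ‖(primeNorm v : ℂ) ^ (-s)‖ ≤ (primeBelow v : ℝ) ^ (-(2 * r)) := by
  have hpos : (0 : ℝ) < primeBelow v := mod_cast (prime_primeBelow v).pos
  calc ‖(primeNorm v : ℂ) ^ (-s)‖ ≤ (primeNorm v : ℝ) ^ (-r) := norm_primeNorm_cpow_le_rpow hs v
    _ ≤ ((primeBelow v : ℝ) ^ 2) ^ (-r) :=
        Real.rpow_le_rpow_of_nonpos (by positivity) (mod_cast sq_primeBelow_le_primeNorm hv)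
          (neg_nonpos.2 hr)
    _ = (primeBelow v : ℝ) ^ (-(2 * r)) := by
        rw [← Real.rpow_natCast, ← Real.rpow_mul hpos.le]
        ring_nf

theorem norm_eulerRemainder_le {s : ℂ} (hs : 3 / 4 ≤ s.re) (v : HeightOneSpectrum (𝓞 K)) :
    ‖eulerRemainder s v‖ ≤ 3 * (primeBelow v : ℝ) ^ (-(2 * (3 / 4)) : ℝ) := by
  have hsq := sq_norm_primeNorm_cpow_le (by norm_num) hs v
  have hlog := norm_neg_log_one_sub_sub_self_le (norm_primeNorm_cpow_le_two_thirds hs v)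
  unfold eulerRemainder
  split_ifs with hv
  · linarith [Real.rpow_nonneg (primeBelow v).cast_nonneg (-(2 * (3 / 4)) : ℝ)]
  · have hlinear := norm_primeNorm_cpow_le_of_not_prime (by norm_num) hs hv
    rw [sub_zero, ← sub_add_cancel (-Complex.log _) ((primeNorm v : ℂ) ^ (-s))]
    exact (norm_add_le _ _).trans (by linarith)

theorem differentiableAt_eulerRemainder {s : ℂ} (hs : 0 < s.re) (v : HeightOneSpectrum (𝓞 K)) :
    DifferentiableAt ℂ (eulerRemainder · v) s := by
  have hne : (primeNorm v : ℂ) ≠ 0 := mod_cast (zero_lt_two.trans_le (two_le_primeNorm v)).ne'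
  have hcpow : DifferentiableAt ℂ (fun s : ℂ ↦ (primeNorm v : ℂ) ^ (-s)) s :=
    differentiableAt_id.neg.const_cpow (.inl hne)
  have hlog : DifferentiableAt ℂ (fun s : ℂ ↦ -Complex.log (1 - (primeNorm v : ℂ) ^ (-s))) s :=
    ((hcpow.const_sub 1).clog (one_sub_primeNorm_cpow_mem_slitPlane hs v)).neg
  unfold eulerRemainder
  split_ifs
  · exact hlog.sub hcpow
  · exact hlog.sub (differentiableAt_const 0)

variable (K) in
theorem differentiableOn_tsum_eulerRemainder :
    DifferentiableOn ℂ (fun s ↦ ∑' v : HeightOneSpectrum (𝓞 K), eulerRemainder s v)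
      {s | 3 / 4 < s.re} := by
  refine Complex.differentiableOn_tsum_of_summable_norm
    ((summable_primeBelow_rpow (K := K) (r := 2 * (3 / 4)) (by norm_num)).mul_left 3)
    (fun v s hs ↦ ?_) (isOpen_lt continuous_const Complex.continuous_re)
    fun v s hs ↦ norm_eulerRemainder_le (le_of_lt hs) v
  have hpos : 0 < s.re := lt_trans (by norm_num) hs
  exact (differentiableAt_eulerRemainder hpos v).differentiableWithinAt

theorem summable_norm_degreeOne_cpow {s : ℂ} (hs : 1 < s.re) :
    Summable fun v : HeightOneSpectrum (𝓞 K) ↦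
      ‖if (primeNorm v).Prime then (primeNorm v : ℂ) ^ (-s) else 0‖ := by
  refine .of_nonneg_of_le (fun _ ↦ norm_nonneg _) (fun v ↦ ?_) (summable_norm_primeNorm_cpow hs)
  split_ifs
  · exact le_rfl
  · exact norm_zero.trans_le (norm_nonneg _)

theorem LSeries_degreeOneCount_eq_tsum {s : ℂ} (hs : 1 < s.re) :
    LSeries (fun n ↦ (degreeOneCount K n : ℂ)) s = ∑' v : HeightOneSpectrum (𝓞 K),
      if (primeNorm v).Prime then (primeNorm v : ℂ) ^ (-s) else 0 := by
  rw [tsum_comp_eq_tsum_card_nsmul (w := fun n : ℕ ↦ if n.Prime then (n : ℂ) ^ (-s) else 0)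
    (summable_norm_degreeOne_cpow hs)]
  refine tsum_congr fun n ↦ ?_
  rcases eq_or_ne n 0 with rfl | hn
  · simp [Nat.not_prime_zero]
  · rw [LSeries.term_of_ne_zero hn, degreeOneCount]
    split_ifs
    · rw [nsmul_eq_mul, Complex.cpow_neg, div_eq_mul_inv]
    · simp

theorem dedekindZeta_eq_exp_LSeries_add {s : ℂ} (hs : 1 < s.re) :
    dedekindZeta K s = Complex.exp (LSeries (fun n ↦ (degreeOneCount K n : ℂ)) s +
      ∑' v : HeightOneSpectrum (𝓞 K), eulerRemainder s v) := by
  have hdegreeOne := (summable_norm_degreeOne_cpow (K := K) hs).of_norm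
  have hremainder : Summable fun v : HeightOneSpectrum (𝓞 K) ↦ eulerRemainder s v :=
    (summable_log_one_sub_primeNorm_cpow hs).neg.sub hdegreeOne
  rw [dedekindZeta_eq_exp_tsum hs, LSeries_degreeOneCount_eq_tsum hs,
    ← hdegreeOne.tsum_add hremainder]
  simp only [eulerRemainder, add_sub_cancel]

end EulerRemainder

section NonvanishingOnLine

open Asymptotics Complex LSeries Topology

theorem three_four_one_re_nonneg {z : ℂ} (hz : ‖z‖ = 1) : 0 ≤ 3 + 4 * z.re + (z ^ 2).re := by
  have hre : (z ^ 2).re = 2 * z.re ^ 2 - 1 := by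
    have him := Complex.sq_norm_sub_sq_re z
    rw [hz] at him
    rw [sq, mul_re]
    linarith
  rw [hre]
  linarith [sq_nonneg (1 + z.re)]

theorem term_ofReal_add (c : ℕ → ℝ) (x : ℝ) (w : ℂ) {n : ℕ} (hn : n ≠ 0) :
    term (fun n ↦ (c n : ℂ)) (x + w) n = ((c n * (n : ℝ) ^ (-x) : ℝ) : ℂ) * (n : ℂ) ^ (-w) := by
  rw [term_of_ne_zero hn, div_eq_mul_inv, ← cpow_neg, neg_add, cpow_add _ _ (mod_cast hn),
    ofReal_mul, ofReal_cpow n.cast_nonneg, ofReal_natCast, ofReal_neg, mul_assoc]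

variable {c : ℕ → ℝ}

theorem three_four_one_re_LSeries_nonneg (hc : ∀ n, 0 ≤ c n)
    (habs : abscissaOfAbsConv (fun n ↦ (c n : ℂ)) ≤ 1) {x : ℝ} (hx : 1 < x) (y : ℝ) :
    0 ≤ 3 * (LSeries (fun n ↦ (c n : ℂ)) x).re +
      4 * (LSeries (fun n ↦ (c n : ℂ)) (x + y * I)).re +
      (LSeries (fun n ↦ (c n : ℂ)) (x + 2 * (y * I))).re := by
  have hsum {s : ℂ} (hs : s.re = x) := hasSum_re (LSeriesSummable_of_abscissaOfAbsConv_lt_re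
    (habs.trans_lt (by rw [hs]; exact_mod_cast hx))).hasSum
  refine ((((hsum (s := x) (by simp)).mul_left 3).add
    ((hsum (s := x + y * I) (by simp)).mul_left 4)).add
    (hsum (s := x + 2 * (y * I)) (by simp))).nonneg fun n ↦ ?_
  rcases eq_or_ne n 0 with rfl | hn
  · simp
  have hnorm : ‖(n : ℂ) ^ (-(y * I))‖ = 1 := by
    simp [norm_natCast_cpow_of_pos (Nat.pos_of_ne_zero hn)]
  have hsq : (n : ℂ) ^ (-(2 * (y * I))) = ((n : ℂ) ^ (-(y * I))) ^ 2 := by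
    rw [← cpow_nat_mul, Nat.cast_ofNat, mul_neg]
  have hreal : term (fun n ↦ (c n : ℂ)) x n = ((c n * (n : ℝ) ^ (-x) : ℝ) : ℂ) := by
    simpa using term_ofReal_add c x 0 hn
  rw [hreal, term_ofReal_add c x _ hn, term_ofReal_add c x _ hn, hsq, re_ofReal_mul, re_ofReal_mul,
    ofReal_re]
  have hcoeff : 0 ≤ c n * (n : ℝ) ^ (-x) := mul_nonneg (hc n) (by positivity)
  linarith [mul_nonneg hcoeff (three_four_one_re_nonneg hnorm)]

theorem one_le_norm_exp_LSeries_pow_mul (hc : ∀ n, 0 ≤ c n)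
    (habs : abscissaOfAbsConv (fun n ↦ (c n : ℂ)) ≤ 1) {x : ℝ} (hx : 1 < x) (y : ℝ) :
    1 ≤ ‖exp (LSeries (fun n ↦ (c n : ℂ)) x)‖ ^ 3 *
      ‖exp (LSeries (fun n ↦ (c n : ℂ)) (x + y * I))‖ ^ 4 *
      ‖exp (LSeries (fun n ↦ (c n : ℂ)) (x + 2 * (y * I)))‖ := by
  simp only [norm_exp, ← Real.exp_nat_mul, ← Real.exp_add, Real.one_le_exp_iff]
  exact_mod_cast three_four_one_re_LSeries_nonneg hc habs hx y

theorem ne_zero_of_mul_pow_three_le {Y : ℂ → ℂ} {w : ℂ} (hY₀ : ContinuousAt Y 1)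
    (hY₁ : DifferentiableAt ℂ Y (1 + w)) (hY₂ : ContinuousAt Y (1 + 2 * w)) {C : ℝ} (hC : 0 < C)
    (hle : ∀ᶠ x : ℝ in 𝓝[>] 0,
      C * x ^ 3 ≤ ‖Y (1 + x)‖ ^ 3 * ‖Y (1 + x + w)‖ ^ 4 * ‖Y (1 + x + 2 * w)‖) :
    Y (1 + w) ≠ 0 := by
  intro hzero
  have hcurve (u : ℂ) : Tendsto (fun x : ℝ ↦ 1 + x + u) (𝓝[>] 0) (𝓝 (1 + u)) := by
    have hcont : Continuous fun x : ℝ ↦ 1 + x + u := by fun_prop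
    simpa using (hcont.tendsto 0).mono_left nhdsWithin_le_nhds
  have hbdd {u : ℂ} (hu : ContinuousAt Y (1 + u)) :
      (fun x : ℝ ↦ Y (1 + x + u)) =O[𝓝[>] 0] fun _ ↦ (1 : ℝ) :=
    (hu.tendsto.comp (hcurve u)).isBigO_one ℝ
  have hsmall : (fun x : ℝ ↦ Y (1 + x + w)) =O[𝓝[>] 0] fun x ↦ x := by
    refine (hY₁.isBigO_sub.comp_tendsto (hcurve w)).congr' (.of_eq ?_) (.of_eq ?_) |>.trans
      (isBigO_of_le _ fun x ↦ (norm_real x).le)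
    · ext x
      simp [hzero]
    · ext x
      simp
  have hprod := ((((hbdd (u := 0) (by simpa using hY₀)).norm_left.pow 3).mul
    (hsmall.norm_left.pow 4)).mul (hbdd hY₂).norm_left)
  have hpow : (fun x : ℝ ↦ x ^ 3) =O[𝓝[>] 0] fun x ↦ x ^ 4 := by
    refine IsBigO.trans (.of_bound C⁻¹ ?_) (hprod.congr_right fun x ↦ by ring)
    filter_upwards [hle, self_mem_nhdsWithin] with x hx hx₀
    have hx₀ : 0 < x := hx₀
    rw [← div_eq_inv_mul, le_div_iff₀' hC, Real.norm_of_nonneg (by positivity),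
      Real.norm_of_nonneg (by positivity), add_zero]
    exact hx
  have hlittle : (fun x : ℝ ↦ x ^ 4) =o[𝓝[>] 0] fun x ↦ x ^ 3 :=
    (isLittleO_pow_pow (by norm_num)).mono nhdsWithin_le_nhds
  refine hlittle.not_isBigO (Eventually.frequently ?_) hpow
  filter_upwards [self_mem_nhdsWithin] with x hx
  exact pow_ne_zero 4 (ne_of_gt hx)

variable {Y : ℂ → ℂ} {r : ℝ}

theorem ne_zero_of_eq_sub_one_mul_exp_LSeries (hc : ∀ n, 0 ≤ c n)
    (habs : abscissaOfAbsConv (fun n ↦ (c n : ℂ)) ≤ 1) (hr : r < 1)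
    (hY : DifferentiableOn ℂ Y {s | r < s.re}) (hY₁ : Y 1 ≠ 0)
    (hYexp : ∀ s : ℂ, 1 < s.re → Y s = (s - 1) * exp (LSeries (fun n ↦ (c n : ℂ)) s)) (y : ℝ) :
    Y (1 + y * I) ≠ 0 := by
  rcases eq_or_ne y 0 with rfl | hy
  · simpa using hY₁
  have hdiff {s : ℂ} (hs : s.re = 1) : DifferentiableAt ℂ Y s :=
    hY.differentiableAt ((isOpen_lt continuous_const continuous_re).mem_nhds
      (by rwa [Set.mem_ofPred_eq, hs]))
  refine ne_zero_of_mul_pow_three_le (hdiff (by simp)).continuousAt (hdiff (by simp))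
    (hdiff (by simp)).continuousAt (C := |y| ^ 4 * |2 * y|) (by positivity) ?_
  filter_upwards [self_mem_nhdsWithin] with x hx
  have hx : 0 < x := hx
  have hexp := one_le_norm_exp_LSeries_pow_mul hc habs (lt_add_of_pos_right 1 hx) y
  have hnorm (w : ℂ) (hw : w.re = 0) : ‖Y (1 + x + w)‖ =
      ‖x + w‖ * ‖exp (LSeries (fun n ↦ (c n : ℂ)) ((1 + x : ℝ) + w))‖ := by
    rw [hYexp _ (by simpa [hw]), norm_mul]
    push_cast
    ring_nf
  have hy_le : |y| ≤ ‖x + y * I‖ := by simpa using abs_im_le_norm (x + y * I)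
  have hy_le₂ : |2 * y| ≤ ‖x + 2 * (y * I)‖ := by simpa using abs_im_le_norm (x + 2 * (y * I))
  have hnorm₀ := hnorm 0 rfl
  simp only [add_zero, norm_real, Real.norm_of_nonneg hx.le] at hnorm₀
  rw [hnorm₀, hnorm _ (by simp), hnorm _ (by simp)]
  calc |y| ^ 4 * |2 * y| * x ^ 3
      ≤ ‖x + y * I‖ ^ 4 * ‖x + 2 * (y * I)‖ * x ^ 3 := by gcongr
    _ ≤ _ := le_mul_of_one_le_right (by positivity) hexp
    _ = _ := by ring

theorem logDeriv_sub_one_mul_exp_LSeries {f : ℕ → ℂ} {s : ℂ} (hs : abscissaOfAbsConv f < s.re)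
    (hs₁ : s ≠ 1) :
    logDeriv (fun s ↦ (s - 1) * exp (LSeries f s)) s = 1 / (s - 1) - LSeries (logMul f) s := by
  have hderiv : HasDerivAt (fun s ↦ (s - 1) * exp (LSeries f s))
      (1 * exp (LSeries f s) + (s - 1) * (exp (LSeries f s) * -LSeries (logMul f) s)) s :=
    ((hasDerivAt_id s).sub_const 1).mul (LSeries_hasDerivAt hs).cexp
  have hsub := sub_ne_zero.2 hs₁
  rw [logDeriv_apply, hderiv.deriv]
  field_simp
  ring

theorem exists_continuousOn_LSeries_logMul (hc : ∀ n, 0 ≤ c n)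
    (habs : abscissaOfAbsConv (fun n ↦ (c n : ℂ)) ≤ 1) (hr : r < 1)
    (hY : DifferentiableOn ℂ Y {s | r < s.re}) (hY₁ : Y 1 ≠ 0)
    (hYexp : ∀ s : ℂ, 1 < s.re → Y s = (s - 1) * exp (LSeries (fun n ↦ (c n : ℂ)) s)) :
    ∃ G : ℂ → ℂ, ContinuousOn G {s | 1 ≤ s.re} ∧
      ∀ s : ℂ, 1 < s.re → LSeries (logMul fun n ↦ (c n : ℂ)) s = 1 / (s - 1) + G s := by
  have hne_one {s : ℂ} (hs : 1 < s.re) : s ≠ 1 := by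
    rintro rfl
    simp at hs
  have hsub : {s : ℂ | 1 ≤ s.re} ⊆ {s : ℂ | r < s.re} := fun s hs ↦ hr.trans_le hs
  refine ⟨fun s ↦ -logDeriv Y s, ?_, fun s hs ↦ ?_⟩
  · refine ((((hY.deriv (isOpen_lt continuous_const continuous_re)).continuousOn.mono hsub).div
      (hY.continuousOn.mono hsub)) fun s hs ↦ ?_).neg
    rcases (show 1 ≤ s.re from hs).eq_or_lt with hs | hs
    · have hline : s = 1 + s.im * I := by apply Complex.ext <;> simp [← hs]
      rw [hline]
      exact ne_zero_of_eq_sub_one_mul_exp_LSeries hc habs hr hY hY₁ hYexp _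
    · rw [hYexp s hs]
      exact mul_ne_zero (sub_ne_zero.2 (hne_one hs)) (exp_ne_zero _)
  · have heq : Y =ᶠ[𝓝 s] fun s ↦ (s - 1) * exp (LSeries (fun n ↦ (c n : ℂ)) s) := by
      filter_upwards [(isOpen_lt continuous_const continuous_re).mem_nhds hs] with w hw
      exact hYexp w hw
    beta_reduce
    rw [logDeriv_apply, heq.deriv_eq, heq.eq_of_nhds, ← logDeriv_apply,
      logDeriv_sub_one_mul_exp_LSeries (habs.trans_lt (mod_cast hs)) (hne_one hs)]
    ring

end NonvanishingOnLine

section DegreeOneLSeries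

open Complex LSeries Module NumberField

theorem exists_continuousOn_LSeries_logMul_degreeOneCount (K : Type*) [Field K] [NumberField K] :
    ∃ G : ℂ → ℂ, ContinuousOn G {s | 1 ≤ s.re} ∧
      ∀ s : ℂ, 1 < s.re → LSeries (logMul fun n ↦ ((degreeOneCount K n : ℝ) : ℂ)) s =
        1 / (s - 1) + G s := by
  obtain ⟨Z, hZ, hZ₁, hZeq⟩ := exists_differentiableOn_sub_one_mul_dedekindZeta K
  have hrank : 1 - (finrank ℚ K : ℝ)⁻¹ < 1 :=
    sub_lt_self _ (inv_pos.2 (mod_cast finrank_pos (R := ℚ) (M := K)))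
  refine exists_continuousOn_LSeries_logMul (c := fun n ↦ (degreeOneCount K n : ℝ))
    (r := max (1 - (finrank ℚ K : ℝ)⁻¹) (3 / 4))
    (Y := fun s ↦ Z s * exp (-∑' v, eulerRemainder (K := K) s v))
    (fun n ↦ Nat.cast_nonneg _) ?_ (max_lt hrank (by norm_num)) ?_
    (mul_ne_zero hZ₁ (exp_ne_zero _)) fun s hs ↦ ?_
  · exact abscissaOfAbsConv_le_of_forall_lt_LSeriesSummable fun y hy ↦ by
      simpa using LSeriesSummable_degreeOneCount (K := K) (s := y) (by simpa)
  · refine DifferentiableOn.mul (hZ.mono fun s hs ↦ ?_)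
      ((differentiableOn_tsum_eulerRemainder K).mono fun s hs ↦ ?_).neg.cexp
    · exact Set.mem_ofPred_eq.mpr (max_lt_iff.1 (Set.mem_ofPred_eq.mp hs)).1
    · exact Set.mem_ofPred_eq.mpr (max_lt_iff.1 (Set.mem_ofPred_eq.mp hs)).2
  · rw [← hZeq s hs, dedekindZeta_eq_exp_LSeries_add hs, mul_assoc, ← exp_add]
    simp

end DegreeOneLSeries

section FejerKernel

open Topology Complex MeasureTheory Set

/-- The Fejér kernel: the Fourier transform of the tent function `max (1 - |y|) 0`, except that
the division makes its value at `0` the junk value `0`. It is the nonnegative smoothing kernel of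
the Tauberian argument. -/
noncomputable def fejerKernel (x : ℝ) : ℝ := 2 * (1 - Real.cos x) / x ^ 2

theorem fejerKernel_nonneg (x : ℝ) : 0 ≤ fejerKernel x :=
  div_nonneg (mul_nonneg zero_le_two (sub_nonneg.2 (Real.cos_le_one x))) (sq_nonneg x)

theorem fejerKernel_le (x : ℝ) : fejerKernel x ≤ 8 * (1 + x ^ 2)⁻¹ := by
  rcases eq_or_ne x 0 with rfl | hx
  · simp [fejerKernel]
  have hx2 : 0 < x ^ 2 := by positivity
  rw [fejerKernel, ← div_eq_mul_inv, div_le_div_iff₀ hx2 (by positivity)]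
  nlinarith [Real.one_sub_sq_div_two_le_cos (x := x), Real.neg_one_le_cos x, Real.cos_le_one x]

theorem measurable_fejerKernel : Measurable fejerKernel := by
  unfold fejerKernel
  fun_prop

theorem integrable_fejerKernel : Integrable fejerKernel :=
  (integrable_inv_one_add_sq.const_mul 8).mono' measurable_fejerKernel.aestronglyMeasurable
    (ae_of_all _ fun x ↦ by
      rw [Real.norm_of_nonneg (fejerKernel_nonneg x)]
      exact fejerKernel_le x)

theorem integral_fejerKernel_pos : 0 < ∫ x, fejerKernel x := by
  rw [integral_pos_iff_support_of_nonneg fejerKernel_nonneg integrable_fejerKernel]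
  have hIoo : Ioo 0 1 ⊆ Function.support fejerKernel := fun x hx ↦ by
    have hcos : Real.cos x ≠ 1 := fun hcos ↦ hx.1.ne' <|
      (Real.cos_eq_one_iff_of_lt_of_lt (by linarith [hx.1, Real.pi_pos])
        (by linarith [hx.2, Real.pi_gt_three])).1 hcos
    exact div_ne_zero (mul_ne_zero two_ne_zero (sub_ne_zero.2 hcos.symm))
      (pow_ne_zero 2 hx.1.ne')
  exact lt_of_lt_of_le (by simp) (measure_mono hIoo)

theorem integral_one_sub_mul_exp {x : ℝ} (hx : x ≠ 0) :
    ∫ y : ℝ in (0)..1, ((1 - y : ℝ) : ℂ) * exp (y * x * I) =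
      (exp (x * I) - 1) / (x * I) ^ 2 - 1 / (x * I) := by
  have hxC : (x : ℂ) ≠ 0 := by exact_mod_cast hx
  have hderiv (y : ℝ) : HasDerivAt (fun y : ℝ ↦ ((1 - y : ℝ) : ℂ) * exp (y * x * I) / (x * I) +
      exp (y * x * I) / (x * I) ^ 2) (((1 - y : ℝ) : ℂ) * exp (y * x * I)) y := by
    have hlin : HasDerivAt (fun y : ℝ ↦ ((1 - y : ℝ) : ℂ)) ((-1 : ℝ) : ℂ) y :=
      ((hasDerivAt_id y).const_sub 1).ofReal_comp
    have hexp : HasDerivAt (fun y : ℝ ↦ exp (y * x * I)) (exp (y * x * I) * (x * I)) y := by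
      simpa [mul_assoc] using ((ofRealCLM.hasDerivAt (x := y)).mul_const (x * I : ℂ)).cexp
    refine (((hlin.mul hexp).div_const (x * I)).add (hexp.div_const ((x * I) ^ 2))).congr_deriv ?_
    field_simp
    push_cast
    ring
  rw [intervalIntegral.integral_eq_sub_of_hasDerivAt fun y _ ↦ hderiv y]
  · simp only [ofReal_one, ofReal_zero, sub_self, sub_zero, zero_mul, one_mul, zero_div, exp_zero]
    field_simp
    ring
  · exact Continuous.intervalIntegrable (by fun_prop) _ _

theorem integral_tent_mul_exp {x : ℝ} (hx : x ≠ 0) :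
    ∫ y : ℝ in (-1)..1, ((1 - |y| : ℝ) : ℂ) * exp (y * x * I) = fejerKernel x := by
  have hcont : Continuous fun y : ℝ ↦ ((1 - |y| : ℝ) : ℂ) * exp (y * x * I) := by fun_prop
  rw [← intervalIntegral.integral_add_adjacent_intervals (b := 0)
    (hcont.intervalIntegrable _ _) (hcont.intervalIntegrable _ _)]
  have hright : ∫ y : ℝ in (0)..1, ((1 - |y| : ℝ) : ℂ) * exp (y * x * I) =
      ∫ y : ℝ in (0)..1, ((1 - y : ℝ) : ℂ) * exp (y * x * I) := by
    refine intervalIntegral.integral_congr fun y hy ↦ ?_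
    rw [uIcc_of_le zero_le_one] at hy
    simp [abs_of_nonneg hy.1]
  have hleft : ∫ y : ℝ in (-1)..0, ((1 - |y| : ℝ) : ℂ) * exp (y * x * I) =
      ∫ y : ℝ in (0)..1, ((1 - y : ℝ) : ℂ) * exp (y * (-x : ℝ) * I) := by
    have hneg := intervalIntegral.integral_comp_neg (a := 0) (b := 1)
      fun y : ℝ ↦ ((1 - |y| : ℝ) : ℂ) * exp (y * x * I)
    rw [neg_zero] at hneg
    rw [← hneg]
    refine intervalIntegral.integral_congr fun y hy ↦ ?_
    rw [uIcc_of_le zero_le_one] at hy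
    simp [abs_of_nonneg hy.1]
  rw [hleft, hright, integral_one_sub_mul_exp hx, integral_one_sub_mul_exp (neg_ne_zero.2 hx),
    fejerKernel]
  have hxI : (x : ℂ) ≠ 0 := by exact_mod_cast hx
  have hcos : 2 * Complex.cos x = exp (x * I) + exp (-(x * I)) := by
    rw [two_cos, neg_mul]
  push_cast
  simp only [neg_mul]
  field_simp
  rw [I_sq]
  linear_combination -hcos

variable {k : ℝ → ℝ} {B : ℝ} {H : ℂ → ℂ}

theorem integrable_tent_mul_laplace (hk : Measurable k) (hB : ∀ u, |k u| ≤ B) {σ : ℝ} (hσ : 0 < σ)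
    (v : ℝ) :
    Integrable (Function.uncurry fun (y u : ℝ) ↦ ((1 - |y| : ℝ) : ℂ) * exp (y * v * I) *
      ((k u : ℂ) * exp (-u * (σ + y * I))))
      ((volume.restrict (Ioc (-1 : ℝ) 1)).prod (volume.restrict (Ioi (0 : ℝ)))) := by
  have htent : Integrable (fun y : ℝ ↦ (1 - |y|)) (volume.restrict (Ioc (-1 : ℝ) 1)) :=
    (continuous_const.sub continuous_abs).integrableOn_Ioc
  have hdecay : Integrable (fun u : ℝ ↦ B * Real.exp (-σ * u)) (volume.restrict (Ioi (0 : ℝ))) :=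
    (exp_neg_integrableOn_Ioi 0 hσ).const_mul B
  refine (htent.mul_prod hdecay).mono ?_ (ae_of_all _ fun p ↦ ?_)
  · refine Measurable.aestronglyMeasurable ?_
    simp only [Function.uncurry_def]
    fun_prop
  · have hre_left : (p.1 * v * I : ℂ).re = 0 := by simp
    have hre_right : (-p.2 * (σ + p.1 * I) : ℂ).re = -σ * p.2 := by simp [mul_comm]
    simp only [Function.uncurry, norm_mul, norm_exp, norm_real, Real.norm_eq_abs, Real.abs_exp]
    rw [hre_left, hre_right, Real.exp_zero, mul_one]
    exact mul_le_mul_of_nonneg_left (mul_le_mul_of_nonneg_right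
      ((hB _).trans (le_abs_self B)) (Real.exp_pos _).le) (abs_nonneg _)

theorem integral_tent_mul_laplace (hk : Measurable k) (hB : ∀ u, |k u| ≤ B)
    (hH : ∀ s : ℂ, 0 < s.re → ∫ u in Ioi (0 : ℝ), (k u : ℂ) * exp (-u * s) = H s)
    {σ : ℝ} (hσ : 0 < σ) (v : ℝ) :
    ∫ y in Ioc (-1 : ℝ) 1, ((1 - |y| : ℝ) : ℂ) * exp (y * v * I) * H (σ + y * I) =
      ∫ u in Ioi (0 : ℝ), ((k u * Real.exp (-σ * u) * fejerKernel (v - u) : ℝ) : ℂ) := by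
  have hne : ∀ᵐ u : ℝ ∂(volume.restrict (Ioi (0 : ℝ))), u ≠ v :=
    ae_restrict_of_ae (by simp [ae_iff])
  calc _ = ∫ y in Ioc (-1 : ℝ) 1, ∫ u in Ioi (0 : ℝ), ((1 - |y| : ℝ) : ℂ) * exp (y * v * I) *
      ((k u : ℂ) * exp (-u * (σ + y * I))) := by
        refine integral_congr_ae (ae_of_all _ fun y ↦ ?_)
        beta_reduce
        rw [← hH (σ + y * I) (by simpa), integral_const_mul]
    _ = _ := integral_integral_swap (integrable_tent_mul_laplace hk hB hσ v)
    _ = _ := by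
        refine integral_congr_ae ?_
        filter_upwards [hne] with u hu
        have hfejer := integral_tent_mul_exp (sub_ne_zero.2 hu.symm)
        rw [intervalIntegral.integral_of_le (by norm_num)] at hfejer
        push_cast
        rw [← hfejer, ← integral_const_mul]
        refine integral_congr_ae (ae_of_all _ fun y ↦ ?_)
        have hexp : exp (y * v * I) * exp (-u * (σ + y * I)) =
            exp (-σ * u) * exp (y * (v - u) * I) := by
          rw [← exp_add, ← exp_add]
          ring_nf
        push_cast
        linear_combination (1 - (|y| : ℝ) : ℂ) * k u * hexp

theorem tendsto_integral_mul_exp_mul_fejerKernel (hk : Measurable k) (hB : ∀ u, |k u| ≤ B)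
    (v : ℝ) :
    Tendsto (fun σ : ℝ ↦ ∫ u in Ioi (0 : ℝ),
      ((k u * Real.exp (-σ * u) * fejerKernel (v - u) : ℝ) : ℂ)) (𝓝[>] 0)
      (𝓝 (∫ u in Ioi (0 : ℝ), ((k u * fejerKernel (v - u) : ℝ) : ℂ))) := by
  refine tendsto_integral_filter_of_dominated_convergence
    (fun u ↦ B * fejerKernel (v - u)) (Eventually.of_forall fun σ ↦ ?_) ?_
    ((integrable_fejerKernel.comp_sub_left v).const_mul B).integrableOn (ae_of_all _ fun u ↦ ?_)
  · have := measurable_fejerKernel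
    exact Measurable.aestronglyMeasurable (by fun_prop)
  · filter_upwards [self_mem_nhdsWithin] with σ (hσ : 0 < σ)
    filter_upwards [ae_restrict_mem measurableSet_Ioi] with u (hu : 0 < u)
    have hexp : Real.exp (-σ * u) ≤ 1 := by
      rw [Real.exp_le_one_iff]
      nlinarith
    rw [norm_real, norm_mul, norm_mul, Real.norm_of_nonneg (fejerKernel_nonneg _),
      Real.norm_of_nonneg (Real.exp_pos _).le, Real.norm_eq_abs]
    exact mul_le_mul_of_nonneg_right ((mul_le_of_le_one_right (abs_nonneg _) hexp).trans (hB u))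
      (fejerKernel_nonneg _)
  · have hcont : Continuous
        fun σ : ℝ ↦ ((k u * Real.exp (-σ * u) * fejerKernel (v - u) : ℝ) : ℂ) := by fun_prop
    simpa using (hcont.tendsto 0).mono_left nhdsWithin_le_nhds

theorem tendsto_integral_tent_mul_add (hH : ContinuousOn H {s | 0 ≤ s.re}) (v : ℝ) :
    Tendsto (fun σ : ℝ ↦ ∫ y in Ioc (-1 : ℝ) 1,
      ((1 - |y| : ℝ) : ℂ) * exp (y * v * I) * H (σ + y * I)) (𝓝[>] 0)
      (𝓝 (∫ y in Ioc (-1 : ℝ) 1, ((1 - |y| : ℝ) : ℂ) * exp (y * v * I) * H (y * I))) := by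
  obtain ⟨M, hM⟩ := ((isCompact_Icc (a := (0 : ℝ)) (b := 1)).reProdIm
    (isCompact_Icc (a := (-1 : ℝ)) (b := 1))).exists_bound_of_continuousOn
    (hH.mono fun s hs ↦ hs.1.1)
  refine tendsto_integral_filter_of_dominated_convergence (fun _ ↦ M) ?_ ?_ (integrable_const M)
    (ae_of_all _ fun y ↦ Tendsto.const_mul _ ?_)
  · filter_upwards [self_mem_nhdsWithin] with σ (hσ : 0 < σ)
    refine ContinuousOn.aestronglyMeasurable ?_ measurableSet_Ioc
    refine ContinuousOn.mul (by fun_prop) (hH.comp (by fun_prop) fun y _ ↦ ?_)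
    simpa using hσ.le
  · filter_upwards [Ioc_mem_nhdsGT (zero_lt_one (α := ℝ))] with σ hσ
    filter_upwards [ae_restrict_mem measurableSet_Ioc] with y hy
    have hbound := hM (σ + y * I) ⟨by simpa using ⟨hσ.1.le, hσ.2⟩, by simpa using ⟨hy.1.le, hy.2⟩⟩
    have hy_abs : |y| ≤ 1 := abs_le.2 ⟨hy.1.le, hy.2⟩
    have hre : (y * v * I : ℂ).re = 0 := by simp
    rw [norm_mul, norm_mul, norm_exp, hre, Real.exp_zero, mul_one, norm_real,
      Real.norm_of_nonneg (by linarith)]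
    exact (mul_le_of_le_one_left (norm_nonneg _) (by linarith [abs_nonneg y])).trans hbound
  · refine (hH (y * I) (by simp)).tendsto.comp (tendsto_nhdsWithin_iff.2 ⟨?_, ?_⟩)
    · have hcont : Continuous fun σ : ℝ ↦ (σ + y * I : ℂ) := by fun_prop
      simpa using (hcont.tendsto 0).mono_left nhdsWithin_le_nhds
    · filter_upwards [self_mem_nhdsWithin] with σ (hσ : 0 < σ)
      simpa using hσ.le

theorem integral_tent_mul_boundary (hk : Measurable k) (hB : ∀ u, |k u| ≤ B)
    (hcont : ContinuousOn H {s | 0 ≤ s.re})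
    (hH : ∀ s : ℂ, 0 < s.re → ∫ u in Ioi (0 : ℝ), (k u : ℂ) * exp (-u * s) = H s) (v : ℝ) :
    ∫ y in Ioc (-1 : ℝ) 1, ((1 - |y| : ℝ) : ℂ) * exp (y * v * I) * H (y * I) =
      ∫ u in Ioi (0 : ℝ), ((k u * fejerKernel (v - u) : ℝ) : ℂ) := by
  refine tendsto_nhds_unique (tendsto_integral_tent_mul_add hcont v)
    ((tendsto_integral_mul_exp_mul_fejerKernel hk hB v).congr' ?_)
  filter_upwards [self_mem_nhdsWithin] with σ hσ
  exact (integral_tent_mul_laplace hk hB hH hσ v).symm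

theorem tendsto_setIntegral_mul_exp_atTop {s : Set ℝ} (hs : MeasurableSet s) (φ : ℝ → ℂ) :
    Tendsto (fun v : ℝ ↦ ∫ y in s, φ y * exp (y * v * I)) atTop (𝓝 0) := by
  have hscale : Tendsto (fun v : ℝ ↦ -(v / (2 * Real.pi))) atTop (cocompact ℝ) :=
    (tendsto_neg_atTop_atBot.comp (tendsto_id.atTop_div_const (by positivity))).mono_right
      atBot_le_cocompact
  refine ((Real.tendsto_integral_exp_smul_cocompact (s.indicator φ)).comp hscale).congr fun v ↦ ?_
  rw [← integral_indicator hs]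
  refine integral_congr_ae (ae_of_all _ fun y ↦ ?_)
  by_cases hy : y ∈ s
  · have hphase : 2 * Real.pi * -(y * -(v / (2 * Real.pi))) = y * v := by field_simp
    simp only [indicator_of_mem hy, Circle.smul_def, Real.fourierChar_apply, smul_eq_mul]
    rw [hphase]
    push_cast
    ring
  · simp [indicator_of_notMem hy]

theorem tendsto_integral_mul_fejerKernel (hk : Measurable k) (hB : ∀ u, |k u| ≤ B)
    (hcont : ContinuousOn H {s | 0 ≤ s.re})
    (hH : ∀ s : ℂ, 0 < s.re → ∫ u in Ioi (0 : ℝ), (k u : ℂ) * exp (-u * s) = H s) :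
    Tendsto (fun v ↦ ∫ u in Ioi (0 : ℝ), k u * fejerKernel (v - u)) atTop (𝓝 0) := by
  refine ((continuous_re.tendsto 0).comp (tendsto_setIntegral_mul_exp_atTop
    (measurableSet_Ioc (a := (-1 : ℝ)) (b := 1))
      fun y ↦ ((1 - |y| : ℝ) : ℂ) * H (y * I))).congr fun v ↦ ?_
  have hboundary := integral_tent_mul_boundary hk hB hcont hH v
  rw [integral_complex_ofReal] at hboundary
  simp only [Function.comp_apply, mul_right_comm _ (H _)]
  rw [hboundary, ofReal_re]

theorem tendsto_integral_comp_mul_mul_fejerKernel (hk : Measurable k) (hB : ∀ u, |k u| ≤ B)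
    (hcont : ContinuousOn H {s | 0 ≤ s.re})
    (hH : ∀ s : ℂ, 0 < s.re → ∫ u in Ioi (0 : ℝ), (k u : ℂ) * exp (-u * s) = H s)
    {b : ℝ} (hb : 0 < b) :
    Tendsto (fun v ↦ ∫ u in Ioi (0 : ℝ), k (b * u) * fejerKernel (v - u)) atTop (𝓝 0) := by
  refine tendsto_integral_mul_fejerKernel (k := fun u ↦ k (b * u)) (B := B)
    (H := fun s ↦ ((b⁻¹ : ℝ) : ℂ) * H ((b⁻¹ : ℝ) * s)) (by fun_prop) (fun u ↦ hB _) ?_ fun s hs ↦ ?_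
  · refine ContinuousOn.mul continuousOn_const (hcont.comp (f := fun s : ℂ ↦ ((b⁻¹ : ℝ) : ℂ) * s)
      (continuous_const_mul _).continuousOn fun s hs ↦ ?_)
    have hs : 0 ≤ s.re := hs
    rw [mem_ofPred_eq, re_ofReal_mul]
    positivity
  · rw [← hH _ (by rw [re_ofReal_mul]; positivity)]
    have hscale := integral_comp_mul_left_Ioi
      (fun u : ℝ ↦ (k u : ℂ) * exp (-u * ((b⁻¹ : ℝ) * s))) 0 hb
    rw [mul_zero, real_smul] at hscale
    rw [← hscale]
    refine integral_congr_ae (ae_of_all _ fun u ↦ ?_)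
    beta_reduce
    congr 2
    push_cast
    have hb_ne : (b : ℂ) ≠ 0 := by exact_mod_cast hb.ne'
    field_simp

end FejerKernel

section Tauberian

open Topology Complex MeasureTheory Set

variable {k : ℝ → ℝ} {B : ℝ} {H : ℂ → ℂ}

theorem exists_mul_setIntegral_compl_fejerKernel_lt {ε : ℝ} (hε : 0 < ε) (B : ℝ) :
    ∃ R > 0, B * ∫ x in (Icc (-R) R)ᶜ, fejerKernel x < ε * ∫ x in Icc (-R) R, fejerKernel x := by
  have hcover : Tendsto (fun R : ℝ ↦ ∫ x in Icc (-R) R, fejerKernel x) atTop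
      (𝓝 (∫ x, fejerKernel x)) :=
    (aecover_Icc tendsto_neg_atTop_atBot tendsto_id).integral_tendsto_of_countably_generated
      integrable_fejerKernel
  have hdiff := (hcover.const_mul ε).sub ((hcover.const_sub (∫ x, fejerKernel x)).const_mul B)
  rw [sub_self, mul_zero, sub_zero] at hdiff
  obtain ⟨R, hR, hR_pos⟩ := ((hdiff.eventually
    (lt_mem_nhds (mul_pos hε integral_fejerKernel_pos))).and (eventually_gt_atTop 0)).exists
  refine ⟨R, hR_pos, ?_⟩
  rw [← integral_add_compl (measurableSet_Icc (a := -R) (b := R)) integrable_fejerKernel,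
    add_sub_cancel_left] at hR
  exact sub_pos.1 hR

theorem sub_le_integral_mul_fejerKernel (hk : Measurable k) (hB : ∀ u, |k u| ≤ B) {ε R V : ℝ}
    (hRV : R < V) (hε : ∀ u ∈ Icc (V - R) (V + R), ε ≤ k u) :
    ε * (∫ x in Icc (-R) R, fejerKernel x) - B * (∫ x in (Icc (-R) R)ᶜ, fejerKernel x) ≤
      ∫ u in Ioi (0 : ℝ), k u * fejerKernel (V - u) := by
  have hB_nonneg : 0 ≤ B := (abs_nonneg _).trans (hB 0)
  let inner : ℝ → ℝ := (Icc (-R) R).indicator fejerKernel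
  let outer : ℝ → ℝ := (Icc (-R) R)ᶜ.indicator fejerKernel
  have hinner : Integrable inner := integrable_fejerKernel.indicator measurableSet_Icc
  have houter : Integrable outer := integrable_fejerKernel.indicator measurableSet_Icc.compl
  have inner_eq : ∫ x in Icc (-R) R, fejerKernel x = ∫ u in Ioi (0 : ℝ), inner (V - u) := by
    rw [← integral_indicator measurableSet_Icc, ← integral_sub_left_eq_self _ volume V,
      setIntegral_eq_integral_of_forall_compl_eq_zero]
    refine fun u hu ↦ indicator_of_notMem (fun hmem ↦ hu ?_) _
    rw [mem_Ioi]
    linarith [hmem.2]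
  have le_outer : ∫ u in Ioi (0 : ℝ), outer (V - u) ≤ ∫ x in (Icc (-R) R)ᶜ, fejerKernel x := by
    rw [← integral_indicator measurableSet_Icc.compl, ← integral_sub_left_eq_self _ volume V]
    exact setIntegral_le_integral (houter.comp_sub_left V)
      (ae_of_all _ fun u ↦ indicator_nonneg (fun x _ ↦ fejerKernel_nonneg x) _)
  have hinner_int : IntegrableOn (fun u ↦ ε * inner (V - u)) (Ioi (0 : ℝ)) :=
    ((hinner.comp_sub_left V).const_mul ε).integrableOn
  have houter_int : IntegrableOn (fun u ↦ B * outer (V - u)) (Ioi (0 : ℝ)) :=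
    ((houter.comp_sub_left V).const_mul B).integrableOn
  refine (sub_le_sub le_rfl (mul_le_mul_of_nonneg_left le_outer hB_nonneg)).trans ?_
  rw [inner_eq, ← integral_const_mul, ← integral_const_mul, ← integral_sub hinner_int houter_int]
  refine integral_mono (hinner_int.sub houter_int) ((integrable_fejerKernel.comp_sub_left
    V).integrableOn.bdd_mul hk.aestronglyMeasurable (ae_of_all _ hB)) fun u ↦ ?_
  have hnonneg := fejerKernel_nonneg (V - u)
  by_cases hu : V - u ∈ Icc (-R) R
  · have hle := hε u ⟨by linarith [hu.2], by linarith [hu.1]⟩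
    simpa [inner, outer, hu] using mul_le_mul_of_nonneg_right hle hnonneg
  · have hle : -B ≤ k u := (neg_le_neg (hB u)).trans (neg_abs_le _)
    simpa [inner, outer, hu] using mul_le_mul_of_nonneg_right hle hnonneg

theorem eventually_exists_lt_of_laplace (hk : Measurable k) (hB : ∀ u, |k u| ≤ B)
    (hcont : ContinuousOn H {s | 0 ≤ s.re})
    (hH : ∀ s : ℂ, 0 < s.re → ∫ u in Ioi (0 : ℝ), (k u : ℂ) * exp (-u * s) = H s)
    {ε h : ℝ} (hε : 0 < ε) (hh : 0 < h) :
    ∀ᶠ v in atTop, ∃ t ∈ Icc v (v + h), k t < ε := by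
  obtain ⟨R, hR, hRlt⟩ := exists_mul_setIntegral_compl_fejerKernel_lt hε B
  set b := h / (2 * R) with hb
  have hb_pos : 0 < b := by positivity
  have hbR : b * (2 * R) = h := by
    rw [hb]
    field_simp
  have hshift : Tendsto (fun v : ℝ ↦ v / b + R) atTop atTop :=
    tendsto_atTop_add_const_right _ _ (tendsto_id.atTop_div_const hb_pos)
  filter_upwards [((tendsto_integral_comp_mul_mul_fejerKernel hk hB hcont hH hb_pos).comp
    hshift).eventually (gt_mem_nhds (sub_pos.2 hRlt)), eventually_gt_atTop 0] with v hv hv_pos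
  by_contra! hcon
  refine hv.not_ge (sub_le_integral_mul_fejerKernel (hk.comp (measurable_const_mul b))
    (fun u ↦ hB (b * u)) (lt_add_of_pos_left R (div_pos hv_pos hb_pos)) fun u hu ↦
      hcon _ ⟨?_, ?_⟩)
  · rw [← div_le_iff₀' hb_pos]
    linarith [hu.1]
  · calc b * u ≤ b * (v / b + 2 * R) := by gcongr; linarith [hu.2]
      _ = v + h := by rw [mul_add, hbR, mul_div_cancel₀ _ hb_pos.ne']

variable {f : ℝ → ℝ}

theorem eventually_gt_of_laplace (hf : Measurable f) (hf₀ : ∀ u, 0 ≤ f u)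
    (hB : ∀ u, |f u - 1| ≤ B) (hslow : ∀ u h, 0 ≤ h → f u ≤ Real.exp h * f (u + h))
    (hcont : ContinuousOn H {s | 0 ≤ s.re})
    (hH : ∀ s : ℂ, 0 < s.re → ∫ u in Ioi (0 : ℝ), ((f u - 1 : ℝ) : ℂ) * exp (-u * s) = H s)
    {a : ℝ} (ha₀ : 0 < a) (ha₁ : a < 1) : ∀ᶠ v in atTop, a < f v := by
  obtain ⟨b, hab, hb₁⟩ := exists_between ha₁
  have hb_pos : 0 < b := ha₀.trans hab
  have hlog : 0 < Real.log (b / a) := Real.log_pos ((one_lt_div ha₀).2 hab)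
  have hlaplace (s : ℂ) (hs : 0 < s.re) :
      ∫ u in Ioi (0 : ℝ), ((1 - f u : ℝ) : ℂ) * exp (-u * s) = -H s := by
    rw [← hH s hs, ← integral_neg]
    refine integral_congr_ae (ae_of_all _ fun u ↦ ?_)
    push_cast
    ring
  have hexists := eventually_exists_lt_of_laplace (k := fun u ↦ 1 - f u) (H := fun s ↦ -H s)
    (measurable_const.sub hf) (fun u ↦ (abs_sub_comm _ _).trans_le (hB u)) hcont.neg hlaplace
    (sub_pos.2 hb₁) hlog
  filter_upwards [(tendsto_atTop_add_const_right atTop (-Real.log (b / a)) tendsto_id).eventually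
    hexists] with v ⟨t, ⟨hvt, htv⟩, hft⟩
  simp only [id_eq] at hvt htv
  have hft_le := hslow t (v - t) (by linarith)
  rw [add_sub_cancel] at hft_le
  have hexp : Real.exp (v - t) ≤ b / a :=
    (Real.le_log_iff_exp_le (by positivity)).1 (by linarith)
  have hlt : b < b / a * f v :=
    lt_of_lt_of_le (by linarith) (hft_le.trans (mul_le_mul_of_nonneg_right hexp (hf₀ v)))
  rw [div_mul_eq_mul_div, lt_div_iff₀ ha₀] at hlt
  exact lt_of_mul_lt_mul_left hlt hb_pos.le

theorem eventually_lt_of_laplace (hf : Measurable f) (hf₀ : ∀ u, 0 ≤ f u)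
    (hB : ∀ u, |f u - 1| ≤ B) (hslow : ∀ u h, 0 ≤ h → f u ≤ Real.exp h * f (u + h))
    (hcont : ContinuousOn H {s | 0 ≤ s.re})
    (hH : ∀ s : ℂ, 0 < s.re → ∫ u in Ioi (0 : ℝ), ((f u - 1 : ℝ) : ℂ) * exp (-u * s) = H s)
    {a : ℝ} (ha : 1 < a) : ∀ᶠ v in atTop, f v < a := by
  obtain ⟨b, hb₁, hba⟩ := exists_between ha
  have hb_pos : 0 < b := one_pos.trans hb₁
  have hratio : 0 < a / b := div_pos (hb_pos.trans hba) hb_pos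
  have hlog : 0 < Real.log (a / b) := Real.log_pos ((one_lt_div hb_pos).2 hba)
  filter_upwards [eventually_exists_lt_of_laplace (hf.sub measurable_const) hB hcont hH
    (sub_pos.2 hb₁) hlog] with v ⟨t, ht, hft⟩
  have hfv_le := hslow v (t - v) (sub_nonneg.2 ht.1)
  rw [add_sub_cancel] at hfv_le
  have hexp : Real.exp (t - v) ≤ a / b :=
    (Real.le_log_iff_exp_le hratio).1 (by linarith [ht.2])
  calc f v ≤ a / b * f t := hfv_le.trans (mul_le_mul_of_nonneg_right hexp (hf₀ t))
    _ < a / b * b := mul_lt_mul_of_pos_left (sub_lt_sub_iff_right 1 |>.1 hft) hratio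
    _ = a := div_mul_cancel₀ _ hb_pos.ne'

theorem tendsto_one_of_laplace {C : ℝ} (hf : Measurable f) (hf₀ : ∀ u, 0 ≤ f u)
    (hC : ∀ u, f u ≤ C) (hslow : ∀ u h, 0 ≤ h → f u ≤ Real.exp h * f (u + h))
    (hcont : ContinuousOn H {s | 0 ≤ s.re})
    (hH : ∀ s : ℂ, 0 < s.re → ∫ u in Ioi (0 : ℝ), ((f u - 1 : ℝ) : ℂ) * exp (-u * s) = H s) :
    Tendsto f atTop (𝓝 1) := by
  have hB (u : ℝ) : |f u - 1| ≤ C + 1 :=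
    abs_le.2 ⟨by linarith [hf₀ u, hC u], by linarith [hC u]⟩
  refine tendsto_order.2 ⟨fun a ha ↦ ?_, fun a ha ↦
    eventually_lt_of_laplace hf hf₀ hB hslow hcont hH ha⟩
  filter_upwards [eventually_gt_of_laplace hf hf₀ hB hslow hcont hH
    (lt_max_of_lt_right one_half_pos) (max_lt ha one_half_lt_one)] with v hv
  exact (le_max_left _ _).trans_lt hv

end Tauberian

section WienerIkehara

open Topology Complex MeasureTheory Set

/-- The mean `x⁻¹ ∑_{n ≤ x} a n` in the logarithmic variable `u = log x`; its Laplace transform is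
the Dirichlet series of `a` up to a shift. -/
noncomputable def expMean (a : ℕ → ℝ) (u : ℝ) : ℝ :=
  (∑ n ∈ Finset.Icc 1 ⌊Real.exp u⌋₊, a n) * Real.exp (-u)

variable {a : ℕ → ℝ} {C : ℝ} {G : ℂ → ℂ}

theorem monotone_sum_Icc_floor (ha : ∀ n, 0 ≤ a n) :
    Monotone fun x : ℝ ↦ ∑ n ∈ Finset.Icc 1 ⌊x⌋₊, a n :=
  fun _ _ hxy ↦ Finset.sum_le_sum_of_subset_of_nonneg
    (Finset.Icc_subset_Icc_right (Nat.floor_le_floor hxy)) fun n _ _ ↦ ha n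

theorem expMean_nonneg (ha : ∀ n, 0 ≤ a n) (u : ℝ) : 0 ≤ expMean a u :=
  mul_nonneg (Finset.sum_nonneg fun n _ ↦ ha n) (Real.exp_pos _).le

theorem measurable_expMean (ha : ∀ n, 0 ≤ a n) : Measurable (expMean a) :=
  ((monotone_sum_Icc_floor ha).measurable.comp Real.measurable_exp).mul (by fun_prop)

theorem expMean_le (ha : ∀ n, 0 ≤ a n) (hC : ∀ n : ℕ, ∑ k ∈ Finset.Icc 1 n, a k ≤ C * n) (u : ℝ) :
    expMean a u ≤ C := by
  have hC_nonneg : 0 ≤ C := (ha 1).trans (by simpa using hC 1)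
  calc expMean a u ≤ C * Real.exp u * Real.exp (-u) := by
        refine mul_le_mul_of_nonneg_right ((hC _).trans ?_) (Real.exp_pos _).le
        exact mul_le_mul_of_nonneg_left (Nat.floor_le (Real.exp_pos _).le) hC_nonneg
    _ = C := by rw [mul_assoc, ← Real.exp_add, add_neg_cancel, Real.exp_zero, mul_one]

theorem expMean_le_exp_mul_expMean_add (ha : ∀ n, 0 ≤ a n) {h : ℝ} (hh : 0 ≤ h) (u : ℝ) :
    expMean a u ≤ Real.exp h * expMean a (u + h) := by
  calc expMean a u
      ≤ (∑ n ∈ Finset.Icc 1 ⌊Real.exp (u + h)⌋₊, a n) * Real.exp (-u) :=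
        mul_le_mul_of_nonneg_right (monotone_sum_Icc_floor ha
          (Real.exp_le_exp.2 (le_add_of_nonneg_right hh))) (Real.exp_pos _).le
    _ = Real.exp h * expMean a (u + h) := by
        rw [expMean, mul_left_comm, ← Real.exp_add]
        ring_nf

theorem expMean_log {x : ℝ} (hx : 0 < x) :
    expMean a (Real.log x) = (∑ n ∈ Finset.Icc 1 ⌊x⌋₊, a n) / x := by
  rw [expMean, Real.exp_neg, Real.exp_log hx, div_eq_mul_inv]

theorem integrableOn_exp_neg_mul {s : ℂ} (hs : 0 < s.re) :
    IntegrableOn (fun u : ℝ ↦ exp (-u * s)) (Ioi 0) := by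
  simpa [mul_comm] using integrableOn_exp_mul_complex_Ioi (a := -s) (by simpa) 0

theorem integral_exp_neg_mul {s : ℂ} (hs : 0 < s.re) :
    ∫ u in Ioi (0 : ℝ), exp (-u * s) = 1 / s := by
  simpa [mul_comm, neg_div_neg_eq] using integral_exp_mul_complex_Ioi (a := -s) (by simpa) 0

theorem integral_expMean_mul_exp (a : ℕ → ℝ) (s : ℂ) :
    ∫ u in Ioi (0 : ℝ), (expMean a u : ℂ) * exp (-u * s) =
      ∫ t in Ioi (1 : ℝ), (∑ n ∈ Finset.Icc 1 ⌊t⌋₊, (a n : ℂ)) * (t : ℂ) ^ (-(1 + s + 1)) := by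
  have hsubst := integral_image_eq_integral_abs_deriv_smul (measurableSet_Ioi (a := (0 : ℝ)))
    (fun x _ ↦ (Real.hasDerivAt_exp x).hasDerivWithinAt) Real.exp_injective.injOn
    fun t : ℝ ↦ (∑ n ∈ Finset.Icc 1 ⌊t⌋₊, (a n : ℂ)) * (t : ℂ) ^ (-(1 + s + 1))
  rw [Real.image_exp_Ioi, Real.exp_zero] at hsubst
  rw [hsubst]
  refine integral_congr_ae (ae_of_all _ fun u ↦ ?_)
  have hexp : exp (-u) * exp (-u * s) = exp u * exp (u * -(1 + s + 1)) := by
    rw [← exp_add, ← exp_add]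
    ring_nf
  simp only [expMean]
  rw [abs_of_pos (Real.exp_pos u), cpow_def_of_ne_zero (by simp),
    ← ofReal_log (Real.exp_pos u).le, Real.log_exp, real_smul]
  push_cast
  linear_combination (∑ n ∈ Finset.Icc 1 ⌊Real.exp u⌋₊, (a n : ℂ)) * hexp

theorem LSeries_one_add_eq_mul_integral_expMean (ha : ∀ n, 0 ≤ a n)
    (hC : ∀ n : ℕ, ∑ k ∈ Finset.Icc 1 n, a k ≤ C * n) {s : ℂ} (hs : 0 < s.re) :
    LSeries (fun n ↦ (a n : ℂ)) (1 + s) =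
      (1 + s) * ∫ u in Ioi (0 : ℝ), (expMean a u : ℂ) * exp (-u * s) := by
  have hO : (fun n : ℕ ↦ ∑ k ∈ Finset.Icc 1 n, a k) =O[atTop] fun n ↦ (n : ℝ) ^ (1 : ℝ) := by
    refine Asymptotics.IsBigO.of_bound C (Eventually.of_forall fun n ↦ ?_)
    rw [Real.norm_of_nonneg (Finset.sum_nonneg fun k _ ↦ ha k), Real.rpow_one,
      Real.norm_of_nonneg (Nat.cast_nonneg n)]
    exact hC n
  rw [LSeries_eq_mul_integral_of_nonneg a zero_le_one (by simpa) hO ha, integral_expMean_mul_exp]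

theorem integral_expMean_sub_one_mul_exp (ha : ∀ n, 0 ≤ a n)
    (hC : ∀ n : ℕ, ∑ k ∈ Finset.Icc 1 n, a k ≤ C * n) {s : ℂ} (hs : 0 < s.re) :
    ∫ u in Ioi (0 : ℝ), ((expMean a u - 1 : ℝ) : ℂ) * exp (-u * s) =
      LSeries (fun n ↦ (a n : ℂ)) (1 + s) / (1 + s) - 1 / s := by
  have hs_one : 1 + s ≠ 0 := ne_of_apply_ne re (by simpa using (by positivity : 1 + s.re ≠ 0))
  have hmean : IntegrableOn (fun u : ℝ ↦ (expMean a u : ℂ) * exp (-u * s)) (Ioi 0) := by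
    refine (integrableOn_exp_neg_mul hs).bdd_mul (c := C)
      (measurable_ofReal.comp (measurable_expMean ha)).aestronglyMeasurable
      (ae_of_all _ fun u ↦ ?_)
    rw [norm_real, Real.norm_of_nonneg (expMean_nonneg ha u)]
    exact expMean_le ha hC u
  rw [LSeries_one_add_eq_mul_integral_expMean ha hC hs, mul_div_cancel_left₀ _ hs_one,
    ← integral_exp_neg_mul hs, ← integral_sub hmean (integrableOn_exp_neg_mul hs)]
  refine integral_congr_ae (ae_of_all _ fun u ↦ ?_)
  push_cast
  ring

theorem tendsto_sum_div_of_LSeries (ha : ∀ n, 0 ≤ a n)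
    (hC : ∀ n : ℕ, ∑ k ∈ Finset.Icc 1 n, a k ≤ C * n) (hG : ContinuousOn G {s | 1 ≤ s.re})
    (hLseries : ∀ s : ℂ, 1 < s.re → LSeries (fun n ↦ (a n : ℂ)) s = 1 / (s - 1) + G s) :
    Tendsto (fun x : ℝ ↦ (∑ n ∈ Finset.Icc 1 ⌊x⌋₊, a n) / x) atTop (𝓝 1) := by
  have hne {s : ℂ} (hs : 0 ≤ s.re) : 1 + s ≠ 0 :=
    ne_of_apply_ne re (by simpa using (by positivity : 1 + s.re ≠ 0))
  have hcont : ContinuousOn (fun s ↦ (G (1 + s) - 1) / (1 + s)) {s | 0 ≤ s.re} :=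
    ((hG.comp (f := fun s : ℂ ↦ 1 + s) (continuous_const_add 1).continuousOn
      fun s hs ↦ by simpa using hs).sub continuousOn_const).div (by fun_prop) fun s hs ↦ hne hs
  have htendsto : Tendsto (expMean a) atTop (𝓝 1) := by
    refine tendsto_one_of_laplace (measurable_expMean ha) (expMean_nonneg ha) (expMean_le ha hC)
      (fun u h hh ↦ expMean_le_exp_mul_expMean_add ha hh u) hcont fun s hs ↦ ?_
    have hs_ne : s ≠ 0 := ne_of_apply_ne re (by simpa using hs.ne')
    have hs_one := hne hs.le
    rw [integral_expMean_sub_one_mul_exp ha hC hs, hLseries (1 + s) (by simpa),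
      add_sub_cancel_left]
    field_simp
    ring
  refine (htendsto.comp Real.tendsto_log_atTop).congr' ?_
  filter_upwards [eventually_gt_atTop 0] with x hx
  exact expMean_log hx

end WienerIkehara

section PrimeIdealTheorem

open Topology Module LSeries

theorem sum_degreeOneCount_mul_log_le (K : Type*) [Field K] [NumberField K] (n : ℕ) :
    ∑ k ∈ Finset.Icc 1 n, degreeOneCount K k * Real.log k ≤ finrank ℚ K * Real.log 4 * n := by
  have htheta := Chebyshev.theta_le_log4_mul_x (Nat.cast_nonneg (α := ℝ) n)
  rw [Chebyshev.theta_eq_sum_Icc, Nat.floor_natCast, Finset.sum_filter] at htheta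
  calc ∑ k ∈ Finset.Icc 1 n, degreeOneCount K k * Real.log k
      ≤ ∑ k ∈ Finset.Icc 1 n, finrank ℚ K * (if k.Prime then Real.log k else 0) := by
        refine Finset.sum_le_sum fun k _ ↦ ?_
        split_ifs with hk
        · exact mul_le_mul_of_nonneg_right (mod_cast degreeOneCount_le_finrank k)
            (Real.log_natCast_nonneg k)
        · simp [degreeOneCount, hk]
    _ ≤ ∑ k ∈ Finset.Icc 0 n, finrank ℚ K * (if k.Prime then Real.log k else 0) :=
        Finset.sum_le_sum_of_subset_of_nonneg (Finset.Icc_subset_Icc_left zero_le_one)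
          fun k _ _ ↦ by
            have := Real.log_natCast_nonneg k
            split_ifs <;> positivity
    _ ≤ finrank ℚ K * Real.log 4 * n := by
        rw [← Finset.mul_sum, mul_assoc]
        gcongr

theorem tendsto_sum_degreeOneCount_mul_log_div (K : Type*) [Field K] [NumberField K] :
    Tendsto (fun x : ℝ ↦ (∑ k ∈ Finset.Icc 1 ⌊x⌋₊, degreeOneCount K k * Real.log k) / x)
      atTop (𝓝 1) := by
  obtain ⟨G, hG, hLseries⟩ := exists_continuousOn_LSeries_logMul_degreeOneCount K
  refine tendsto_sum_div_of_LSeries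
    (fun n ↦ mul_nonneg (Nat.cast_nonneg _) (Real.log_natCast_nonneg n))
    (sum_degreeOneCount_mul_log_le K) hG fun s hs ↦ ?_
  rw [← hLseries s hs]
  congr 1
  ext n
  simp [logMul, mul_comm]

end PrimeIdealTheorem

section SplitPrimes

open Module NumberField Ideal IsDedekindDomain
open scoped Pointwise

variable {K : Type*} [Field K] [NumberField K]

omit [NumberField K] in
theorem liesOver_of_primeBelow_eq {v : HeightOneSpectrum (𝓞 K)} {q : ℕ} (hv : primeBelow v = q) :
    v.asIdeal.LiesOver (span {(q : ℤ)}) := by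
  have hlies := Int.liesOver_span_absNorm v.asIdeal
  rw [primeBelow] at hv
  rwa [hv] at hlies

omit [NumberField K] in
theorem natCast_primeBelow_mem (v : HeightOneSpectrum (𝓞 K)) :
    (primeBelow v : 𝓞 K) ∈ v.asIdeal := by
  simpa [under, primeBelow] using absNorm_mem (under ℤ v.asIdeal)

theorem exists_primeBelow_eq {q : ℕ} (hq : q.Prime) :
    ∃ v : HeightOneSpectrum (𝓞 K), primeBelow v = q := by
  have hbot : span {(q : ℤ)} ≠ ⊥ := by simpa using hq.ne_zero
  have := (span_singleton_prime (mod_cast hq.ne_zero)).2 (Nat.prime_iff_prime_int.1 hq)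
  obtain ⟨⟨P, hP, hPq⟩⟩ := (inferInstance : Nonempty (primesOver (span {(q : ℤ)}) (𝓞 K)))
  refine ⟨⟨P, hP, ne_bot_of_liesOver_of_ne_bot hbot P⟩, ?_⟩
  rw [primeBelow, ← over_def P (span {(q : ℤ)})]
  simp

theorem nonempty_ringHom_zmod_of_degreeOneCount_ne_zero {q : ℕ} (hq : q.Prime)
    (hcount : degreeOneCount K q ≠ 0) : Nonempty (𝓞 K →+* ZMod q) := by
  rw [degreeOneCount, if_pos hq] at hcount
  obtain ⟨⟨v, hv⟩⟩ := (Nat.card_ne_zero.1 hcount).1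
  have hcard : Nat.card (𝓞 K ⧸ v.asIdeal) = q := hv
  have := v.isMaximal
  let _ : Field (𝓞 K ⧸ v.asIdeal) := Ideal.Quotient.field _
  have : Finite (𝓞 K ⧸ v.asIdeal) := Nat.finite_of_card_ne_zero (hcard ▸ hq.ne_zero)
  have : Fintype (𝓞 K ⧸ v.asIdeal) := Fintype.ofFinite _
  have e : ZMod q ≃+* (𝓞 K ⧸ v.asIdeal) :=
    ZMod.ringEquivOfPrime _ hq (by rw [← Nat.card_eq_fintype_card, hcard])
  exact ⟨e.symm.toRingHom.comp (Ideal.Quotient.mk v.asIdeal)⟩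

theorem degreeOneCount_eq_ncard_primesOver [IsGalois ℚ K] {q : ℕ} (hq : q.Prime)
    (hdeg : (span {(q : ℤ)}).inertiaDegIn (𝓞 K) = 1) :
    degreeOneCount K q = (primesOver (span {(q : ℤ)}) (𝓞 K)).ncard := by
  have hbot : span {(q : ℤ)} ≠ ⊥ := by simpa using hq.ne_zero
  have hprime := (span_singleton_prime (mod_cast hq.ne_zero)).2 (Nat.prime_iff_prime_int.1 hq)
  have := hprime.isMaximal hbot
  have hnorm (P : primesOver (span {(q : ℤ)}) (𝓞 K)) : absNorm P.1 = q := by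
    have := P.2.1
    have := P.2.2
    have : P.1.IsMaximal := P.2.1.isMaximal (ne_bot_of_liesOver_of_ne_bot hbot P.1)
    rw [absNorm_eq_pow_inertiaDeg' P.1 hq, inertiaDeg'_eq_inertiaDeg,
      ← inertiaDegIn_eq_inertiaDeg (span {(q : ℤ)}) P.1 Gal(K/ℚ), hdeg, pow_one]
  rw [degreeOneCount, if_pos hq, ← Nat.card_coe_set_eq]
  exact Nat.card_congr
    { toFun := fun v ↦ ⟨v.1.asIdeal, v.1.isPrime,
        liesOver_of_primeBelow_eq (primeBelow_eq_of_primeNorm_eq hq v.2)⟩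
      invFun := fun P ↦ ⟨⟨P.1, P.2.1, have := P.2.2; ne_bot_of_liesOver_of_ne_bot hbot P.1⟩,
        hnorm P⟩
      left_inv := fun _ ↦ rfl
      right_inv := fun _ ↦ rfl }

theorem degreeOneCount_eq_finrank_of_stabilizer_eq_bot [IsGalois ℚ K] {q : ℕ} (hq : q.Prime)
    {v : HeightOneSpectrum (𝓞 K)} (hv : primeBelow v = q)
    (hstab : MulAction.stabilizer Gal(K/ℚ) v.asIdeal = ⊥) :
    degreeOneCount K q = finrank ℚ K := by
  have hbot : span {(q : ℤ)} ≠ ⊥ := by simpa using hq.ne_zero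
  have hprime := (span_singleton_prime (mod_cast hq.ne_zero)).2 (Nat.prime_iff_prime_int.1 hq)
  have := hprime.isMaximal hbot
  have : Fact q.Prime := ⟨hq⟩
  have := liesOver_of_primeBelow_eq hv
  have := v.isPrime
  have hcard := card_stabilizer_eq (G := Gal(K/ℚ)) (span {(q : ℤ)}) v.asIdeal
  rw [hstab, Subgroup.card_bot] at hcard
  have hmul := ncard_primesOver_mul_ramificationIdxIn_mul_inertiaDegIn
    (span {(q : ℤ)}) (𝓞 K) Gal(K/ℚ)
  rw [← hcard, mul_one, IsGalois.card_aut_eq_finrank] at hmul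
  rw [degreeOneCount_eq_ncard_primesOver hq (Nat.eq_one_of_mul_eq_one_left hcard.symm), hmul]

theorem smul_sub_self_mem_asIdeal {q : ℕ} (hq : q.Prime) {v : HeightOneSpectrum (𝓞 K)}
    (hv : primeBelow v = q) {α : 𝓞 K} (hα : α ^ q - α ∈ v.asIdeal) {σ : Gal(K/ℚ)}
    (hσ : σ • v.asIdeal = v.asIdeal) : σ • α - α ∈ v.asIdeal := by
  have : Fact q.Prime := ⟨hq⟩
  have := v.isMaximal
  let _ : Field (𝓞 K ⧸ v.asIdeal) := Ideal.Quotient.field _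
  have : CharP (𝓞 K ⧸ v.asIdeal) q := (CharP.charP_iff_prime_eq_zero hq).2 <| by
    rw [← map_natCast (Ideal.Quotient.mk v.asIdeal)]
    exact Ideal.Quotient.eq_zero_iff_mem.2 (hv ▸ natCast_primeBelow_mem v)
  have hfrob : Ideal.Quotient.mk v.asIdeal α ^ q = Ideal.Quotient.mk v.asIdeal α := by
    rwa [← map_pow, Ideal.Quotient.mk_eq_mk_iff_sub_mem]
  obtain ⟨a, ha⟩ := (mem_bot_iff_intCast q _).1 <|
    (Subfield.mem_bot_iff_pow_eq_self (𝓞 K ⧸ v.asIdeal) q).2 hfrob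
  have hsub : α - a ∈ v.asIdeal := by
    rw [← Ideal.Quotient.eq_zero_iff_mem, map_sub, map_intCast, ha, sub_self]
  have hsmul_sub : σ • α - a ∈ v.asIdeal := by
    have hsmul_int : σ • (a : 𝓞 K) = a :=
      map_intCast (MulSemiringAction.toRingHom Gal(K/ℚ) (𝓞 K) σ) a
    rw [← hsmul_int, ← smul_sub]
    exact hσ ▸ Ideal.smul_mem_pointwise_smul σ _ _ hsub
  simpa using v.asIdeal.sub_mem hsmul_sub hsub

theorem exists_forall_sub_mem_imp_eq (s : Finset (𝓞 K)) :
    ∃ d : ℕ, d ≠ 0 ∧ ∀ v : HeightOneSpectrum (𝓞 K), ¬ primeBelow v ∣ d →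
      ∀ α ∈ s, ∀ β ∈ s, α - β ∈ v.asIdeal → α = β := by
  set D : 𝓞 K := ∏ p ∈ s.offDiag, (p.1 - p.2)
  have hD_ne : D ≠ 0 :=
    Finset.prod_ne_zero_iff.2 fun p hp ↦ sub_ne_zero.2 (Finset.mem_offDiag.1 hp).2.2
  refine ⟨absNorm (span {D}), by simpa [absNorm_eq_zero_iff] using hD_ne,
    fun v hv α hα β hβ hsub ↦ of_not_not fun hne ↦ hv ?_⟩
  have hmem : (α, β) ∈ s.offDiag := Finset.mem_offDiag.2 ⟨hα, hβ, hne⟩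
  have hDv : D ∈ v.asIdeal := v.asIdeal.mem_of_dvd
    (Finset.dvd_prod_of_mem (fun p : 𝓞 K × 𝓞 K ↦ p.1 - p.2) hmem) hsub
  have hdvd : primeNorm v ∣ absNorm (span {D}) :=
    absNorm_dvd_absNorm_of_le (by simpa [span_le] using hDv)
  obtain ⟨e, he, hnorm⟩ := exists_primeNorm_eq_pow v
  exact (dvd_pow_self _ he).trans (hnorm ▸ hdvd)

theorem eq_one_of_forall_smul_eq_self {f : ℤ[X]} (hf : f.Monic)
    [(f.map (algebraMap ℤ ℚ)).IsSplittingField ℚ K] {σ : Gal(K/ℚ)}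
    (hσ : ∀ α : 𝓞 K, aeval α f = 0 → σ • α = α) : σ = 1 := by
  have hext : (σ : K →ₐ[ℚ] K) = AlgHom.id ℚ K := by
    refine AlgHom.ext_of_adjoin_eq_top
      (IsSplittingField.adjoin_rootSet K (f.map (algebraMap ℤ ℚ))) fun x hx ↦ ?_
    have hroot : aeval x f = 0 := by
      simpa only [aeval_map_algebraMap] using (mem_rootSet.1 hx).2
    let α : 𝓞 K := ⟨x, ⟨f, hf, by rwa [aeval_def] at hroot⟩⟩
    have hα : aeval α f = 0 := by
      rw [← RingOfIntegers.coe_injective.eq_iff, ← aeval_algebraMap_apply, map_zero]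
      exact hroot
    exact congrArg (fun β : 𝓞 K ↦ (β : K)) (hσ α hα)
  exact AlgEquiv.ext fun x ↦ DFunLike.congr_fun hext x

theorem aeval_smul_eq_zero {f : ℤ[X]} (σ : Gal(K/ℚ)) {α : 𝓞 K} (hα : aeval α f = 0) :
    aeval (σ • α) f = 0 := by
  have hsmul : σ • α = (MulSemiringAction.toRingHom Gal(K/ℚ) (𝓞 K) σ).toIntAlgHom α := rfl
  rw [hsmul, aeval_algHom_apply, hα, map_zero]

theorem exists_forall_degreeOneCount_eq_finrank {f : ℤ[X]} (hf : f.Monic)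
    [(f.map (algebraMap ℤ ℚ)).IsSplittingField ℚ K] :
    ∃ d : ℕ, d ≠ 0 ∧ ∀ q : ℕ, q.Prime → ¬ q ∣ d →
      (∀ v : HeightOneSpectrum (𝓞 K), primeBelow v = q →
        ∀ α : 𝓞 K, aeval α f = 0 → α ^ q - α ∈ v.asIdeal) →
      degreeOneCount K q = finrank ℚ K := by
  have : Normal ℚ K := Normal.of_isSplittingField (f.map (algebraMap ℤ ℚ))
  have : IsGalois ℚ K := ⟨⟩
  let roots : Finset (𝓞 K) := (f.map (algebraMap ℤ (𝓞 K))).roots.toFinset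
  have mem_roots (α : 𝓞 K) : α ∈ roots ↔ aeval α f = 0 := by
    simp [roots, (hf.map _).ne_zero, aeval_def, eval_map]
  obtain ⟨d, hd, hdistinct⟩ := exists_forall_sub_mem_imp_eq roots
  refine ⟨d, hd, fun q hq hqd hpow ↦ ?_⟩
  obtain ⟨v, hv⟩ := exists_primeBelow_eq (K := K) hq
  refine degreeOneCount_eq_finrank_of_stabilizer_eq_bot hq hv <| eq_bot_iff.2 fun σ hσ ↦
    eq_one_of_forall_smul_eq_self hf fun α hα ↦ hdistinct v (hv ▸ hqd) _
      ((mem_roots _).2 (aeval_smul_eq_zero σ hα)) _ ((mem_roots _).2 hα)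
      (smul_sub_self_mem_asIdeal hq hv (hpow v hv α hα) hσ)

end SplitPrimes

section Congruences

open NumberField

variable {K R : Type*} [Field K] [CommRing R]

theorem mod_eq_one_of_isPrimitiveRoot {m : ℕ} (hm : 1 < m) {ζ : K} (hζ : IsPrimitiveRoot ζ m)
    {q : ℕ} (hq : q.Prime) (hqm : ¬ q ∣ m) (φ : 𝓞 K →+* ZMod q) : q % m = 1 := by
  have : Fact q.Prime := ⟨hq⟩
  have : NeZero m := ⟨by lia⟩
  have : NeZero (m : ZMod q) := ⟨by rwa [Ne, ZMod.natCast_eq_zero_iff]⟩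
  have hroot := (hζ.toInteger_isPrimitiveRoot.isRoot_cyclotomic (by lia)).map (f := φ)
  rw [map_cyclotomic, isRoot_cyclotomic_iff] at hroot
  have hdvd : m ∣ q - 1 := by
    rw [hroot.eq_orderOf]
    exact ZMod.orderOf_dvd_card_sub_one (hroot.ne_zero (by lia))
  rw [← Nat.mod_eq_of_lt hm]
  exact ((Nat.modEq_iff_dvd' hq.one_le).2 hdvd).symm

theorem pow_eq_self_of_mod_eq_one {m q : ℕ} (hqm : q % m = 1) {α : R} (hα : α ^ m = 1) :
    α ^ q = α := by
  rw [← Nat.div_add_mod q m, hqm, pow_add, pow_mul, hα, one_pow, one_mul, pow_one]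

theorem natCast_dvd_pow_sub_self {N q : ℕ} {g : ℤ} (hN : N ≠ 0) (hq : q.Prime)
    (hqg : ¬ (q : ℤ) ∣ g) (hqm : q % (2 * N) = 1) (hpow : ∃ y : ZMod q, y ^ N = g) {α : R}
    (hα : α ^ N = g) : (q : R) ∣ α ^ q - α := by
  have : Fact q.Prime := ⟨hq⟩
  obtain ⟨y, hy⟩ := hpow
  have hy_ne : y ≠ 0 := by
    rintro rfl
    rw [zero_pow hN, eq_comm, ZMod.intCast_zmod_eq_zero_iff_dvd] at hy
    exact hqg hy
  obtain ⟨t, ht⟩ : ∃ t, q = N * (2 * t) + 1 :=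
    ⟨q / (2 * N), by rw [← mul_assoc, mul_comm N, ← hqm, Nat.div_add_mod]⟩
  have hdvd : (q : ℤ) ∣ g ^ (2 * t) - 1 := by
    rw [← ZMod.intCast_zmod_eq_zero_iff_dvd, Int.cast_sub, Int.cast_pow, ← hy, ← pow_mul,
      show N * (2 * t) = q - 1 by lia, ZMod.pow_card_sub_one_eq_one hy_ne, Int.cast_one, sub_self]
  have hfactor : α ^ q - α = α * ((g ^ (2 * t) - 1 : ℤ) : R) := by
    conv_lhs => rw [ht, pow_succ, pow_mul, hα]
    push_cast
    ring
  rw [hfactor]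
  exact Dvd.dvd.mul_left (by exact_mod_cast Int.cast_dvd_cast (α := R) _ _ hdvd) α

end Congruences

section CyclotomicAndKummer

open Module NumberField IsDedekindDomain

variable {K : Type*} [Field K] [NumberField K]

theorem exists_forall_degreeOneCount_cyclotomic_eq {m : ℕ} (hm : 1 < m)
    [IsCyclotomicExtension {m} ℚ K] :
    ∃ d : ℕ, d ≠ 0 ∧ ∀ q : ℕ, q.Prime → ¬ q ∣ d →
      (degreeOneCount K q : ℝ) = if q % m = 1 then (finrank ℚ K : ℝ) else 0 := by
  have : NeZero m := ⟨by lia⟩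
  have : ((X ^ m - 1 : ℤ[X]).map (algebraMap ℤ ℚ)).IsSplittingField ℚ K := by
    simpa using IsCyclotomicExtension.isSplittingField_X_pow_sub_one m ℚ K
  obtain ⟨d, hd, hsplit⟩ := exists_forall_degreeOneCount_eq_finrank (K := K) (f := X ^ m - 1)
    (monic_X_pow_sub_C (1 : ℤ) (by lia : m ≠ 0))
  refine ⟨d * m, mul_ne_zero hd (by lia), fun q hq hqd ↦ ?_⟩
  split_ifs with hqm
  · rw [hsplit q hq (fun hdvd ↦ hqd (hdvd.mul_right _)) fun v _ α hα ↦ ?_]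
    have hα : α ^ m = 1 := by simpa [sub_eq_zero] using hα
    rw [pow_eq_self_of_mod_eq_one hqm hα, sub_self]
    exact v.asIdeal.zero_mem
  · rw [Nat.cast_eq_zero]
    by_contra hcount
    obtain ⟨φ⟩ := nonempty_ringHom_zmod_of_degreeOneCount_ne_zero hq hcount
    exact hqm <| mod_eq_one_of_isPrimitiveRoot hm (IsCyclotomicExtension.zeta_spec m ℚ K) hq
      (fun hdvd ↦ hqd (hdvd.mul_left _)) φ

theorem kummerPolynomial_ne_zero {N : ℕ} (hN : N ≠ 0) (a : ℚ) :
    ((X ^ N - C a) * (X ^ (2 * N) - 1) : ℚ[X]) ≠ 0 :=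
  ((monic_X_pow_sub_C a hN).mul (monic_X_pow_sub_C (1 : ℚ) (by lia : 2 * N ≠ 0))).ne_zero

omit [NumberField K] in
theorem exists_pow_eq_of_isSplittingField [CharZero K] {N : ℕ} {a : ℚ} (hN : N ≠ 0)
    [hK : ((X ^ N - C a) * (X ^ (2 * N) - 1) : ℚ[X]).IsSplittingField ℚ K] :
    ∃ x : K, x ^ N = a := by
  have hsplits := hK.splits.of_dvd (f := (X ^ N - C a : ℚ[X]).map (algebraMap ℚ K))
    (Polynomial.map_ne_zero (kummerPolynomial_ne_zero hN a))
    (Polynomial.map_dvd _ (dvd_mul_right _ _))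
  obtain ⟨x, hx⟩ := hsplits.exists_eval_eq_zero (by
    rw [degree_map, degree_X_pow_sub_C (by lia)]
    exact_mod_cast hN)
  exact ⟨x, by simpa [sub_eq_zero] using hx⟩

omit [NumberField K] in
theorem nonempty_algHom_of_isSplittingField [CharZero K] {N : ℕ} {a : ℚ} (hN : N ≠ 0)
    [hK : ((X ^ N - C a) * (X ^ (2 * N) - 1) : ℚ[X]).IsSplittingField ℚ K]
    (F : Type*) [Field F] [CharZero F] [IsCyclotomicExtension {2 * N} ℚ F] :
    Nonempty (F →ₐ[ℚ] K) := by
  have : NeZero (2 * N) := ⟨by lia⟩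
  have := IsCyclotomicExtension.isSplittingField_X_pow_sub_one (2 * N) ℚ F
  exact ⟨IsSplittingField.lift F (X ^ (2 * N) - 1) <| hK.splits.of_dvd
    (Polynomial.map_ne_zero (kummerPolynomial_ne_zero hN a))
    (Polynomial.map_dvd _ (dvd_mul_left _ _))⟩

theorem finrank_lt_finrank_of_isSplittingField {N : ℕ} {a : ℚ} (hN : N ≠ 0)
    [((X ^ N - C a) * (X ^ (2 * N) - 1) : ℚ[X]).IsSplittingField ℚ K]
    {F : Type*} [Field F] [NumberField F] [IsCyclotomicExtension {2 * N} ℚ F]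
    (hF : ∀ x : F, x ^ N ≠ a) : finrank ℚ F < finrank ℚ K := by
  obtain ⟨ι⟩ := nonempty_algHom_of_isSplittingField (K := K) (a := a) hN F
  have hι : Function.Injective ι.toLinearMap := ι.toRingHom.injective
  refine lt_of_le_of_ne (LinearMap.finrank_le_finrank_of_injective hι) fun heq ↦ ?_
  obtain ⟨x, hx⟩ := exists_pow_eq_of_isSplittingField (K := K) (a := a) hN
  obtain ⟨y, rfl⟩ := (LinearMap.injective_iff_surjective_of_finrank_eq_finrank heq).1 hι x
  refine hF y (ι.toRingHom.injective ?_)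
  simpa using hx

omit [NumberField K] in
theorem exists_ringOfIntegers_pow_eq_of_isSplittingField [CharZero K] {N : ℕ} {g : ℤ}
    (hN : N ≠ 0) [((X ^ N - C (g : ℚ)) * (X ^ (2 * N) - 1) : ℚ[X]).IsSplittingField ℚ K] :
    ∃ α : 𝓞 K, α ^ N = g := by
  obtain ⟨x, hx⟩ := exists_pow_eq_of_isSplittingField (K := K) (a := g) hN
  have hx : x ^ N = g := by simpa using hx
  have hint : IsIntegral ℤ x :=
    IsIntegral.of_pow (Nat.pos_of_ne_zero hN) (hx ▸ isIntegral_algebraMap (R := ℤ) (x := g))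
  let α : 𝓞 K := ⟨x, hint⟩
  refine ⟨α, RingOfIntegers.coe_injective ?_⟩
  rw [map_pow, map_intCast]
  exact hx

theorem exists_forall_degreeOneCount_kummer_eq {N : ℕ} {g : ℤ} (hN : N ≠ 0) (hg : g ≠ 0)
    [hK : ((X ^ N - C (g : ℚ)) * (X ^ (2 * N) - 1) : ℚ[X]).IsSplittingField ℚ K] :
    ∃ d : ℕ, d ≠ 0 ∧ ∀ q : ℕ, q.Prime → ¬ q ∣ d → (degreeOneCount K q : ℝ) =
      if q % (2 * N) = 1 ∧ ∃ y : ZMod q, y ^ N = g then (finrank ℚ K : ℝ) else 0 := by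
  have : NeZero (2 * N) := ⟨by lia⟩
  have : (((X ^ N - C g) * (X ^ (2 * N) - 1) : ℤ[X]).map (algebraMap ℤ ℚ)).IsSplittingField
      ℚ K := by
    simpa using hK
  obtain ⟨d, hd, hsplit⟩ := exists_forall_degreeOneCount_eq_finrank (K := K)
    (f := (X ^ N - C g) * (X ^ (2 * N) - 1))
    ((monic_X_pow_sub_C g hN).mul (monic_X_pow_sub_C (1 : ℤ) (by lia : 2 * N ≠ 0)))
  refine ⟨d * (2 * N) * g.natAbs, by simp [hd, hN, hg], fun q hq hqd ↦ ?_⟩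
  have hqN : ¬ q ∣ 2 * N := fun hdvd ↦ hqd ((hdvd.mul_left _).mul_right _)
  have hqg : ¬ (q : ℤ) ∣ g := fun hdvd ↦ hqd ((Int.natCast_dvd.1 hdvd).mul_left _)
  split_ifs with hpow
  · rw [hsplit q hq (fun hdvd ↦ hqd ((hdvd.mul_right _).mul_right _)) fun v hv α hα ↦ ?_]
    have hα : α ^ N = g ∨ α ^ (2 * N) = 1 := by simpa [sub_eq_zero] using hα
    rcases hα with hα | hα
    · exact v.asIdeal.mem_of_dvd (natCast_dvd_pow_sub_self hN hq hqg hpow.1 hpow.2 hα)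
        (hv ▸ natCast_primeBelow_mem v)
    · rw [pow_eq_self_of_mod_eq_one hpow.1 hα, sub_self]
      exact v.asIdeal.zero_mem
  · rw [Nat.cast_eq_zero]
    by_contra hcount
    obtain ⟨φ⟩ := nonempty_ringHom_zmod_of_degreeOneCount_ne_zero hq hcount
    have : IsCyclotomicExtension {2 * N} ℚ (CyclotomicField (2 * N) ℚ) :=
      CyclotomicField.isCyclotomicExtension (2 * N) ℚ
    obtain ⟨ι⟩ := nonempty_algHom_of_isSplittingField (K := K) (a := g) hN
      (CyclotomicField (2 * N) ℚ)
    obtain ⟨α, hα⟩ := exists_ringOfIntegers_pow_eq_of_isSplittingField (K := K) (g := g) hN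
    have hζ := (IsCyclotomicExtension.zeta_spec (2 * N) ℚ
      (CyclotomicField (2 * N) ℚ)).map_of_injective (f := ι) ι.toRingHom.injective
    exact hpow ⟨mod_eq_one_of_isPrimitiveRoot (by lia) hζ hq hqN φ,
      φ α, by rw [← map_pow, hα, map_intCast]⟩

end CyclotomicAndKummer

section ChebyshevTheta

open Topology

/-- The Chebyshev function `∑ log k` over the elements `k ≤ x` of a set of natural numbers; for
the set of primes this is Chebyshev's `θ`. -/
noncomputable def chebyshevThetaOn (P : Set ℕ) (x : ℕ) : ℝ :=
  ∑ k ∈ Finset.range (x + 1) with k ∈ P, Real.log k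

theorem chebyshevThetaOn_eq_sum_indicator_mul_log (P : Set ℕ) (x : ℕ) :
    chebyshevThetaOn P x = ∑ k ∈ Finset.Icc 1 x, P.indicator 1 k * Real.log k := by
  rw [chebyshevThetaOn, Finset.sum_filter, Finset.range_eq_Ico,
    Finset.sum_eq_sum_Ico_succ_bot x.succ_pos]
  simp [Set.indicator_apply, Finset.Ico_add_one_right_eq_Icc]

theorem chebyshevThetaOn_diff {P Q : Set ℕ} (hQP : Q ⊆ P) (x : ℕ) :
    chebyshevThetaOn (P \ Q) x = chebyshevThetaOn P x - chebyshevThetaOn Q x := by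
  simp only [chebyshevThetaOn_eq_sum_indicator_mul_log, ← Finset.sum_sub_distrib, ← sub_mul,
    Set.indicator_sdiff hQP, Pi.sub_apply]

theorem chebyshevThetaOn_le_card_mul_log (P : Set ℕ) (x : ℕ) :
    chebyshevThetaOn P x ≤ ((Finset.range (x + 1)).filter (· ∈ P)).card * Real.log x := by
  rw [← nsmul_eq_mul]
  refine Finset.sum_le_card_nsmul _ _ _ fun k hk ↦ ?_
  have hkx : k ≤ x := Finset.mem_range_succ_iff.1 (Finset.mem_filter.1 hk).1
  rcases k.eq_zero_or_pos with rfl | hk_pos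
  · simpa using Real.log_natCast_nonneg x
  · gcongr

theorem card_le_chebyshevThetaOn_div_log_add (P : Set ℕ) (x : ℕ) {y : ℝ} (hy : 1 < y) :
    (((Finset.range (x + 1)).filter (· ∈ P)).card : ℝ) ≤
      chebyshevThetaOn P x / Real.log y + (y + 1) := by
  set s := (Finset.range (x + 1)).filter (· ∈ P) with hs
  rw [← Finset.card_filter_add_card_filter_not (s := s) (fun k : ℕ ↦ y < k), Nat.cast_add]
  refine add_le_add ?_ ?_
  · rw [le_div_iff₀ (Real.log_pos hy), ← nsmul_eq_mul, chebyshevThetaOn, ← hs]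
    refine (Finset.card_nsmul_le_sum _ (fun k : ℕ ↦ Real.log k) _ fun k hk ↦ ?_).trans
      (Finset.sum_le_sum_of_subset_of_nonneg (Finset.filter_subset _ s)
        fun k _ _ ↦ Real.log_natCast_nonneg k)
    exact Real.log_le_log (by positivity) (Finset.mem_filter.1 hk).2.le
  · have hsub : s.filter (fun k : ℕ ↦ ¬ y < k) ⊆ Finset.range (⌊y⌋₊ + 1) := fun k hk ↦
      Finset.mem_range_succ_iff.2 (Nat.le_floor (not_lt.1 (Finset.mem_filter.1 hk).2))
    calc ((s.filter (fun k : ℕ ↦ ¬ y < k)).card : ℝ) ≤ (⌊y⌋₊ + 1 : ℕ) := by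
          simpa only [Finset.card_range, Nat.cast_le] using Finset.card_le_card hsub
      _ ≤ y + 1 := by
          push_cast
          gcongr
          exact Nat.floor_le (by positivity)

theorem tendsto_log_div_log_div_log_sq :
    Tendsto (fun x : ℝ ↦ Real.log x / Real.log (x / Real.log x ^ 2)) atTop (𝓝 1) := by
  have hratio : Tendsto (fun x : ℝ ↦ Real.log (Real.log x) / Real.log x) atTop (𝓝 0) :=
    Real.isLittleO_log_id_atTop.tendsto_div_nhds_zero.comp Real.tendsto_log_atTop
  have hlim := ((hratio.const_mul 2).const_sub 1).inv₀ (by simp)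
  rw [mul_zero, sub_zero, inv_one] at hlim
  refine hlim.congr' ?_
  filter_upwards [eventually_gt_atTop 1] with x hx
  have hlog := Real.log_pos hx
  rw [Real.log_div (by positivity) (by positivity), Real.log_pow, ← inv_div]
  push_cast
  field_simp

theorem eventually_one_lt_div_log_sq : ∀ᶠ x : ℝ in atTop, 1 < x / Real.log x ^ 2 := by
  have hlim : Tendsto (fun x : ℝ ↦ Real.log x ^ 2 / x) atTop (𝓝 0) :=
    (Real.isLittleO_pow_log_id_atTop (n := 2)).tendsto_div_nhds_zero
  filter_upwards [hlim.eventually_lt_const one_pos, eventually_gt_atTop 1] with x hlt hx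
  have hlog := Real.log_pos hx
  rw [div_lt_one (by positivity)] at hlt
  rwa [one_lt_div (by positivity)]

/-- Counting separately the elements up to `x / (log x) ^ 2` loses only `O(x / (log x) ^ 2)`,
while the remaining ones have logarithm `~ log x`. -/
theorem tendsto_card_mul_log_div {P : Set ℕ} {c : ℝ}
    (hP : Tendsto (fun x : ℕ ↦ chebyshevThetaOn P x / x) atTop (𝓝 c)) :
    Tendsto (fun x : ℕ ↦ (((Finset.range (x + 1)).filter (· ∈ P)).card : ℝ) * Real.log x / x)
      atTop (𝓝 c) := by
  have hcast := tendsto_natCast_atTop_atTop (R := ℝ)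
  have hlog : Tendsto (fun x : ℕ ↦ Real.log x) atTop atTop := Real.tendsto_log_atTop.comp hcast
  have hlog_div : Tendsto (fun x : ℕ ↦ Real.log x / x) atTop (𝓝 0) :=
    Real.isLittleO_log_id_atTop.tendsto_div_nhds_zero.comp hcast
  have hupper := (hP.mul (tendsto_log_div_log_div_log_sq.comp hcast)).add
    (hlog.inv_tendsto_atTop.add hlog_div)
  rw [mul_one, add_zero, add_zero] at hupper
  refine tendsto_of_tendsto_of_tendsto_of_le_of_le' hP hupper
    (Eventually.of_forall fun x ↦ by gcongr; exact chebyshevThetaOn_le_card_mul_log P x) ?_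
  filter_upwards [hcast.eventually eventually_one_lt_div_log_sq, eventually_gt_atTop 1]
    with x hy hx
  have hx : (1 : ℝ) < x := mod_cast hx
  have hlog_pos := Real.log_pos hx
  calc (((Finset.range (x + 1)).filter (· ∈ P)).card : ℝ) * Real.log x / x
      ≤ (chebyshevThetaOn P x / Real.log (x / Real.log x ^ 2) + (x / Real.log x ^ 2 + 1)) *
          Real.log x / x := by
        gcongr
        exact card_le_chebyshevThetaOn_div_log_add P x hy
    _ = chebyshevThetaOn P x / x * (Real.log x / Real.log (x / Real.log x ^ 2)) +
          ((Real.log x)⁻¹ + Real.log x / x) := by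
        have := Real.log_pos hy
        field_simp

theorem tendsto_card_div_card {P Q : Set ℕ} {c : ℝ}
    (hP : Tendsto (fun x : ℕ ↦ chebyshevThetaOn P x / x) atTop (𝓝 c))
    (hQ : Tendsto (fun x : ℕ ↦ chebyshevThetaOn Q x / x) atTop (𝓝 1)) :
    Tendsto (fun x : ℕ ↦ (((Finset.range (x + 1)).filter (· ∈ P)).card : ℝ) /
      (((Finset.range (x + 1)).filter (· ∈ Q)).card : ℝ)) atTop (𝓝 c) := by
  have hlim := (tendsto_card_mul_log_div hP).div (tendsto_card_mul_log_div hQ) one_ne_zero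
  rw [div_one] at hlim
  refine hlim.congr' ?_
  filter_upwards [eventually_gt_atTop 1] with x hx
  have hx : (1 : ℝ) < x := mod_cast hx
  simp only [Pi.div_apply]
  rw [div_div_div_cancel_right₀ (by positivity), mul_div_mul_right _ _ (Real.log_pos hx).ne']

end ChebyshevTheta

section Reciprocals

open Topology

theorem summable_sum_Ioc {f : ℕ → ℝ} (hf : Summable f) (hf_nonneg : ∀ k, 0 ≤ f k) {u : ℕ → ℕ}
    (hu : Monotone u) : Summable fun k ↦ ∑ j ∈ Finset.Ioc (u k) (u (k + 1)), f j := by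
  refine summable_of_sum_range_le (c := ∑' j, f j)
    (fun k ↦ Finset.sum_nonneg fun j _ ↦ hf_nonneg j) fun n ↦ ?_
  have hunion : ∑ k ∈ Finset.range n, ∑ j ∈ Finset.Ioc (u k) (u (k + 1)), f j =
      ∑ j ∈ Finset.Ioc (u 0) (u n), f j := by
    induction n with
    | zero => simp
    | succ n ih =>
      rw [Finset.sum_range_succ, ih,
        Finset.sum_Ioc_consecutive _ (hu n.zero_le) (hu n.le_succ)]
  exact hunion ▸ hf.sum_le_tsum _ fun j _ ↦ hf_nonneg j

theorem chebyshevThetaOn_sub_le (P : Set ℕ) {m n : ℕ} (hmn : m ≤ n) :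
    chebyshevThetaOn P n - chebyshevThetaOn P m ≤
      (∑ k ∈ Finset.Ioc m n, P.indicator (fun k ↦ 1 / (k : ℝ)) k) * (n * Real.log n) := by
  have hsub : chebyshevThetaOn P n - chebyshevThetaOn P m =
      ∑ k ∈ Finset.Ioc m n, P.indicator 1 k * Real.log k := by
    have hIcc (x : ℕ) : Finset.Icc 1 x = Finset.Ioc 0 x := Finset.Icc_add_one_left_eq_Ioc 0 x
    rw [chebyshevThetaOn_eq_sum_indicator_mul_log, chebyshevThetaOn_eq_sum_indicator_mul_log,
      hIcc, hIcc, ← Finset.sum_Ioc_consecutive _ m.zero_le hmn, add_sub_cancel_left]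
  rw [hsub, Finset.sum_mul]
  refine Finset.sum_le_sum fun k hk ↦ ?_
  obtain ⟨hmk, hkn⟩ := Finset.mem_Ioc.1 hk
  have hk_pos : (0 : ℝ) < k := mod_cast hmk.pos
  by_cases hkP : k ∈ P
  · simp only [hkP, Set.indicator_of_mem, Pi.one_apply, one_mul]
    rw [one_div, ← div_eq_inv_mul, le_div_iff₀ hk_pos, mul_comm]
    gcongr
  · simp [hkP]

theorem tendsto_chebyshevThetaOn_two_pow_succ_sub_div {P : Set ℕ} {c : ℝ}
    (hP : Tendsto (fun x : ℕ ↦ chebyshevThetaOn P x / x) atTop (𝓝 c)) :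
    Tendsto (fun k : ℕ ↦ (chebyshevThetaOn P (2 ^ (k + 1)) - chebyshevThetaOn P (2 ^ k)) /
      (2 : ℝ) ^ (k + 1)) atTop (𝓝 (c / 2)) := by
  have hpow : Tendsto (fun k : ℕ ↦ 2 ^ k) atTop atTop :=
    tendsto_pow_atTop_atTop_of_one_lt one_lt_two
  have hlim := (hP.comp (hpow.comp (tendsto_add_atTop_nat 1))).sub ((hP.comp hpow).div_const 2)
  rw [sub_half] at hlim
  refine hlim.congr fun k ↦ ?_
  simp only [Function.comp_apply, Nat.cast_pow, Nat.cast_ofNat]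
  rw [sub_div, div_div, ← pow_succ]

theorem not_summable_one_div_of_tendsto {P : Set ℕ} {c : ℝ} (hc : 0 < c)
    (hP : Tendsto (fun x : ℕ ↦ chebyshevThetaOn P x / x) atTop (𝓝 c)) :
    ¬ Summable fun q : P ↦ (1 : ℝ) / ((q : ℕ) : ℝ) := by
  intro hsum
  have hblock : Summable fun k : ℕ ↦
      ∑ j ∈ Finset.Ioc (2 ^ k) (2 ^ (k + 1)), P.indicator (fun j ↦ 1 / (j : ℝ)) j :=
    summable_sum_Ioc (summable_subtype_iff_indicator.1 hsum)
      (fun _ ↦ Set.indicator_nonneg (fun _ _ ↦ by positivity) _) (pow_right_mono₀ one_le_two)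
  have : 0 < Real.log 2 := Real.log_pos one_lt_two
  have hharmonic : Summable fun k : ℕ ↦ c / 4 / ((k + 1 : ℕ) * Real.log 2) := by
    refine hblock.of_norm_bounded_eventually_nat ?_
    filter_upwards [(tendsto_chebyshevThetaOn_two_pow_succ_sub_div hP).eventually_const_le
      (show c / 4 < c / 2 by linarith)] with k hk
    rw [Real.norm_of_nonneg (by positivity), div_le_iff₀ (by positivity)]
    refine hk.trans ?_
    rw [div_le_iff₀ (by positivity)]
    refine (chebyshevThetaOn_sub_le P (Nat.pow_le_pow_right two_pos k.le_succ)).trans_eq ?_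
    rw [Nat.cast_pow, Nat.cast_ofNat, Real.log_pow, Nat.succ_eq_add_one]
    ring
  have hone : Summable fun k : ℕ ↦ (1 : ℝ) / ((k + 1 : ℕ) : ℝ) :=
    (hharmonic.mul_left (4 / c * Real.log 2)).congr fun k ↦ by field_simp
  exact Real.not_summable_one_div_natCast
    ((summable_nat_add_iff (f := fun k : ℕ ↦ (1 : ℝ) / k) 1).1 hone)

end Reciprocals

section Density

open Module NumberField Topology

theorem tendsto_chebyshevThetaOn_div_of_eventuallyEq {P : Set ℕ} {w : ℕ → ℝ} {c : ℝ}
    (hw : Tendsto (fun x : ℕ ↦ (∑ k ∈ Finset.Icc 1 x, w k * Real.log k) / x) atTop (𝓝 c))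
    (hP : w =ᶠ[atTop] P.indicator 1) :
    Tendsto (fun x : ℕ ↦ chebyshevThetaOn P x / x) atTop (𝓝 c) := by
  obtain ⟨D, hD⟩ := eventually_atTop.1 hP
  have hlim := hw.add (tendsto_natCast_atTop_atTop.const_div_atTop
    (∑ k ∈ Finset.Icc 1 D, (P.indicator 1 k - w k) * Real.log k))
  rw [add_zero] at hlim
  refine hlim.congr' ?_
  filter_upwards [eventually_ge_atTop D] with x hx
  have hextend : ∑ k ∈ Finset.Icc 1 D, (P.indicator 1 k - w k) * Real.log k =
      ∑ k ∈ Finset.Icc 1 x, (P.indicator 1 k - w k) * Real.log k := by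
    refine Finset.sum_subset (Finset.Icc_subset_Icc_right hx) fun k hkx hkD ↦ ?_
    rw [hD k (by grind), sub_self, zero_mul]
  rw [← add_div, hextend, ← Finset.sum_add_distrib, chebyshevThetaOn_eq_sum_indicator_mul_log]
  simp only [← add_mul, add_sub_cancel]

theorem tendsto_chebyshevThetaOn_div_congr {P Q : Set ℕ} {c : ℝ}
    (hPQ : ∀ᶠ k in atTop, k ∈ P ↔ k ∈ Q)
    (hP : Tendsto (fun x : ℕ ↦ chebyshevThetaOn P x / x) atTop (𝓝 c)) :
    Tendsto (fun x : ℕ ↦ chebyshevThetaOn Q x / x) atTop (𝓝 c) := by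
  simp only [chebyshevThetaOn_eq_sum_indicator_mul_log P] at hP
  refine tendsto_chebyshevThetaOn_div_of_eventuallyEq hP ?_
  filter_upwards [hPQ] with k hk
  simp only [Set.indicator_apply, hk]

theorem tendsto_chebyshevThetaOn_div_of_degreeOneCount_eq (K : Type*) [Field K] [NumberField K]
    {p : ℕ → Prop} [DecidablePred p] {d : ℕ} (hd : d ≠ 0) (hK : ∀ q : ℕ, q.Prime → ¬ q ∣ d →
      (degreeOneCount K q : ℝ) = if p q then (finrank ℚ K : ℝ) else 0) :
    Tendsto (fun x : ℕ ↦ chebyshevThetaOn {q | q.Prime ∧ p q} x / x) atTop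
      (𝓝 (1 / finrank ℚ K)) := by
  have hrank : (finrank ℚ K : ℝ) ≠ 0 := mod_cast finrank_pos.ne'
  have hlim := ((tendsto_sum_degreeOneCount_mul_log_div K).comp
    tendsto_natCast_atTop_atTop).div_const (finrank ℚ K : ℝ)
  refine tendsto_chebyshevThetaOn_div_of_eventuallyEq
    (w := fun k ↦ degreeOneCount K k / (finrank ℚ K : ℝ)) (hlim.congr fun x ↦ ?_) ?_
  · simp only [Function.comp_apply, Nat.floor_natCast, div_mul_eq_mul_div, ← Finset.sum_div]
    rw [div_right_comm]
  · filter_upwards [eventually_gt_atTop d] with k hk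
    by_cases hk_prime : k.Prime
    · rw [hK k hk_prime (Nat.not_dvd_of_pos_of_lt hd.pos hk)]
      by_cases hpk : p k <;> simp [hk_prime, hpk, hrank]
    · simp [degreeOneCount, hk_prime]

theorem tendsto_chebyshevThetaOn_prime_mod_eq_one_div {m : ℕ} (hm : 1 < m) :
    Tendsto (fun x : ℕ ↦ chebyshevThetaOn {q | q.Prime ∧ q % m = 1} x / x) atTop
      (𝓝 (1 / m.totient)) := by
  have : NeZero m := ⟨by lia⟩
  have : IsCyclotomicExtension {m} ℚ (CyclotomicField m ℚ) :=
    CyclotomicField.isCyclotomicExtension m ℚ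
  obtain ⟨d, hd, hcount⟩ := exists_forall_degreeOneCount_cyclotomic_eq
    (K := CyclotomicField m ℚ) hm
  simpa only [IsCyclotomicExtension.Rat.finrank m (CyclotomicField m ℚ)] using
    tendsto_chebyshevThetaOn_div_of_degreeOneCount_eq (CyclotomicField m ℚ) hd hcount

theorem tendsto_chebyshevThetaOn_prime_div :
    Tendsto (fun x : ℕ ↦ chebyshevThetaOn {q | q.Prime} x / x) atTop (𝓝 1) := by
  have hodd := tendsto_chebyshevThetaOn_prime_mod_eq_one_div one_lt_two
  rw [Nat.totient_two, Nat.cast_one, div_one] at hodd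
  refine tendsto_chebyshevThetaOn_div_congr ?_ hodd
  filter_upwards [eventually_gt_atTop 2] with k hk
  rw [and_iff_left_iff_imp]
  exact fun hk_prime ↦ hk_prime.mod_two_eq_one_iff_ne_two.2 hk.ne'

theorem tendsto_chebyshevThetaOn_not_pow_div (L : Type*) [Field L] [NumberField L] {N : ℕ}
    (hN : N ≠ 0) {g : ℤ} (hg : g ≠ 0)
    [((X ^ N - C (g : ℚ)) * (X ^ (2 * N) - 1) : ℚ[X]).IsSplittingField ℚ L] :
    Tendsto (fun x : ℕ ↦ chebyshevThetaOn {q | q.Prime ∧ ¬ (q : ℤ) ∣ 2 * N * g ∧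
        q % (2 * N) = 1 ∧ ¬ ∃ y : ZMod q, y ^ N = g} x / x) atTop
      (𝓝 (1 / (2 * N).totient - 1 / finrank ℚ L)) := by
  obtain ⟨d, hd, hcount⟩ := exists_forall_degreeOneCount_kummer_eq (K := L) hN hg
  have hlim := (tendsto_chebyshevThetaOn_prime_mod_eq_one_div (by lia : 1 < 2 * N)).sub
    (tendsto_chebyshevThetaOn_div_of_degreeOneCount_eq L hd hcount)
  have hsub : {q | q.Prime ∧ q % (2 * N) = 1 ∧ ∃ y : ZMod q, y ^ N = g} ⊆
      {q | q.Prime ∧ q % (2 * N) = 1} := fun q hq ↦ ⟨hq.1, hq.2.1⟩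
  simp only [← sub_div, ← chebyshevThetaOn_diff hsub] at hlim
  refine tendsto_chebyshevThetaOn_div_congr ?_ hlim
  filter_upwards [eventually_gt_atTop (2 * N * g).natAbs] with k hk
  have hkg : ¬ (k : ℤ) ∣ 2 * N * g := fun hdvd ↦ Nat.not_dvd_of_pos_of_lt
    (Int.natAbs_pos.2 (by simp [hN, hg])) hk (Int.natCast_dvd.1 hdvd)
  simp only [Set.mem_sdiff, Set.mem_ofPred_eq]
  tauto

theorem one_div_totient_sub_one_div_finrank_pos (L : Type*) [Field L] [NumberField L] {N : ℕ}
    (hN : N ≠ 0) {a : ℚ} [((X ^ N - C a) * (X ^ (2 * N) - 1) : ℚ[X]).IsSplittingField ℚ L]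
    (ha : ∀ x : CyclotomicField (2 * N) ℚ, x ^ N ≠ a) :
    (0 : ℝ) < 1 / (2 * N).totient - 1 / finrank ℚ L := by
  have : NeZero (2 * N) := ⟨by lia⟩
  have : IsCyclotomicExtension {2 * N} ℚ (CyclotomicField (2 * N) ℚ) :=
    CyclotomicField.isCyclotomicExtension (2 * N) ℚ
  have hlt := finrank_lt_finrank_of_isSplittingField (K := L) hN ha
  rw [IsCyclotomicExtension.Rat.finrank (2 * N) (CyclotomicField (2 * N) ℚ)] at hlt
  have hpos : 0 < (2 * N).totient := Nat.totient_pos.2 (by lia)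
  exact sub_pos.2 (one_div_lt_one_div_of_lt (mod_cast hpos) (mod_cast hlt))

end Density

/-- **Chebotarev–Kummer production of obstructing primes.**  Let `N ≥ 2` and let `g` be a
nonzero integer such that `X^N − g` has no root in `ℚ(ζ_{2N})`.  Let `P_g` be the set of
primes `q` with `q ∤ 2Ng`, `q ≡ 1 (mod 2N)` and `g` not an `N`-th power mod `q`, let `L_g`
be the splitting field of `(X^N − g)(X^{2N} − 1)` over `ℚ`, and set
`δ_g = 1/φ(2N) − 1/[L_g : ℚ]`.  Then `δ_g > 0`, the set `P_g` has natural density `δ_g`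
among the primes, and `∑_{q ∈ P_g} 1/q = ∞`. -/
theorem Pg_positive_density (N : ℕ+) (hN : 2 ≤ (N : ℕ)) (g : ℤ) (hg : g ≠ 0)
    (hroot : ∀ x : CyclotomicField (2 * N) ℚ, x ^ (N : ℕ) ≠ (g : CyclotomicField (2 * N) ℚ))
    (P : Set ℕ)
    (hP : P = {q : ℕ | q.Prime ∧ ¬ ((q : ℤ) ∣ 2 * (N : ℕ) * g) ∧ q % (2 * (N : ℕ)) = 1 ∧
        ¬ ∃ y : ZMod q, y ^ (N : ℕ) = (g : ZMod q)})
    (δ : ℝ)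
    (hδ : δ = 1 / (Nat.totient (2 * (N : ℕ)) : ℝ) -
        1 / (Module.finrank ℚ
          ((((X : ℚ[X]) ^ (N : ℕ) - C (g : ℚ)) *
            ((X : ℚ[X]) ^ (2 * (N : ℕ)) - 1)).SplittingField) : ℝ)) :
    0 < δ ∧
    Tendsto (fun x : ℕ =>
        (((Finset.range (x + 1)).filter (fun q => q ∈ P)).card : ℝ) /
          (((Finset.range (x + 1)).filter Nat.Prime).card : ℝ)) atTop (nhds δ) ∧
    ¬ Summable fun q : P => (1 : ℝ) / ((q : ℕ) : ℝ) := by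
  set f : ℚ[X] := (X ^ (N : ℕ) - C (g : ℚ)) * (X ^ (2 * (N : ℕ)) - 1)
  have : NumberField f.SplittingField := ⟨⟩
  have : f.IsSplittingField ℚ f.SplittingField := IsSplittingField.splittingField f
  have hδ_pos : 0 < δ := hδ ▸
    one_div_totient_sub_one_div_finrank_pos f.SplittingField N.ne_zero (mod_cast hroot)
  have hθ := tendsto_chebyshevThetaOn_not_pow_div f.SplittingField N.ne_zero hg
  rw [← hP, ← hδ] at hθ
  refine ⟨hδ_pos, ?_, not_summable_one_div_of_tendsto hδ_pos hθ⟩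
  convert tendsto_card_div_card hθ tendsto_chebyshevThetaOn_prime_div using 3
  congr 2
  ext
  simp
end
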